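/- Let K be a number field of degree n with r₁ real places (r₁ > 0). Then the 2-rank ρ of the class group of K satisfies ρ ≥ ⌈r₁/2⌉ − sgnrk(E_K), equivalently ρ ≥ dim_{F₂}(E_K⁺/E_K²) − ⌊n/2⌋, where E_K⁺ is the group of totally positive units of K. -/

import Mathlib

open NumberField
open scoped nonZeroDivisors

variable (K : Type*) [Field K] [NumberField K]

/-- The group `E_K⁺` of totally positive units of `K`. -/
def totPosUnits : Subgroup (𝓞 K)ˣ where
  carrier := {ε : (𝓞 K)ˣ | ∀ φ : K →+* ℝ, 0 < φ (algebraMap (𝓞 K) K ε)}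
  one_mem' := fun φ => by simp
  mul_mem' := by
    intro x y hx hy φ
    rw [Units.val_mul, _root_.map_mul, _root_.map_mul]
    exact mul_pos (hx φ) (hy φ)
  inv_mem' := by
    intro x hx φ
    have h : φ (algebraMap (𝓞 K) K ↑x) * φ (algebraMap (𝓞 K) K ↑x⁻¹) = 1 := by
      rw [← _root_.map_mul, ← _root_.map_mul, Units.mul_inv, _root_.map_one, _root_.map_one]
    nlinarith [hx φ]

/-- The archimedean signature of an element of `K`: the vector of the signs of its images
under all real embeddings of `K`, recorded additively in `𝔽₂`. -/
noncomputable def sgnVec (x : K) : (K →+* ℝ) → ZMod 2 :=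
  fun φ => if 0 < φ x then 0 else 1

/-- The unit signature group `sgn_∞(E_K)`: the set of signatures of units of `K`. -/
noncomputable def unitSignatureGroup : Set ((K →+* ℝ) → ZMod 2) :=
  Set.range fun ε : (𝓞 K)ˣ => sgnVec K (algebraMap (𝓞 K) K ε)

namespace CRB
open Filter Topology

theorem rmul_cpow (r : ℝ) (hr : 0 < r) (z : ℂ) (hz : z ≠ 0) (s : ℂ) :
    ((r : ℂ) * z) ^ s = (r : ℂ) ^ s * z ^ s := by
  have hr' : (r : ℂ) ≠ 0 := by exact_mod_cast hr.ne'
  rw [Complex.cpow_def_of_ne_zero (mul_ne_zero hr' hz), Complex.cpow_def_of_ne_zero hr',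
    Complex.cpow_def_of_ne_zero hz, Complex.log_ofReal_mul hr hz, Complex.ofReal_log hr.le,
    ← Complex.exp_add]
  congr 1; ring

theorem theta_split (a : ℕ) (ha : 0 < a) (t : ℝ) (ht : 0 < t) :
    jacobiTheta ((1 / (2 * a) : ℝ) + (t : ℂ) * Complex.I) =
      ∑ r : Fin (2 * a), Complex.exp (Real.pi * Complex.I * (r : ℂ) ^ 2 / (2 * a)) *
        (HurwitzZeta.evenKernel (((r : ℝ) / (2 * a) : ℝ) : UnitAddCircle) (4 * a ^ 2 * t) : ℂ) := by
  have : NeZero (2 * a) := ⟨by omega⟩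
  have ha' : (a : ℂ) ≠ 0 := by exact_mod_cast ha.ne'
  have him : 0 < (((1 / (2 * a) : ℝ) : ℂ) + (t : ℂ) * Complex.I).im := by simp [ht]
  have h1 := hasSum_jacobiTheta₂_term 0 him
  rw [← jacobiTheta_eq_jacobiTheta₂] at h1
  have h2 : HasSum (fun p : ℤ × Fin (2 * a) =>
      Complex.exp (Real.pi * Complex.I * (p.2 : ℂ) ^ 2 / (2 * a)) *
        (Real.exp (-Real.pi * (p.1 + (p.2 : ℝ) / (2 * a)) ^ 2 * (4 * a ^ 2 * t)) : ℂ))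
      (jacobiTheta (((1 / (2 * a) : ℝ) : ℂ) + (t : ℂ) * Complex.I)) := by
    rw [← (Int.divModEquiv (2 * a)).symm.hasSum_iff] at h1
    convert h1 using 1
    ext ⟨q, r⟩
    simp only [Function.comp_apply, Int.divModEquiv_symm_apply, jacobiTheta₂_term]
    push_cast
    rw [← Complex.exp_add, Complex.exp_eq_exp_iff_exists_int]
    refine ⟨-(2 * q * r + 2 * a * q ^ 2 : ℤ) + (q * r + a * q ^ 2), ?_⟩
    push_cast
    field_simp
    ring_nf
    simp only [Complex.I_sq]
    ring
  have h3 : HasSum (fun p : Fin (2 * a) × ℤ => _) _ :=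
    ((Equiv.prodComm (Fin (2 * a)) ℤ).hasSum_iff).mpr h2
  have h4 := h3.prod_fiberwise (g := fun r : Fin (2 * a) => Complex.exp (Real.pi * Complex.I * (r : ℂ) ^ 2 / (2 * a)) *
        (HurwitzZeta.evenKernel (((r : ℝ) / (2 * a) : ℝ) : UnitAddCircle) (4 * a ^ 2 * t) : ℂ)) (by
      intro r
      have := HurwitzZeta.hasSum_int_evenKernel ((r : ℝ) / (2 * a)) (t := 4 * a ^ 2 * t) (by positivity)
      rw [← Complex.hasSum_ofReal] at this
      simpa using this.mul_left (Complex.exp (Real.pi * Complex.I * (r : ℂ) ^ 2 / (2 * a))))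
  exact h4.unique (hasSum_fintype _)

theorem tendsto_evenKernel (a : ℕ) (ha : 0 < a) (z : UnitAddCircle) :
    Tendsto (fun t : ℝ => (Real.sqrt t) * HurwitzZeta.evenKernel z (4 * a ^ 2 * t)) (𝓝[>] 0)
      (𝓝 (1 / (2 * a))) := by
  have h1 : Tendsto (HurwitzZeta.cosKernel z) atTop (𝓝 1) := by
    obtain ⟨p, hp, h⟩ := HurwitzZeta.isBigO_atTop_cosKernel_sub z
    have : Tendsto (fun x : ℝ => Real.exp (-p * x)) atTop (𝓝 0) := by
      apply Real.tendsto_exp_atBot.comp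
      exact tendsto_id.const_mul_atTop_of_neg (by linarith)
    simpa using (h.trans_tendsto this).add_const 1
  have h2 : Tendsto (fun t : ℝ => 1 / (4 * (a:ℝ) ^ 2 * t)) (𝓝[>] 0) atTop := by
    have : Tendsto (fun t : ℝ => (1 / (4 * (a:ℝ) ^ 2)) * t⁻¹) (𝓝[>] 0) atTop :=
      tendsto_inv_nhdsGT_zero.const_mul_atTop (by positivity)
    refine this.congr fun t => ?_
    by_cases h : t = 0
    · simp [h]
    · field_simp
  have h3 := (h1.comp h2).const_mul (1 / (2 * (a : ℝ)))
  rw [mul_one] at h3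
  refine h3.congr' ?_
  filter_upwards [self_mem_nhdsWithin] with t ht
  have ht : 0 < t := ht
  rw [HurwitzZeta.evenKernel_functional_equation, ← Real.sqrt_eq_rpow]
  have : Real.sqrt (4 * a ^ 2 * t) = 2 * a * Real.sqrt t := by
    rw [Real.sqrt_mul (by positivity), show (4 * (a:ℝ) ^ 2) = (2 * a) ^ 2 by ring,
      Real.sqrt_sq (by positivity)]
  rw [this]
  have := Real.sqrt_pos.mpr ht
  simp only [Function.comp]
  field_simp

theorem theta_limit (a : ℕ) (ha : 0 < a) :
    Tendsto (fun t : ℝ => (Real.sqrt t : ℂ) * jacobiTheta ((1 / (2 * a) : ℝ) + (t : ℂ) * Complex.I))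
      (𝓝[>] 0) (𝓝 (1 / (-Complex.I * (1 / (2 * a))) ^ (1 / 2 : ℂ) * (1 / ((2 * a) ^ 2 : ℂ) ^ (1 / 2 : ℂ)))) := by
  have ha' : (a : ℂ) ≠ 0 := by exact_mod_cast ha.ne'
  have har : (0:ℝ) < a := by exact_mod_cast ha
  set τ : ℝ → ℂ := fun t => (1 / (2 * a) : ℝ) + (t : ℂ) * Complex.I with hτ
  have hτim : ∀ t, (τ t).im = t := by intro t; simp [hτ]
  have hτc : Continuous τ := by fun_prop
  have hτ0 : τ 0 = 1 / (2 * a) := by simp [hτ]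
  have hτl : Tendsto τ (𝓝[>] 0) (𝓝 (1 / (2 * a))) := by
    rw [← hτ0]; exact (hτc.tendsto 0).mono_left nhdsWithin_le_nhds
  have key : ∀ t : ℝ, 0 < t → (Real.sqrt t : ℂ) * jacobiTheta (τ t) =
      1 / (-Complex.I * τ t) ^ (1 / 2 : ℂ) * (1 / (2 * a / τ t) ^ (1 / 2 : ℂ)) *
        jacobiTheta (Complex.I / (4 * a ^ 2 * t) - 1 / (2 * a)) := by
    intro t ht
    have htc : (t : ℂ) ≠ 0 := by exact_mod_cast ht.ne'
    have hne : τ t ≠ 0 := by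
      intro h
      have := hτim t
      rw [h] at this; simp at this; linarith
    have e1 := jacobiTheta₂_functional_equation 0 (τ t)
    have e2 : jacobiTheta₂ 0 (-1 / τ t) = jacobiTheta₂ 0 (2 * a * (Complex.I * t) / τ t) := by
      have : ∀ (k : ℕ) (w : ℂ), jacobiTheta₂ 0 (w + 2 * k) = jacobiTheta₂ 0 w := by
        intro k w
        induction k with
        | zero => simp
        | succ k ih =>
          rw [← ih, ← jacobiTheta₂_add_right 0 (w + 2 * k)]; congr 1; push_cast; ring
      rw [← this a]
      congr 1
      field_simp
      simp only [hτ]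
      push_cast
      field_simp
      ring
    have e3 := jacobiTheta₂_functional_equation 0 (2 * a * (Complex.I * t) / τ t)
    have e4 : -1 / (2 * a * (Complex.I * t) / τ t) = Complex.I / (4 * a ^ 2 * t) - 1 / (2 * a) := by
      field_simp
      simp only [hτ]
      push_cast
      field_simp
      ring_nf
      simp only [Complex.I_sq]
      ring
    have e5 : -Complex.I * (2 * a * (Complex.I * t) / τ t) = (t : ℝ) * (2 * a / τ t) := by
      field_simp
      simp [Complex.I_sq]
    rw [e4, e5, rmul_cpow t ht _ (div_ne_zero (by simpa using ha') hne)] at e3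
    · have hs : ((t : ℝ) : ℂ) ^ (1 / 2 : ℂ) = Real.sqrt t := by
        rw [Real.sqrt_eq_rpow, Complex.ofReal_cpow ht.le]; simp
      rw [hs] at e3
      have hs0 : (Real.sqrt t : ℂ) ≠ 0 := by
        exact_mod_cast (Real.sqrt_pos.mpr ht).ne'
      simp only [jacobiTheta_eq_jacobiTheta₂]
      rw [e1]
      simp only [zero_div]
      rw [e2, e3]
      simp
      field_simp
  have hlim2 : Tendsto (fun t : ℝ => jacobiTheta (Complex.I / (4 * a ^ 2 * t) - 1 / (2 * a)))
      (𝓝[>] 0) (𝓝 1) := by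
    have him : Tendsto (fun t : ℝ => (Complex.I / (4 * a ^ 2 * t) - 1 / (2 * a) : ℂ)) (𝓝[>] 0)
        (comap Complex.im atTop) := by
      rw [tendsto_comap_iff]
      have h2 : Tendsto (fun t : ℝ => (1 / (4 * (a:ℝ) ^ 2)) * t⁻¹) (𝓝[>] 0) atTop :=
        tendsto_inv_nhdsGT_zero.const_mul_atTop (by positivity)
      refine h2.congr fun t => ?_
      have e1 : (Complex.I / (4 * a ^ 2 * t) - 1 / (2 * a) : ℂ) =
        ((1 / (4 * (a:ℝ) ^ 2) * t⁻¹ : ℝ) : ℂ) * Complex.I - ((1 / (2 * a) : ℝ) : ℂ) := by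
        push_cast
        by_cases h : t = 0
        · simp [h]
        · have : (t : ℂ) ≠ 0 := by exact_mod_cast h
          field_simp
      simp only [Function.comp]
      rw [e1, Complex.sub_im, Complex.ofReal_im, Complex.im_ofReal_mul, Complex.I_im]
      ring
    have hb := isBigO_at_im_infty_jacobiTheta_sub_one.comp_tendsto him
    have : Tendsto (fun x : ℂ => Real.exp (-Real.pi * x.im)) (comap Complex.im atTop) (𝓝 0) := by
      apply Real.tendsto_exp_atBot.comp
      exact (tendsto_comap).const_mul_atTop_of_neg (by linarith [Real.pi_pos])
    simpa using (hb.trans_tendsto (this.comp him)).add_const 1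
  have hsl1 : -Complex.I * (1 / (2 * a)) ∈ Complex.slitPlane := by
    right
    rw [show -Complex.I * (1 / (2 * a)) = ((-(1 / (2 * a)) : ℝ) : ℂ) * Complex.I by push_cast; ring]
    rw [Complex.im_ofReal_mul, Complex.I_im]
    simp; omega
  have hsl2 : (2 * a / (1 / (2 * a)) : ℂ) ∈ Complex.slitPlane := by
    left
    rw [show (2 * a / (1 / (2 * a)) : ℂ) = ((4 * a ^ 2 : ℝ) : ℂ) by push_cast; field_simp; norm_num]
    rw [Complex.ofReal_re]; positivity
  have hcp : ∀ z : ℂ, z ∈ Complex.slitPlane → z ^ (1 / 2 : ℂ) ≠ 0 := by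
    intro z hz h
    rw [Complex.cpow_eq_zero_iff] at h
    exact Complex.slitPlane_ne_zero hz h.1
  have l1 : Tendsto (fun t => 1 / (-Complex.I * τ t) ^ (1 / 2 : ℂ)) (𝓝[>] 0)
      (𝓝 (1 / (-Complex.I * (1 / (2 * a))) ^ (1 / 2 : ℂ))) := by
    apply Tendsto.div tendsto_const_nhds _ (hcp _ hsl1)
    exact (hτl.const_mul _).cpow tendsto_const_nhds hsl1
  have l2 : Tendsto (fun t => 1 / (2 * a / τ t) ^ (1 / 2 : ℂ)) (𝓝[>] 0)
      (𝓝 (1 / (2 * a / (1 / (2 * a)) : ℂ) ^ (1 / 2 : ℂ))) := by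
    apply Tendsto.div tendsto_const_nhds _ (hcp _ hsl2)
    exact (Tendsto.div tendsto_const_nhds hτl (by simpa using ha')).cpow tendsto_const_nhds hsl2
  have l3 := (l1.mul l2).mul hlim2
  rw [mul_one, show (2 * a / (1 / (2 * a)) : ℂ) = (2 * a) ^ 2 by field_simp] at l3
  refine l3.congr' ?_
  filter_upwards [self_mem_nhdsWithin] with t ht
  exact (key t ht).symm

/-- Quadratic Gauss sums over `ℤ/2a`: the argument does not depend on `a > 0`. -/
theorem gauss_pos (a : ℕ) (ha : 0 < a) : ∃ r : ℝ, 0 < r ∧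
    ∑ k : Fin (2 * a), Complex.exp (2 * Real.pi * Complex.I * ((k : ℂ) ^ 2 / (4 * a))) =
      r * (1 / (-Complex.I) ^ (1 / 2 : ℂ)) := by
  have hA := theta_limit a ha
  have har : (0:ℝ) < a := by exact_mod_cast ha
  have hB : Tendsto (fun t : ℝ => (Real.sqrt t : ℂ) * jacobiTheta ((1 / (2 * a) : ℝ) + (t : ℂ) * Complex.I))
      (𝓝[>] 0) (𝓝 (∑ k : Fin (2 * a), Complex.exp (Real.pi * Complex.I * (k : ℂ) ^ 2 / (2 * a)) *
        ((1 / (2 * a) : ℝ) : ℂ))) := by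
    have : Tendsto (fun t : ℝ => ∑ k : Fin (2 * a), Complex.exp (Real.pi * Complex.I * (k : ℂ) ^ 2 / (2 * a)) *
        (((Real.sqrt t) * HurwitzZeta.evenKernel (((k : ℝ) / (2 * a) : ℝ) : UnitAddCircle) (4 * a ^ 2 * t) : ℝ) : ℂ))
        (𝓝[>] 0) (𝓝 (∑ k : Fin (2 * a), Complex.exp (Real.pi * Complex.I * (k : ℂ) ^ 2 / (2 * a)) *
        ((1 / (2 * a) : ℝ) : ℂ))) := by
      apply tendsto_finsetSum
      intro k _
      apply Tendsto.const_mul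
      exact (Complex.continuous_ofReal.tendsto _).comp (tendsto_evenKernel a ha _)
    refine this.congr' ?_
    filter_upwards [self_mem_nhdsWithin] with t ht
    rw [theta_split a ha t ht, Finset.mul_sum]
    refine Finset.sum_congr rfl fun k _ => ?_
    push_cast; ring
  have h := tendsto_nhds_unique hA hB
  rw [← Finset.sum_mul] at h
  have e : ∀ k : Fin (2 * a), Complex.exp (2 * Real.pi * Complex.I * ((k : ℂ) ^ 2 / (4 * a))) =
      Complex.exp (Real.pi * Complex.I * (k : ℂ) ^ 2 / (2 * a)) := by
    intro k; congr 1; have : (a : ℂ) ≠ 0 := by exact_mod_cast ha.ne'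
    field_simp; ring
  simp only [e]
  have h1 : (-Complex.I * (1 / (2 * a))) ^ (1 / 2 : ℂ) =
      (((1 / (2 * a) : ℝ) ^ (1 / 2 : ℝ) : ℝ) : ℂ) * (-Complex.I) ^ (1 / 2 : ℂ) := by
    rw [Complex.ofReal_cpow (by positivity), show -Complex.I * (1 / (2 * a)) = ((1 / (2 * a) : ℝ) : ℂ) * (-Complex.I) by push_cast; ring,
      rmul_cpow _ (by positivity) _ (by simp)]
    simp
  have h2 : ((2 * a) ^ 2 : ℂ) ^ (1 / 2 : ℂ) = ((((2 * a) ^ 2 : ℝ) ^ (1 / 2 : ℝ) : ℝ) : ℂ) := by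
    rw [Complex.ofReal_cpow (by positivity)]; simp
  rw [h1, h2] at h
  refine ⟨2 * a * (1 / (1 / (2 * a) : ℝ) ^ (1 / 2 : ℝ)) * (1 / ((2 * a) ^ 2 : ℝ) ^ (1 / 2 : ℝ)), by positivity, ?_⟩
  have h3 : ((1 / (2 * a) : ℝ) : ℂ) ≠ 0 := by
    exact_mod_cast (by positivity : (1 / (2 * a) : ℝ) ≠ 0)
  rw [← mul_left_inj' h3, ← h]
  generalize ((-Complex.I) ^ (1 / 2 : ℂ)) = z
  generalize hx : ((1 / (2 * a) : ℝ) ^ (1 / 2 : ℝ) : ℝ) = x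
  generalize hy : (((2 * a) ^ 2 : ℝ) ^ (1 / 2 : ℝ) : ℝ) = y
  push_cast
  have : (a : ℂ) ≠ 0 := by exact_mod_cast ha.ne'
  field_simp

end CRB

namespace CRB

/-- `exp (2 π i x)` for rational `x`. -/
noncomputable def ee (x : ℚ) : ℂ := Complex.exp (2 * Real.pi * Complex.I * (x : ℂ))

theorem ee_add (x y : ℚ) : ee (x + y) = ee x * ee y := by
  unfold ee; rw [← Complex.exp_add]; congr 1; push_cast; ring

theorem ee_ne (x : ℚ) : ee x ≠ 0 := Complex.exp_ne_zero _

theorem ee_eq_one_iff (x : ℚ) : ee x = 1 ↔ ∃ z : ℤ, x = z := by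
  unfold ee
  rw [Complex.exp_eq_one_iff]
  constructor
  · rintro ⟨n, hn⟩
    refine ⟨n, ?_⟩
    have h : (x : ℂ) = n := by
      have : (2 * Real.pi * Complex.I : ℂ) ≠ 0 := Complex.two_pi_I_ne_zero
      apply mul_left_cancel₀ this
      rw [hn]; ring
    exact_mod_cast h
  · rintro ⟨z, rfl⟩
    exact ⟨z, by push_cast; ring⟩

theorem ee_int (z : ℤ) : ee z = 1 := (ee_eq_one_iff _).2 ⟨z, rfl⟩

theorem ee_zero : ee 0 = 1 := by simpa using ee_int 0

theorem ee_neg (x : ℚ) : ee (-x) = (starRingEnd ℂ) (ee x) := by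
  unfold ee
  rw [← Complex.exp_conj]
  congr 1
  simp only [map_mul, Complex.conj_I, Complex.conj_ofReal, map_ratCast, map_ofNat]
  push_cast; ring

theorem ee_sum {ι : Type*} (s : Finset ι) (f : ι → ℚ) : ee (∑ i ∈ s, f i) = ∏ i ∈ s, ee (f i) := by
  classical
  induction s using Finset.induction_on with
  | empty => simp [ee_zero]
  | insert a s ha ih => rw [Finset.sum_insert ha, Finset.prod_insert ha, ee_add, ih]

/-- The argument of a one-dimensional Gauss sum. -/
noncomputable def kap (w : ℚ) : ℂ :=
  if 0 < w then 1 / (-Complex.I) ^ (1 / 2 : ℂ) else (starRingEnd ℂ) (1 / (-Complex.I) ^ (1 / 2 : ℂ))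

theorem kap_ne (w : ℚ) : kap w ≠ 0 := by
  have : (1 / (-Complex.I) ^ (1 / 2 : ℂ)) ≠ 0 := by
    apply one_div_ne_zero
    intro h
    rw [Complex.cpow_eq_zero_iff] at h
    simp at h
  unfold kap
  split_ifs
  · exact this
  · exact (map_ne_zero _).2 this

theorem gauss_int (w : ℤ) (hw : w ≠ 0) : ∃ r : ℝ, 0 < r ∧
    ∑ k : Fin (2 * w.natAbs), ee (((k : ℕ) : ℚ) ^ 2 / (4 * w)) = r * kap w := by
  obtain ⟨r, hr, h⟩ := gauss_pos w.natAbs (by omega)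
  refine ⟨r, hr, ?_⟩
  rcases lt_or_gt_of_ne hw with hw | hw
  · have e1 : ((w : ℤ) : ℚ) = - (w.natAbs : ℚ) := by
      rw [← Int.cast_natCast (R := ℚ) w.natAbs, Int.ofNat_natAbs_of_nonpos hw.le]
      push_cast; ring
    have : ∀ k : Fin (2 * w.natAbs), ee (((k : ℕ) : ℚ) ^ 2 / (4 * w)) =
        (starRingEnd ℂ) (Complex.exp (2 * Real.pi * Complex.I * ((k : ℂ) ^ 2 / (4 * (w.natAbs : ℕ))))) := by
      intro k
      rw [e1, mul_neg, div_neg, ee_neg, ee]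
      push_cast
      rfl
    simp only [this]
    rw [← map_sum, h, map_mul, Complex.conj_ofReal, kap, if_neg]
    rw [e1]; simp
  · have e1 : ((w : ℤ) : ℚ) = (w.natAbs : ℚ) := by
      rw [← Int.cast_natCast (R := ℚ) w.natAbs, Int.natAbs_of_nonneg hw.le]
    rw [kap, if_pos (by exact_mod_cast hw), ← h]
    refine Finset.sum_congr rfl fun k _ => ?_
    rw [e1, ee]; push_cast; rfl

section trans
variable {V : Type*} [AddCommGroup V]

/-- `f` lists representatives of `M/L`. -/
structure Trans {ι : Type*} (f : ι → V) (M L : AddSubgroup V) : Prop where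
  mem : ∀ i, f i ∈ M
  surj : ∀ u ∈ M, ∃ i, u - f i ∈ L
  inj : ∀ i j, f i - f j ∈ L → i = j

theorem Trans.sum_eq {ι κ : Type*} [Fintype ι] [Fintype κ] {f : ι → V} {g : κ → V}
    {M L : AddSubgroup V} (hf : Trans f M L) (hg : Trans g M L) (ψ : V → ℂ)
    (hψ : ∀ u ∈ M, ∀ v ∈ L, ψ (u + v) = ψ u) : ∑ i, ψ (f i) = ∑ j, ψ (g j) := by
  choose φ hφ using fun i => hg.surj (f i) (hf.mem i)
  have hb : Function.Bijective φ := by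
    constructor
    · intro i j hij
      apply hf.inj
      have h1 := hφ i
      have h2 := hφ j
      rw [hij] at h1
      have := L.sub_mem h1 h2
      simpa using this
    · intro j
      obtain ⟨i, hi⟩ := hf.surj (g j) (hg.mem j)
      refine ⟨i, hg.inj _ _ ?_⟩
      have := L.add_mem (hφ i) hi
      have := L.neg_mem this
      simpa using this
  refine Fintype.sum_bijective φ hb _ _ fun i => ?_
  have := hψ (g (φ i)) (hg.mem _) _ (hφ i)
  rw [← this]; congr 1; abel

theorem Trans.tower {ι κ : Type*} {f : ι → V} {g : κ → V} {M L N : AddSubgroup V}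
    (hf : Trans f M L) (hg : Trans g L N) (hLM : L ≤ M) (hNL : N ≤ L) :
    Trans (fun p : ι × κ => f p.1 + g p.2) M N where
  mem p := M.add_mem (hf.mem _) (hLM (hg.mem _))
  surj u hu := by
    obtain ⟨i, hi⟩ := hf.surj u hu
    obtain ⟨j, hj⟩ := hg.surj _ hi
    exact ⟨(i, j), by simpa [sub_sub] using hj⟩
  inj := by
    rintro ⟨i, j⟩ ⟨i', j'⟩ h
    simp only at h
    have hi : i = i' := by
      apply hf.inj
      have h1 := hNL h
      have h2 := L.sub_mem h1 (L.sub_mem (hg.mem j) (hg.mem j'))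
      convert h2 using 1; abel
    subst hi
    have : j = j' := by
      apply hg.inj
      simpa using h
    rw [this]

theorem Trans.orth {ι κ : Type*} {f : ι → V} {g : κ → V} {M1 M2 L : AddSubgroup V}
    (hf : Trans f M1 L) (hg : Trans g M2 L) (hL : M1 ⊓ M2 = L) :
    Trans (fun p : ι × κ => f p.1 + g p.2) (M1 ⊔ M2) L where
  mem p := AddSubgroup.add_mem_sup (hf.mem _) (hg.mem _)
  surj u hu := by
    obtain ⟨a, ha, b, hb, rfl⟩ := AddSubgroup.mem_sup.1 hu
    obtain ⟨i, hi⟩ := hf.surj a ha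
    obtain ⟨j, hj⟩ := hg.surj b hb
    refine ⟨(i, j), ?_⟩
    convert L.add_mem hi hj using 1
    simp only; abel
  inj := by
    rintro ⟨i, j⟩ ⟨i', j'⟩ h
    simp only at h
    have hL1 : L ≤ M1 := hL ▸ inf_le_left
    have hL2 : L ≤ M2 := hL ▸ inf_le_right
    have e1 : f i - f i' ∈ L := by
      rw [← hL]
      refine ⟨M1.sub_mem (hf.mem _) (hf.mem _), ?_⟩
      have := M2.sub_mem (hL2 h) (M2.sub_mem (hg.mem j) (hg.mem j'))
      have e : f i + g j - (f i' + g j') - (g j - g j') = f i - f i' := by abel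
      rw [e] at this
      exact this
    have e2 : g j - g j' ∈ L := by
      have := L.sub_mem h e1
      convert this using 1; abel
    rw [hf.inj _ _ e1, hg.inj _ _ e2]

theorem Trans.shift {ι : Type*} {f : ι → V} {M L : AddSubgroup V}
    (hf : Trans f M L) (a : V) (ha : a ∈ M) : Trans (fun i => a + f i) M L where
  mem i := M.add_mem ha (hf.mem i)
  surj u hu := by
    obtain ⟨i, hi⟩ := hf.surj (u - a) (M.sub_mem hu ha)
    exact ⟨i, by simpa [sub_sub] using hi⟩
  inj i j h := hf.inj _ _ (by simpa using h)

theorem Trans.of_finite (M L : AddSubgroup V) [Finite (M ⧸ L.addSubgroupOf M)] :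
    ∃ (n : ℕ) (f : Fin n → V), Trans f M L := by
  obtain ⟨n, ⟨e⟩⟩ := Finite.exists_equiv_fin (M ⧸ L.addSubgroupOf M)
  refine ⟨n, fun i => ((e.symm i).out : M), fun i => SetLike.coe_mem _, ?_, ?_⟩
  · intro u hu
    refine ⟨e (QuotientAddGroup.mk ⟨u, hu⟩), ?_⟩
    have := QuotientAddGroup.mk_out_eq_add (L.addSubgroupOf M) ⟨u, hu⟩
    obtain ⟨h, hh⟩ := this
    simp only [Equiv.symm_apply_apply]
    rw [hh]
    have := h.2
    rw [AddSubgroup.mem_addSubgroupOf] at this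
    simpa using this
  · intro i j h
    have : (QuotientAddGroup.mk (e.symm i).out : M ⧸ L.addSubgroupOf M) = QuotientAddGroup.mk (e.symm j).out := by
      rw [eq_comm, QuotientAddGroup.eq, AddSubgroup.mem_addSubgroupOf]
      simpa [add_comm, sub_eq_add_neg] using h
    simpa using this

theorem Trans.finite {ι : Type*} [Finite ι] {f : ι → V} {M L : AddSubgroup V}
    (hf : Trans f M L) : Finite (M ⧸ L.addSubgroupOf M) := by
  apply Finite.of_surjective (fun i => (QuotientAddGroup.mk ⟨f i, hf.mem i⟩ : M ⧸ L.addSubgroupOf M))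
  intro x
  obtain ⟨u, rfl⟩ := QuotientAddGroup.mk_surjective x
  obtain ⟨i, hi⟩ := hf.surj u u.2
  refine ⟨i, ?_⟩
  simp only
  rw [QuotientAddGroup.eq, AddSubgroup.mem_addSubgroupOf]
  simpa [add_comm, sub_eq_add_neg] using hi

theorem Trans.finite_left {ι : Type*} [Finite ι] {f : ι → V} {M M' L : AddSubgroup V}
    (hf : Trans f M L) (h : M' ≤ M) : Finite (M' ⧸ L.addSubgroupOf M') := by
  have := hf.finite
  let φ : M' →+ M ⧸ L.addSubgroupOf M :=
    (QuotientAddGroup.mk' (L.addSubgroupOf M)).comp (AddSubgroup.inclusion h)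
  have hk : φ.ker = L.addSubgroupOf M' := by
    ext x
    rw [AddMonoidHom.mem_ker]
    change (QuotientAddGroup.mk (AddSubgroup.inclusion h x) : M ⧸ L.addSubgroupOf M) = 0 ↔ _
    rw [QuotientAddGroup.eq_zero_iff]
    rfl
  rw [← hk]
  exact Finite.of_injective _ (QuotientAddGroup.kerLift_injective φ)

theorem Trans.finite_right {ι : Type*} [Finite ι] {f : ι → V} {M L L' : AddSubgroup V}
    (hf : Trans f M L) (h : L ≤ L') : Finite (M ⧸ L'.addSubgroupOf M) := by
  have := hf.finite
  apply Finite.of_surjective (fun x : M ⧸ L.addSubgroupOf M =>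
    QuotientAddGroup.map (L.addSubgroupOf M) (L'.addSubgroupOf M) (AddMonoidHom.id _)
      (by intro x hx; exact h hx) x)
  intro x
  obtain ⟨u, rfl⟩ := QuotientAddGroup.mk_surjective x
  exact ⟨QuotientAddGroup.mk u, rfl⟩

/-- Character sums over representatives. -/
theorem Trans.char_sum {ι : Type*} [Fintype ι] {f : ι → V} {M L : AddSubgroup V}
    (hf : Trans f M L) (χ : V → ℂ) (hadd : ∀ u ∈ M, ∀ v ∈ M, χ (u + v) = χ u * χ v)
    (hL : ∀ v ∈ L, χ v = 1) (hLM : L ≤ M) (u₀ : V) (hu₀ : u₀ ∈ M) (h0 : χ u₀ ≠ 1) :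
    ∑ i, χ (f i) = 0 := by
  have h1 := (hf.shift u₀ hu₀).sum_eq hf χ (fun u hu v hv => by
    rw [hadd u hu v (hLM hv), hL v hv, mul_one])
  have h2 : ∀ i, χ (u₀ + f i) = χ u₀ * χ (f i) := fun i => hadd _ hu₀ _ (hf.mem i)
  simp only [h2, ← Finset.mul_sum] at h1
  have h3 : (χ u₀ - 1) * ∑ i, χ (f i) = 0 := by rw [sub_mul, h1]; ring
  rcases mul_eq_zero.1 h3 with h | h
  · exact absurd (sub_eq_zero.1 h) h0
  · exact h

end trans

section weil
variable {V : Type*} [AddCommGroup V] [Module ℚ V]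

/-- Vectors whose scaled coordinates are integers. -/
def latt {ι : Type*} (e : Module.Basis ι ℚ V) (d : ι → ℚ) : AddSubgroup V where
  carrier := {v | ∀ i, ∃ z : ℤ, d i * e.repr v i = z}
  zero_mem' i := ⟨0, by simp⟩
  add_mem' := by
    intro a b ha hb i
    obtain ⟨x, hx⟩ := ha i
    obtain ⟨y, hy⟩ := hb i
    exact ⟨x + y, by push_cast; rw [← hx, ← hy]; simp [mul_add]⟩
  neg_mem' := by
    intro a ha i
    obtain ⟨x, hx⟩ := ha i
    exact ⟨-x, by push_cast; rw [← hx]; simp⟩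

theorem latt_trans {n : ℕ} (e : Module.Basis (Fin n) ℚ V) (w : Fin n → ℤ) (hw : ∀ i, w i ≠ 0) :
    Trans (fun k : (∀ i : Fin n, Fin (2 * (w i).natAbs)) => ∑ i, (((k i : ℕ) : ℚ) / (2 * w i)) • e i)
      (latt e (fun i => 2 * w i)) (latt e (fun _ => 1)) := by
  have hrep : ∀ (k : (∀ i : Fin n, Fin (2 * (w i).natAbs))) (j : Fin n),
      e.repr (∑ i, (((k i : ℕ) : ℚ) / (2 * w i)) • e i) j = ((k j : ℕ) : ℚ) / (2 * w j) := by
    intro k j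
    rw [Module.Basis.repr_sum_self]
  have hw' : ∀ i, (w i : ℚ) ≠ 0 := fun i => by exact_mod_cast hw i
  refine ⟨?_, ?_, ?_⟩
  · intro k i
    refine ⟨(k i : ℕ), ?_⟩
    rw [hrep]
    have := hw' i
    push_cast
    field_simp
  · intro u hu
    choose z hz using hu
    have hpos : ∀ i, 0 < (2 * (w i).natAbs : ℕ) := fun i => by have := hw i; omega
    have hlt : ∀ i, ((z i) % (2 * (w i).natAbs : ℕ)).toNat < 2 * (w i).natAbs := by
      intro i
      have h1 := Int.emod_lt_of_pos (z i) (b := ((2 * (w i).natAbs : ℕ) : ℤ)) (by exact_mod_cast hpos i)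
      have h2 := Int.emod_nonneg (z i) (b := ((2 * (w i).natAbs : ℕ) : ℤ)) (by have := hpos i; omega)
      omega
    refine ⟨fun i => ⟨((z i) % (2 * (w i).natAbs : ℕ)).toNat, hlt i⟩, fun i => ?_⟩
    rw [map_sub, Finsupp.sub_apply, hrep]
    have h2 := Int.emod_nonneg (z i) (b := ((2 * (w i).natAbs : ℕ) : ℤ)) (by have := hpos i; omega)
    have h3 : ((((z i) % (2 * (w i).natAbs : ℕ)).toNat : ℕ) : ℤ) = (z i) % (2 * (w i).natAbs : ℕ) :=
      Int.toNat_of_nonneg h2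
    have h4 : (2 * w i) ∣ z i - (z i) % (2 * (w i).natAbs : ℕ) := by
      have h5 : ((2 * (w i).natAbs : ℕ) : ℤ) ∣ z i - (z i) % (2 * (w i).natAbs : ℕ) :=
        Int.dvd_self_sub_emod
      refine dvd_trans ?_ h5
      push_cast
      exact mul_dvd_mul_left 2 ((dvd_abs _ _).2 dvd_rfl)
    obtain ⟨y, hy⟩ := h4
    refine ⟨y, ?_⟩
    have h6 : ((((z i) % (2 * (w i).natAbs : ℕ)).toNat : ℕ) : ℚ) = z i - 2 * w i * y := by
      have : ((((z i) % (2 * (w i).natAbs : ℕ)).toNat : ℕ) : ℤ) = z i - 2 * w i * y := by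
        rw [h3, ← hy]; ring
      exact_mod_cast this
    simp only
    rw [h6, ← hz i]
    have := hw' i
    field_simp
    ring
  · intro k k' h
    funext i
    obtain ⟨y, hy⟩ := h i
    rw [map_sub, Finsupp.sub_apply, hrep, hrep] at hy
    have := hw' i
    have h1 : (((k i : ℕ) : ℤ) - ((k' i : ℕ) : ℤ)) = 2 * w i * y := by
      field_simp at hy
      have h2 : (((k i : ℕ) : ℚ) - ((k' i : ℕ) : ℚ)) = 2 * w i * y := by linarith
      exact_mod_cast h2
    have h3 : ((2 * (w i).natAbs : ℕ) : ℤ) ∣ (((k i : ℕ) : ℤ) - ((k' i : ℕ) : ℤ)) := by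
      rw [h1]
      push_cast
      refine dvd_trans (mul_dvd_mul_left 2 ((abs_dvd _ _).2 dvd_rfl)) ⟨y, rfl⟩
    have h4 := (k i).2
    have h5 := (k' i).2
    apply Fin.ext
    have h6 : (((k i : ℕ) : ℤ) - ((k' i : ℕ) : ℤ)) = 0 := by
      apply Int.eq_zero_of_abs_lt_dvd h3
      rw [abs_lt]; constructor <;> omega
    omega

theorem latt_sum (b : LinearMap.BilinForm ℚ V) {n : ℕ} (e : Module.Basis (Fin n) ℚ V)
    (ho : ∀ i j, i ≠ j → b (e i) (e j) = 0) (w : Fin n → ℤ) (hw : ∀ i, w i ≠ 0)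
    (hbw : ∀ i, b (e i) (e i) = w i) : ∃ r : ℝ, 0 < r ∧
    ∑ k : (∀ i : Fin n, Fin (2 * (w i).natAbs)),
      ee (b (∑ i, (((k i : ℕ) : ℚ) / (2 * w i)) • e i) (∑ i, (((k i : ℕ) : ℚ) / (2 * w i)) • e i)) =
      r * ∏ i, kap (w i) := by
  choose r hr h using fun i => gauss_int (w i) (hw i)
  refine ⟨∏ i, r i, Finset.prod_pos fun i _ => hr i, ?_⟩
  have h1 : ∀ k : (∀ i : Fin n, Fin (2 * (w i).natAbs)),
      ee (b (∑ i, (((k i : ℕ) : ℚ) / (2 * w i)) • e i) (∑ i, (((k i : ℕ) : ℚ) / (2 * w i)) • e i)) =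
      ∏ i, ee (((k i : ℕ) : ℚ) ^ 2 / (4 * w i)) := by
    intro k
    rw [← ee_sum]
    congr 1
    rw [LinearMap.BilinForm.sum_left]
    refine Finset.sum_congr rfl fun i _ => ?_
    rw [LinearMap.BilinForm.sum_right, Finset.sum_eq_single i]
    · rw [LinearMap.BilinForm.smul_left, LinearMap.BilinForm.smul_right, hbw]
      have : (w i : ℚ) ≠ 0 := by exact_mod_cast hw i
      field_simp
      ring
    · intro j _ hj
      rw [LinearMap.BilinForm.smul_left, LinearMap.BilinForm.smul_right, ho i j hj.symm]
      simp
    · simp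
  simp only [h1]
  rw [Complex.ofReal_prod, ← Finset.prod_mul_distrib]
  simp only [← h]
  rw [Finset.prod_univ_sum, Fintype.piFinset_univ]

theorem kap_pos_mul (a w : ℚ) (ha : 0 < a) : kap (a * w) = kap w := by
  unfold kap
  simp only [mul_pos_iff_of_pos_left ha]

/-- The argument of the Gauss sum of a lattice. -/
theorem weil_phase (b : LinearMap.BilinForm ℚ V) (hsymm : ∀ x y, b x y = b y x) {n : ℕ}
    (e : Module.Basis (Fin n) ℚ V) (ho : ∀ i j, i ≠ j → b (e i) (e j) = 0)
    (hne : ∀ i, b (e i) (e i) ≠ 0) (M L : AddSubgroup V) (hLM : L ≤ M)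
    (hdual : ∀ u, u ∈ M ↔ ∀ v ∈ L, ∃ z : ℤ, 2 * b u v = z)
    (heven : ∀ v ∈ L, ∃ z : ℤ, b v v = z)
    (hfull : ∀ v : V, ∃ N : ℕ, 0 < N ∧ N • v ∈ L)
    {ι : Type*} [Fintype ι] (f : ι → V) (hf : Trans f M L) :
    ∃ r : ℝ, 0 < r ∧ ∑ i, ee (b (f i) (f i)) = r * ∏ i, kap (b (e i) (e i)) := by
  classical
  choose N hN hNL using fun i => hfull (e i)
  have hN' : ∀ i, (N i : ℚ) ≠ 0 := fun i => by exact_mod_cast (hN i).ne'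
  let e' : Module.Basis (Fin n) ℚ V := e.unitsSMul (fun i => Units.mk0 (N i : ℚ) (hN' i))
  have he' : ∀ i, e' i = N i • e i := by
    intro i
    simp only [e', Module.Basis.unitsSMul_apply, Units.smul_def, Units.val_mk0]
    exact Nat.cast_smul_eq_nsmul ℚ _ _
  have heL : ∀ i, e' i ∈ L := fun i => he' i ▸ hNL i
  choose w hw using fun i => heven _ (heL i)
  have hw2 : ∀ i, b (e' i) (e' i) = (N i : ℚ) ^ 2 * b (e i) (e i) := by
    intro i
    rw [he', ← Nat.cast_smul_eq_nsmul ℚ, LinearMap.BilinForm.smul_left, LinearMap.BilinForm.smul_right]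
    ring
  have hw0 : ∀ i, w i ≠ 0 := by
    intro i h
    have h1 := hw i
    rw [h, hw2] at h1
    have := mul_ne_zero (pow_ne_zero 2 (hN' i)) (hne i)
    exact this (by simpa using h1)
  have ho' : ∀ i j, i ≠ j → b (e' i) (e' j) = 0 := by
    intro i j hij
    rw [he', he', ← Nat.cast_smul_eq_nsmul ℚ, ← Nat.cast_smul_eq_nsmul ℚ,
      LinearMap.BilinForm.smul_left, LinearMap.BilinForm.smul_right, ho i j hij]
    simp
  have hk : ∏ i, kap (w i) = ∏ i, kap (b (e i) (e i)) := by
    refine Finset.prod_congr rfl fun i _ => ?_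
    rw [← hw, hw2, kap_pos_mul _ _ (by have := hN' i; positivity)]
  rw [← hk]
  obtain ⟨r, hr, hsum⟩ := latt_sum b e' ho' w hw0 hw
  set L0 := latt e' (fun _ => 1)
  set M0 := latt e' (fun i => 2 * (w i : ℚ))
  have hT := latt_trans e' w hw0
  have hL0L : L0 ≤ L := by
    intro v hv
    choose z hz using hv
    rw [← e'.sum_repr v]
    refine L.sum_mem fun i _ => ?_
    have : e'.repr v i = z i := by simpa using hz i
    rw [this, Int.cast_smul_eq_zsmul]
    exact L.zsmul_mem (heL i) _
  have hbe : ∀ u i, b u (e' i) = w i * e'.repr u i := by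
    intro u i
    conv_lhs => rw [← e'.sum_repr u]
    rw [LinearMap.BilinForm.sum_left, Finset.sum_eq_single i]
    · rw [LinearMap.BilinForm.smul_left, hw]; ring
    · intro j _ hj
      rw [LinearMap.BilinForm.smul_left, ho' j i hj]; simp
    · simp
  have hMM0 : M ≤ M0 := by
    intro u hu i
    obtain ⟨z, hz⟩ := (hdual u).1 hu _ (heL i)
    refine ⟨z, ?_⟩
    rw [← hz, hbe]; ring
  have hM0 : ∀ u ∈ M0, ∀ v ∈ L0, ∃ z : ℤ, 2 * b u v = z := by
    intro u hu v hv
    choose y hy using hu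
    choose z hz using hv
    refine ⟨∑ i, z i * y i, ?_⟩
    conv_lhs => rw [← e'.sum_repr v]
    rw [LinearMap.BilinForm.sum_right, Finset.mul_sum]
    push_cast
    refine Finset.sum_congr rfl fun i _ => ?_
    rw [LinearMap.BilinForm.smul_right, hbe, ← hy, ← hz]
    ring
  have f1 := hT.finite_left (hLM.trans hMM0)
  have f2 := hT.finite_right (hL0L.trans hLM)
  obtain ⟨m1, g, hg⟩ := Trans.of_finite L L0
  obtain ⟨m2, h, hh⟩ := Trans.of_finite M0 M
  have hT2 := (hh.tower hf hMM0 hLM).tower hg (hLM.trans hMM0) hL0L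
  have hbadd : ∀ u v, ee (b (u + v) (u + v)) = ee (b u u) * ee (2 * b u v) * ee (b v v) := by
    intro u v
    rw [← ee_add, ← ee_add]; congr 1
    simp only [map_add, LinearMap.add_apply]
    rw [hsymm v u]; ring
  have hE := hT.sum_eq hT2 (fun u => ee (b u u)) (by
    intro u hu v hv
    rw [hbadd]
    obtain ⟨z, hz⟩ := hM0 u hu v hv
    obtain ⟨y, hy⟩ := heven v (hL0L hv)
    rw [hz, hy, ee_int, ee_int]; ring)
  rw [hsum] at hE
  obtain ⟨k0, hk0⟩ := hh.surj 0 M0.zero_mem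
  have hk0M : h k0 ∈ M := by simpa using M.neg_mem hk0
  have hL1 : ∀ v ∈ L, ee (b v v) = 1 := by
    intro v hv
    obtain ⟨y, hy⟩ := heven v hv
    rw [hy, ee_int]
  have hinner : ∀ x : V, x ∈ M0 → ∑ j, ee (b (x + g j) (x + g j)) =
      if x ∈ M then m1 * ee (b x x) else 0 := by
    intro x hx
    have e1 : ∀ j, ee (b (x + g j) (x + g j)) = ee (b x x) * ee (2 * b x (g j)) := by
      intro j
      rw [hbadd, hL1 _ (hg.mem j), mul_one]
    simp only [e1, ← Finset.mul_sum]
    split_ifs with hxM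
    · have : ∀ j, ee (2 * b x (g j)) = 1 := by
        intro j
        obtain ⟨z, hz⟩ := (hdual x).1 hxM _ (hg.mem j)
        rw [hz, ee_int]
      simp only [this]
      simp; ring
    · rw [hdual] at hxM
      push Not at hxM
      obtain ⟨v, hv, hv2⟩ := hxM
      rw [hg.char_sum (fun v => ee (2 * b x v)) (fun u _ v _ => by
          rw [← ee_add]; congr 1; rw [map_add]; ring)
        (fun v hv => by
          obtain ⟨z, hz⟩ := hM0 x hx v hv
          rw [hz, ee_int]) hL0L v hv (by
          rw [Ne, ee_eq_one_iff]; push Not; exact hv2), mul_zero]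
  rw [Fintype.sum_prod_type] at hE
  have hE2 : ∀ p : Fin m2 × ι, ∑ j, ee (b (h p.1 + f p.2 + g j) (h p.1 + f p.2 + g j)) =
      if p.1 = k0 then m1 * ee (b (h k0 + f p.2) (h k0 + f p.2)) else 0 := by
    rintro ⟨k, i⟩
    rw [hinner _ (M0.add_mem (hh.mem _) (hMM0 (hf.mem _)))]
    simp only
    by_cases hk : k = k0
    · subst hk
      rw [if_pos (M.add_mem hk0M (hf.mem _)), if_pos rfl]
    · rw [if_neg hk, if_neg]
      intro hc
      apply hk
      apply hh.inj
      have := M.sub_mem (M.sub_mem hc (hf.mem i)) hk0M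
      simpa using this
  simp only [hE2] at hE
  rw [Fintype.sum_prod_type, Finset.sum_eq_single k0 (by
    intro k _ hk; simp [hk]) (by simp)] at hE
  simp only [if_true, ← Finset.mul_sum] at hE
  have hE3 := (hf.shift _ hk0M).sum_eq hf (fun u => ee (b u u)) (by
    intro u hu v hv
    rw [hbadd, hL1 v hv]
    obtain ⟨z, hz⟩ := (hdual u).1 hu v hv
    rw [hz, ee_int]; ring)
  rw [hE3] at hE
  have hm1 : 0 < m1 := by
    obtain ⟨j, _⟩ := hg.surj 0 L.zero_mem
    exact j.pos
  refine ⟨r / m1, by positivity, ?_⟩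
  have : (m1 : ℂ) ≠ 0 := by exact_mod_cast hm1.ne'
  push_cast
  field_simp
  rw [hE, mul_comm]

end weil
end CRB

namespace CRB
section signature
open Polynomial TensorProduct
variable {K : Type*} [Field K] [NumberField K]

theorem exists_real_poly (p : ℝ[X]) (hp : p.Separable) (q : ℝ[X])
    (hq : ∀ x : ℝ, p.eval x = 0 → 0 < q.eval x) : ∃ R : ℝ[X], p ∣ R ^ 2 - q := by
  classical
  set P : ℂ[X] := p.map Complex.ofRealHom with hP
  have hPsep : P.Separable := hp.map
  have hP0 : P ≠ 0 := hPsep.ne_zero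
  set Q : ℂ[X] := q.map Complex.ofRealHom with hQ
  have hconj : ∀ (f : ℝ[X]) (z : ℂ), (f.map Complex.ofRealHom).eval ((starRingEnd ℂ) z) =
      (starRingEnd ℂ) ((f.map Complex.ofRealHom).eval z) := by
    intro f z
    rw [eval_map, eval_map, eval₂_eq_sum_range, eval₂_eq_sum_range, map_sum]
    refine Finset.sum_congr rfl fun i _ => ?_
    simp
  -- square root
  have hsq : ∀ z : ℂ, ∃ w, w ^ 2 = z := fun z => IsAlgClosed.exists_pow_nat_eq z (by norm_num)
  choose S hS using hsq
  let g : ℂ → ℂ := fun z => if z.im = 0 then ((Real.sqrt (q.eval z.re) : ℝ) : ℂ) else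
    if 0 < z.im then S (Q.eval z) else (starRingEnd ℂ) (S (Q.eval ((starRingEnd ℂ) z)))
  have hgc : ∀ z, g ((starRingEnd ℂ) z) = (starRingEnd ℂ) (g z) := by
    intro z
    simp only [g, Complex.conj_im, Complex.conj_re, neg_eq_zero]
    by_cases h : z.im = 0
    · simp [h]
    · rw [if_neg h, if_neg h]
      rcases lt_or_gt_of_ne h with h1 | h1
      · rw [if_pos (by linarith), if_neg (by linarith)]
        simp
      · rw [if_neg (by linarith), if_pos h1]
        simp
  have hg2 : ∀ z, P.eval z = 0 → g z ^ 2 = Q.eval z := by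
    intro z hz
    simp only [g]
    split_ifs with h1 h2
    · have hzr : z = ((z.re : ℝ) : ℂ) := by apply Complex.ext <;> simp [h1]
      have e1 : ∀ f : ℝ[X], (f.map Complex.ofRealHom).eval z = ((f.eval z.re : ℝ) : ℂ) := by
        intro f
        conv_lhs => rw [hzr]
        rw [eval_map]; exact (Polynomial.eval₂_at_apply Complex.ofRealHom z.re)
      have : p.eval z.re = 0 := by
        have := e1 p
        rw [← hP, hz] at this
        exact_mod_cast this.symm
      rw [hQ, e1, ← Complex.ofReal_pow, Real.sq_sqrt (hq _ this).le]
    · exact hS _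
    · rw [← map_pow, hS, hQ, hconj]; simp
  let F : ℂ[X] := Lagrange.interpolate P.roots.toFinset id g
  have hF : ∀ z, P.eval z = 0 → F.eval z = g z := by
    intro z hz
    exact Lagrange.eval_interpolate_at_node (s := P.roots.toFinset) (v := id) (i := z) g
      (Set.injOn_id _) (by simp [hP0, hz])
  let R : ℝ[X] := ∑ i ∈ Finset.range (F.natDegree + 1), monomial i ((F.coeff i).re)
  have hR : ∀ z, (R.map Complex.ofRealHom).eval z =
      (F.eval z + (starRingEnd ℂ) (F.eval ((starRingEnd ℂ) z))) / 2 := by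
    intro z
    simp only [R, Polynomial.map_sum, map_monomial, eval_finsetSum, eval_monomial]
    rw [eval_eq_sum_range, eval_eq_sum_range, map_sum, ← Finset.sum_add_distrib, Finset.sum_div]
    refine Finset.sum_congr rfl fun i _ => ?_
    simp only [map_mul, map_pow, Complex.conj_conj, Complex.ofRealHom_eq_coe, Complex.re_eq_add_conj]
    ring
  refine ⟨R, ?_⟩
  rw [← map_dvd_map' Complex.ofRealHom]
  by_cases hH : (R ^ 2 - q).map Complex.ofRealHom = 0
  · rw [hH]; exact dvd_zero _
  apply Polynomial.Splits.dvd_of_roots_le_roots (IsAlgClosed.splits _) hP0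
  rw [Multiset.le_iff_subset (nodup_roots hPsep)]
  intro z hz
  have hz0 : P.eval z = 0 := (mem_roots hP0).1 hz
  have hz1 : P.eval ((starRingEnd ℂ) z) = 0 := by rw [hP, hconj, ← hP, hz0, map_zero]
  rw [mem_roots hH, IsRoot, Polynomial.map_sub, Polynomial.map_pow, eval_sub, eval_pow, hR,
    hF z hz0, hF _ hz1, hgc, Complex.conj_conj, ← hQ, ← hg2 z hz0]
  ring

theorem exists_sqrt_tensor (α : K) (hα : ∀ φ : K →+* ℝ, 0 < φ α) :
    ∃ β : ℝ ⊗[ℚ] K, β ^ 2 = 1 ⊗ₜ α := by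
  let pb := Field.powerBasisOfFiniteOfSeparable ℚ K
  obtain ⟨q, hq⟩ := pb.exists_eq_aeval' α
  have hsep : (minpoly ℚ pb.gen).Separable := Algebra.IsSeparable.isSeparable ℚ pb.gen
  obtain ⟨R, hR⟩ := exists_real_poly ((minpoly ℚ pb.gen).map (algebraMap ℚ ℝ)) hsep.map
    (q.map (algebraMap ℚ ℝ)) (by
      intro x hx
      have hx' : aeval x (minpoly ℚ pb.gen) = 0 := by rwa [eval_map_algebraMap] at hx
      have := hα (pb.lift x hx').toRingHom
      rw [hq] at this
      rw [eval_map_algebraMap]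
      have e : (pb.lift x hx') (aeval pb.gen q) = aeval x q := by
        rw [← aeval_algHom_apply, PowerBasis.lift_gen]
      rw [← e]
      exact this)
  have key : ∀ f : ℚ[X], aeval (1 ⊗ₜ[ℚ] pb.gen : ℝ ⊗[ℚ] K) (f.map (algebraMap ℚ ℝ)) =
      1 ⊗ₜ (aeval pb.gen f) := by
    intro f
    rw [aeval_map_algebraMap]
    exact (aeval_algHom_apply (Algebra.TensorProduct.includeRight : K →ₐ[ℚ] ℝ ⊗[ℚ] K) pb.gen f)
  refine ⟨aeval (1 ⊗ₜ[ℚ] pb.gen) R, ?_⟩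
  obtain ⟨H, hH⟩ := hR
  have h1 := congrArg (aeval (1 ⊗ₜ[ℚ] pb.gen : ℝ ⊗[ℚ] K)) hH
  rw [map_mul, key, minpoly.aeval, tmul_zero, zero_mul, map_sub, map_pow, key, ← hq, sub_eq_zero] at h1
  exact h1

/-- The scaled trace form. -/
noncomputable def bform (c : K) : LinearMap.BilinForm ℚ K :=
  LinearMap.mk₂ ℚ (fun u v => Algebra.trace ℚ K (c * u * v))
    (fun u u' v => by rw [← map_add]; congr 1; ring)
    (fun a u v => by rw [← map_smul]; congr 1; simp)
    (fun u v v' => by rw [← map_add]; congr 1; ring)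
    (fun a u v => by rw [← map_smul]; congr 1; simp)

theorem bform_apply (c u v : K) : bform c u v = Algebra.trace ℚ K (c * u * v) := rfl

theorem bform_symm (c u v : K) : bform c u v = bform c v u := by
  rw [bform_apply, bform_apply]; congr 1; ring

theorem bform_basis (c : K) (hc : c ≠ 0) : ∃ e : Module.Basis (Fin (Module.finrank ℚ K)) ℚ K,
    (∀ i j, i ≠ j → bform c (e i) (e j) = 0) ∧ ∀ i, bform c (e i) (e i) ≠ 0 := by
  obtain ⟨e, he⟩ := LinearMap.BilinForm.exists_orthogonal_basis (B := bform c)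
    ⟨fun x y => bform_symm c x y⟩
  have ho : ∀ i j, i ≠ j → bform c (e i) (e j) = 0 := fun i j hij => he hij
  refine ⟨e, ho, fun i hi => ?_⟩
  have h0 : ∀ v, bform c (e i) v = 0 := by
    intro v
    rw [← e.sum_repr v, LinearMap.BilinForm.sum_right]
    refine Finset.sum_eq_zero fun j _ => ?_
    rw [LinearMap.BilinForm.smul_right]
    by_cases hij : i = j
    · subst hij; rw [hi, mul_zero]
    · rw [ho i j hij, mul_zero]
  have h1 := h0 ((c * e i)⁻¹)
  rw [bform_apply, mul_inv_cancel₀ (mul_ne_zero hc (e.ne_zero i))] at h1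
  have : Algebra.trace ℚ K (algebraMap ℚ K 1) = 0 := by rw [map_one]; exact h1
  rw [Algebra.trace_algebraMap] at this
  have hn : Module.finrank ℚ K ≠ 0 := Module.finrank_pos.ne'
  simp at this
  exact hn this

/-- Real extension of the trace. -/
noncomputable def rtr : ℝ ⊗[ℚ] K →ₗ[ℝ] ℝ :=
  (TensorProduct.AlgebraTensorModule.rid ℚ ℝ ℝ).toLinearMap ∘ₗ ((Algebra.trace ℚ K).baseChange ℝ)

theorem rtr_tmul (x : K) : rtr ((1 : ℝ) ⊗ₜ[ℚ] x) = ((Algebra.trace ℚ K x : ℚ) : ℝ) := by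
  simp [rtr, Algebra.smul_def]

/-- Real scaled trace form. -/
noncomputable def rform (γ : ℝ ⊗[ℚ] K) : LinearMap.BilinForm ℝ (ℝ ⊗[ℚ] K) :=
  LinearMap.mk₂ ℝ (fun u v => rtr (γ * u * v))
    (fun u u' v => by rw [← map_add]; congr 1; ring)
    (fun a u v => by rw [← map_smul]; congr 1; simp)
    (fun u v v' => by rw [← map_add]; congr 1; ring)
    (fun a u v => by rw [← map_smul]; congr 1; simp)

theorem rform_apply (c u v : ℝ ⊗[ℚ] K) : rform c u v = rtr (c * u * v) := rfl

theorem sig_basis (c : K) {n : ℕ} (e : Module.Basis (Fin n) ℚ K)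
    (ho : ∀ i j, i ≠ j → bform c (e i) (e j) = 0) :
    sigPos (rform ((1 : ℝ) ⊗ₜ[ℚ] c)).toQuadraticMap = {i | 0 < bform c (e i) (e i)}.ncard := by
  have hb : ∀ i j, rform ((1 : ℝ) ⊗ₜ[ℚ] c) (Algebra.TensorProduct.basis ℝ e i)
      (Algebra.TensorProduct.basis ℝ e j) = ((bform c (e i) (e j) : ℚ) : ℝ) := by
    intro i j
    rw [Algebra.TensorProduct.basis_apply, Algebra.TensorProduct.basis_apply, rform_apply,
      Algebra.TensorProduct.tmul_mul_tmul, Algebra.TensorProduct.tmul_mul_tmul, one_mul, one_mul,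
      rtr_tmul, bform_apply]
  have h1 := QuadraticMap.basisRepr_eq_of_iIsOrtho (rform ((1 : ℝ) ⊗ₜ[ℚ] c)).toQuadraticMap
    (Algebra.TensorProduct.basis ℝ e) (by
      intro i j hij
      change QuadraticMap.associated _ _ _ = 0
      rw [QuadraticMap.associated_left_inverse (S := ℝ) (fun x y => by
          simp only [rform_apply]; congr 1; ring)]
      rw [hb, ho i j hij]; simp)
  have h2 : QuadraticMap.Equivalent (rform ((1 : ℝ) ⊗ₜ[ℚ] c)).toQuadraticMap
      (QuadraticMap.weightedSumSquares ℝ fun i => (rform ((1 : ℝ) ⊗ₜ[ℚ] c)).toQuadraticMap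
        (Algebra.TensorProduct.basis ℝ e i)) := by
    rw [← h1]
    exact ⟨QuadraticMap.isometryEquivBasisRepr _ _⟩
  rw [QuadraticForm.sigPos_of_equiv_weightedSumSquares h2]
  congr 1
  ext i
  simp only [Set.mem_ofPred_eq, LinearMap.BilinMap.toQuadraticMap_apply]
  rw [hb]
  exact_mod_cast Iff.rfl

theorem sig_mul (c α : K) (hα0 : α ≠ 0) (hα : ∀ φ : K →+* ℝ, 0 < φ α) :
    sigPos (rform ((1 : ℝ) ⊗ₜ[ℚ] (α * c))).toQuadraticMap =
      sigPos (rform ((1 : ℝ) ⊗ₜ[ℚ] c)).toQuadraticMap := by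
  obtain ⟨β, hβ⟩ := exists_sqrt_tensor α hα
  have hinv : β * (β * 1 ⊗ₜ α⁻¹) = 1 := by
    rw [← mul_assoc, ← sq, hβ, Algebra.TensorProduct.tmul_mul_tmul, mul_inv_cancel₀ hα0, one_mul]
    rfl
  let L : (ℝ ⊗[ℚ] K) ≃ₗ[ℝ] (ℝ ⊗[ℚ] K) :=
    LinearEquiv.ofLinearMap (LinearMap.mulLeft ℝ β) (LinearMap.mulLeft ℝ (β * 1 ⊗ₜ α⁻¹))
      (LinearMap.ext fun x => by
        change β * ((β * 1 ⊗ₜ α⁻¹) * x) = x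
        rw [← mul_assoc, hinv, one_mul])
      (LinearMap.ext fun x => by
        change (β * 1 ⊗ₜ α⁻¹) * (β * x) = x
        rw [← mul_assoc, mul_comm _ β, hinv, one_mul])
  apply QuadraticMap.Equivalent.sigPos_eq
  refine ⟨⟨L, fun x => ?_⟩⟩
  simp only [LinearMap.BilinMap.toQuadraticMap_apply, rform_apply]
  congr 1
  change (1 ⊗ₜ c) * (β * x) * (β * x) = _
  rw [show (1 : ℝ) ⊗ₜ[ℚ] (α * c) = 1 ⊗ₜ α * 1 ⊗ₜ c by
    rw [Algebra.TensorProduct.tmul_mul_tmul, one_mul], ← hβ]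
  ring

theorem prod_kap_eq {n : ℕ} (w w' : Fin n → ℚ)
    (h : {i | 0 < w i}.ncard = {i | 0 < w' i}.ncard) : ∏ i, kap (w i) = ∏ i, kap (w' i) := by
  classical
  have : ∀ w : Fin n → ℚ, ∏ i, kap (w i) =
      (1 / (-Complex.I) ^ (1 / 2 : ℂ)) ^ {i | 0 < w i}.ncard *
      ((starRingEnd ℂ) (1 / (-Complex.I) ^ (1 / 2 : ℂ))) ^ (n - {i | 0 < w i}.ncard) := by
    intro w
    have h0 : {i | 0 < w i}.ncard = (Finset.univ.filter (fun i => 0 < w i)).card := by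
      rw [← Set.ncard_coe_finset]; simp
    unfold kap
    rw [Finset.prod_ite, Finset.prod_const, Finset.prod_const, h0]
    congr 2
    have := Finset.card_filter_add_card_filter_not (s := Finset.univ) (fun i : Fin n => 0 < w i)
    rw [Finset.card_univ, Fintype.card_fin] at this
    omega
  rw [this, this, h]

/-- Combined statement: the Gauss sums for `c` and `α c` have the same argument. -/
theorem phase_eq (c α : K) (hc : c ≠ 0) (hα0 : α ≠ 0) (hα : ∀ φ : K →+* ℝ, 0 < φ α) :
    ∃ (z : ℂ) (_ : z ≠ 0) (e e' : Module.Basis (Fin (Module.finrank ℚ K)) ℚ K),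
    (∀ i j, i ≠ j → bform c (e i) (e j) = 0) ∧ (∀ i, bform c (e i) (e i) ≠ 0) ∧
    (∀ i j, i ≠ j → bform (α * c) (e' i) (e' j) = 0) ∧ (∀ i, bform (α * c) (e' i) (e' i) ≠ 0) ∧
    ∏ i, kap (bform c (e i) (e i)) = z ∧ ∏ i, kap (bform (α * c) (e' i) (e' i)) = z := by
  obtain ⟨e, h1, h2⟩ := bform_basis c hc
  obtain ⟨e', h1', h2'⟩ := bform_basis (α * c) (mul_ne_zero hα0 hc)
  refine ⟨_, ?_, e, e', h1, h2, h1', h2', rfl, ?_⟩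
  · exact Finset.prod_ne_zero_iff.2 fun i _ => kap_ne _
  · apply prod_kap_eq
    rw [← sig_basis c e h1, ← sig_basis (α * c) e' h1', sig_mul c α hα0 hα]

end signature
end CRB

namespace CRB
set_option linter.unusedSectionVars false
set_option linter.style.haveILetI false
section recip
variable {K : Type*} [Field K] [NumberField K]

theorem ff_sum {F : Type*} [Field F] [Fintype F] [DecidableEq F] (hF : ringChar F ≠ 2)
    (ψ : AddChar F ℂ) (hψ : ψ ≠ 1) :
    ∑ x, ψ (x ^ 2) = gaussSum ((quadraticChar F).ringHomComp (Int.castRingHom ℂ)) ψ := by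
  have h1 : ∑ x, ψ (x ^ 2) = ∑ t, ((quadraticChar F t : ℂ) + 1) * ψ t := by
    rw [← Finset.sum_fiberwise Finset.univ (fun x : F => x ^ 2)]
    refine Finset.sum_congr rfl fun t _ => ?_
    have h2 : ∀ x ∈ Finset.univ.filter (fun x : F => x ^ 2 = t), ψ (x ^ 2) = ψ t := by
      intro x hx
      rw [(Finset.mem_filter.1 hx).2]
    rw [Finset.sum_congr rfl h2, Finset.sum_const, nsmul_eq_mul]
    congr 1
    have h3 := quadraticChar_card_sqrts hF t
    have h4 : (({x | x ^ 2 = t} : Set F).toFinset) = Finset.univ.filter (fun x : F => x ^ 2 = t) := by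
      ext; simp
    rw [h4] at h3
    exact_mod_cast h3
  rw [h1]
  simp only [add_mul, one_mul, Finset.sum_add_distrib]
  rw [AddChar.sum_eq_zero_of_ne_one hψ, add_zero]
  rfl

theorem ff_gauss {F : Type*} [Field F] [Fintype F] [DecidableEq F] (hF : ringChar F ≠ 2)
    (ψ : AddChar F ℂ) (hψ : ψ ≠ 1) (a : F) (ha : a ≠ 0) :
    ∑ x, ψ (a * x ^ 2) = quadraticChar F a * ∑ x, ψ (x ^ 2) := by
  have hne : ψ.mulShift a ≠ 1 := by
    intro h
    apply hψ
    ext x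
    have := DFunLike.congr_fun h (a⁻¹ * x)
    rw [AddChar.mulShift_apply, mul_inv_cancel_left₀ ha] at this
    simpa using this
  have h1 := ff_sum hF (ψ.mulShift a) hne
  simp only [AddChar.mulShift_apply] at h1
  rw [h1, ff_sum hF ψ hψ, ← gaussSum_mulShift _ ψ (Units.mk0 a ha)]
  rw [← mul_assoc, Units.val_mk0]
  have : (quadraticChar F a : ℂ) * ((quadraticChar F).ringHomComp (Int.castRingHom ℂ)) a = 1 := by
    change (quadraticChar F a : ℂ) * ((quadraticChar F a : ℤ) : ℂ) = 1
    rw [← sq]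
    exact_mod_cast quadraticChar_sq_one ha
  rw [this, one_mul]

open Classical in
/-- The quadratic residue symbol of `α` modulo `p`. -/
noncomputable def chi (α : 𝓞 K) (p : Ideal (𝓞 K)) : ℤ := if ∃ y, α - y ^ 2 ∈ p then 1 else -1

theorem chi_eq (α : 𝓞 K) (p : Ideal (𝓞 K)) [hp : p.IsMaximal] (hα : α ∉ p)
    [Fintype (𝓞 K ⧸ p)] [DecidableEq (𝓞 K ⧸ p)] :
    letI := Ideal.Quotient.field p
    chi α p = quadraticChar (𝓞 K ⧸ p) (Ideal.Quotient.mk p α) := by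
  classical
  letI := Ideal.Quotient.field p
  have h0 : Ideal.Quotient.mk p α ≠ 0 := by rwa [Ne, Ideal.Quotient.eq_zero_iff_mem]
  rw [chi, quadraticChar_apply, quadraticCharFun, if_neg h0]
  have : (∃ y, α - y ^ 2 ∈ p) ↔ IsSquare (Ideal.Quotient.mk p α) := by
    constructor
    · rintro ⟨y, hy⟩
      refine ⟨Ideal.Quotient.mk p y, ?_⟩
      rw [← map_mul, Ideal.Quotient.eq, ← sq]; exact hy
    · rintro ⟨y, hy⟩
      obtain ⟨y, rfl⟩ := Ideal.Quotient.mk_surjective y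
      refine ⟨y, ?_⟩
      rw [← map_mul, Ideal.Quotient.eq, ← sq] at hy; exact hy
  by_cases h : ∃ y, α - y ^ 2 ∈ p
  · rw [if_pos h, if_pos (this.1 h)]
  · rw [if_neg h, if_neg (fun h' => h (this.2 h'))]

/-- Codifferent. -/
noncomputable def dl (K : Type*) [Field K] [NumberField K] : FractionalIdeal (𝓞 K)⁰ K :=
  FractionalIdeal.dual ℤ ℚ 1

theorem dl_ne : dl K ≠ 0 := by
  unfold dl
  rw [Ne, FractionalIdeal.dual_eq_zero_iff]
  exact one_ne_zero

theorem dl_tr {x : K} (hx : x ∈ dl K) : ∃ z : ℤ, Algebra.trace ℚ K x = z := by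
  have := (FractionalIdeal.mem_dual (I := (1 : FractionalIdeal (𝓞 K)⁰ K)) one_ne_zero).1 hx 1
    (FractionalIdeal.one_mem_one _)
  obtain ⟨z, hz⟩ := this
  refine ⟨z, ?_⟩
  rw [Algebra.traceForm_apply, mul_one] at hz
  rw [← hz]; rfl

theorem dl_of_tr {x : K} (I : FractionalIdeal (𝓞 K)⁰ K) (hI : I ≠ 0)
    (h : ∀ a ∈ I, ∃ z : ℤ, Algebra.trace ℚ K (x * a) = z) : x ∈ dl K * I⁻¹ := by
  unfold dl
  rw [← FractionalIdeal.dual_eq_mul_inv, FractionalIdeal.mem_dual hI]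
  intro a ha
  obtain ⟨z, hz⟩ := h a ha
  exact ⟨z, by rw [Algebra.traceForm_apply, hz]; rfl⟩

/-- Additive group of a fractional ideal. -/
def ag (I : FractionalIdeal (𝓞 K)⁰ K) : AddSubgroup K := (I : Submodule (𝓞 K) K).toAddSubgroup

theorem mem_ag {I : FractionalIdeal (𝓞 K)⁰ K} {x : K} : x ∈ ag I ↔ x ∈ I := Iff.rfl

theorem ag_mono {I J : FractionalIdeal (𝓞 K)⁰ K} (h : I ≤ J) : ag I ≤ ag J := h

theorem mul_mem {I J H : FractionalIdeal (𝓞 K)⁰ K} {x y : K} (hx : x ∈ I) (hy : y ∈ J)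
    (h : I * J = H) : x * y ∈ H := h ▸ FractionalIdeal.mul_mem_mul hx hy

/-- The fractional ideal `(2)`. -/
noncomputable def tw (K : Type*) [Field K] [NumberField K] : FractionalIdeal (𝓞 K)⁰ K :=
  FractionalIdeal.spanSingleton _ (2 : K)

theorem tw_ne : tw K ≠ 0 := by
  unfold tw
  rw [Ne, FractionalIdeal.spanSingleton_eq_zero_iff]
  norm_num

theorem two_mem_tw : (2 : K) ∈ tw K := FractionalIdeal.mem_spanSingleton_self _ _

theorem tw_eq : tw K = ((Ideal.span {(2 : 𝓞 K)} : Ideal (𝓞 K)) : FractionalIdeal (𝓞 K)⁰ K) := by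
  rw [FractionalIdeal.coeIdeal_span_singleton, tw, map_ofNat]

theorem mem_tw_mul {I : FractionalIdeal (𝓞 K)⁰ K} {x : K} : x ∈ tw K * I ↔ ∃ y ∈ I, 2 * y = x := by
  rw [tw, FractionalIdeal.mem_singleton_mul]
  constructor
  · rintro ⟨y, hy, h⟩; exact ⟨y, hy, h.symm⟩
  · rintro ⟨y, hy, h⟩; exact ⟨y, hy, h.symm⟩

theorem two_mul_mem {I : FractionalIdeal (𝓞 K)⁰ K} {x : K} : 2 * x ∈ tw K * I ↔ x ∈ I := by
  rw [mem_tw_mul]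
  constructor
  · rintro ⟨y, hy, h⟩
    have : y = x := by
      apply mul_left_cancel₀ (two_ne_zero (α := K)) h
    exact this ▸ hy
  · intro h; exact ⟨x, h, rfl⟩

theorem smul_mem' {I : FractionalIdeal (𝓞 K)⁰ K} (a : 𝓞 K) {x : K} (hx : x ∈ I) :
    (algebraMap (𝓞 K) K a) * x ∈ I := by
  rw [← Algebra.smul_def]; exact (I : Submodule (𝓞 K) K).smul_mem a hx

/-- Representatives for `(pk)⁻¹/k⁻¹`. -/
theorem trans_p (p : Ideal (𝓞 K)) [hp : p.IsMaximal] (hp0 : p ≠ ⊥) (k : FractionalIdeal (𝓞 K)⁰ K)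
    (hk : k ≠ 0) : ∃ (x : K) (J : Ideal (𝓞 K)), x ≠ 0 ∧ x ∈ ((p : FractionalIdeal (𝓞 K)⁰ K) * k)⁻¹ ∧
      (J : FractionalIdeal (𝓞 K)⁰ K) = FractionalIdeal.spanSingleton _ x * ((p : FractionalIdeal (𝓞 K)⁰ K) * k) ∧ ¬ J ≤ p ∧
      Trans (fun a : 𝓞 K ⧸ p => 2 * (algebraMap (𝓞 K) K (Quotient.out a) * x))
        (ag (tw K * ((p : FractionalIdeal (𝓞 K)⁰ K) * k)⁻¹)) (ag (tw K * k⁻¹)) := by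
  have hp0' : (p : FractionalIdeal (𝓞 K)⁰ K) ≠ 0 := by
    rwa [Ne, FractionalIdeal.coeIdeal_eq_zero]
  obtain ⟨x, hx, hxk⟩ : ∃ x ∈ ((p : FractionalIdeal (𝓞 K)⁰ K) * k)⁻¹, x ∉ k⁻¹ := by
    by_contra! hcon
    have h1 : ((p : FractionalIdeal (𝓞 K)⁰ K) * k)⁻¹ ≤ k⁻¹ := hcon
    have h2 : ((p : FractionalIdeal (𝓞 K)⁰ K) * k)⁻¹ * ((p : FractionalIdeal (𝓞 K)⁰ K) * k) ≤ k⁻¹ * ((p : FractionalIdeal (𝓞 K)⁰ K) * k) := by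
      gcongr
    rw [inv_mul_cancel₀ (mul_ne_zero hp0' hk), show k⁻¹ * ((p : FractionalIdeal (𝓞 K)⁰ K) * k) = p by field_simp] at h2
    rw [← FractionalIdeal.coeIdeal_top, FractionalIdeal.coeIdeal_le_coeIdeal] at h2
    exact hp.ne_top (top_le_iff.1 h2)
  have hle : FractionalIdeal.spanSingleton (𝓞 K)⁰ x * ((p : FractionalIdeal (𝓞 K)⁰ K) * k) ≤ 1 := by
    have h1 : FractionalIdeal.spanSingleton (𝓞 K)⁰ x ≤ ((p : FractionalIdeal (𝓞 K)⁰ K) * k)⁻¹ :=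
      FractionalIdeal.spanSingleton_le_iff_mem.2 hx
    have h2 : FractionalIdeal.spanSingleton (𝓞 K)⁰ x * ((p : FractionalIdeal (𝓞 K)⁰ K) * k) ≤
        ((p : FractionalIdeal (𝓞 K)⁰ K) * k)⁻¹ * ((p : FractionalIdeal (𝓞 K)⁰ K) * k) := by gcongr
    rwa [inv_mul_cancel₀ (mul_ne_zero hp0' hk)] at h2
  obtain ⟨J, hJ⟩ := FractionalIdeal.le_one_iff_exists_coeIdeal.1 hle
  have hJp : ¬ J ≤ p := by
    intro h
    rw [← FractionalIdeal.coeIdeal_le_coeIdeal K, hJ] at h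
    have h2 : FractionalIdeal.spanSingleton (𝓞 K)⁰ x * ((p : FractionalIdeal (𝓞 K)⁰ K) * k) * ((p : FractionalIdeal (𝓞 K)⁰ K) * k)⁻¹ ≤ p * ((p : FractionalIdeal (𝓞 K)⁰ K) * k)⁻¹ := by
      gcongr
    rw [mul_inv_cancel_right₀ (mul_ne_zero hp0' hk),
      show (p : FractionalIdeal (𝓞 K)⁰ K) * ((p : FractionalIdeal (𝓞 K)⁰ K) * k)⁻¹ = k⁻¹ by field_simp] at h2
    exact hxk (FractionalIdeal.spanSingleton_le_iff_mem.1 h2)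
  have hx0 : x ≠ 0 := by
    rintro rfl; exact hxk (Submodule.zero_mem _)
  have hpx : ∀ a ∈ p, ∀ w ∈ ((p : FractionalIdeal (𝓞 K)⁰ K) * k)⁻¹, algebraMap (𝓞 K) K a * w ∈ k⁻¹ := by
    intro a ha w hw
    exact mul_mem ((FractionalIdeal.mem_coeIdeal _).2 ⟨a, ha, rfl⟩) hw (by field_simp)
  refine ⟨x, J, hx0, hx, hJ, hJp, ?_, ?_, ?_⟩
  · intro a
    rw [mem_ag, two_mul_mem]
    exact smul_mem' _ hx
  · intro u hu
    rw [mem_ag, mem_tw_mul] at hu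
    obtain ⟨w, hw, rfl⟩ := hu
    have htop : J ⊔ p = ⊤ := by
      rw [sup_comm]; exact hp.1.2 _ (left_lt_sup.2 hJp)
    obtain ⟨j, hj, π, hπ, h1⟩ := Submodule.mem_sup.1 ((Ideal.eq_top_iff_one _).1 htop)
    have h2 : algebraMap (𝓞 K) K j * w ∈ FractionalIdeal.spanSingleton (𝓞 K)⁰ x := by
      refine mul_mem (I := J) ((FractionalIdeal.mem_coeIdeal _).2 ⟨j, hj, rfl⟩) hw ?_
      rw [hJ, mul_inv_cancel_right₀ (mul_ne_zero hp0' hk)]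
    obtain ⟨a, ha⟩ := (FractionalIdeal.mem_spanSingleton _).1 h2
    rw [Algebra.smul_def] at ha
    refine ⟨Ideal.Quotient.mk p a, ?_⟩
    rw [mem_ag, ← mul_sub, two_mul_mem]
    have h3 : a - Quotient.out (Ideal.Quotient.mk p a) ∈ p := by
      rw [← Ideal.Quotient.eq]; exact (Quotient.out_eq _).symm
    have h4 := congrArg (algebraMap (𝓞 K) K) h1
    rw [map_add, map_one] at h4
    have h5 : w - algebraMap (𝓞 K) K (Quotient.out (Ideal.Quotient.mk p a)) * x =
        algebraMap (𝓞 K) K π * w +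
          algebraMap (𝓞 K) K (a - Quotient.out (Ideal.Quotient.mk p a)) * x := by
      rw [map_sub, sub_mul, ha]
      linear_combination -w * h4
    rw [h5]
    exact Submodule.add_mem _ (hpx _ hπ _ hw) (hpx _ h3 _ hx)
  · intro a a' h
    rw [mem_ag, ← mul_sub, two_mul_mem, ← sub_mul, ← map_sub] at h
    by_contra hne
    have h1 : Quotient.out a - Quotient.out a' ∉ p := by
      intro h2
      rw [← Ideal.Quotient.eq] at h2
      apply hne
      rw [← Quotient.out_eq a, ← Quotient.out_eq a']
      exact h2
    obtain ⟨r, π, hπ, h2⟩ := hp.exists_inv h1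
    apply hxk
    have h4 := congrArg (algebraMap (𝓞 K) K) h2
    rw [map_add, map_mul, map_one] at h4
    have h5 : x = algebraMap (𝓞 K) K r *
        (algebraMap (𝓞 K) K (Quotient.out a - Quotient.out a') * x) + algebraMap (𝓞 K) K π * x := by
      linear_combination -x * h4
    rw [h5]
    exact Submodule.add_mem _ (smul_mem' _ h) (hpx _ hπ _ hx)

end recip
end CRB

namespace CRB
set_option linter.style.haveILetI false
set_option linter.unusedSectionVars false
section recip2
universe u
variable {K : Type u} [Field K] [NumberField K]

theorem ideal_mem {I : Ideal (𝓞 K)} {a : 𝓞 K} (ha : a ∈ I) :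
    algebraMap (𝓞 K) K a ∈ (I : FractionalIdeal (𝓞 K)⁰ K) :=
  (FractionalIdeal.mem_coeIdeal _).2 ⟨a, ha, rfl⟩

theorem mul_le_dl (I : FractionalIdeal (𝓞 K)⁰ K) (J : Ideal (𝓞 K)) : I * J ≤ I := by
  calc I * J ≤ I * 1 := by gcongr; exact FractionalIdeal.coeIdeal_le_one
    _ = I := mul_one _

theorem p_part (p : Ideal (𝓞 K)) [hp : p.IsMaximal] (hp0 : p ≠ ⊥) (h2 : (2 : 𝓞 K) ∉ p)
    (k : FractionalIdeal (𝓞 K)⁰ K) (hk : k ≠ 0) (s' : Ideal (𝓞 K)) (hs' : ¬ s' ≤ p) (c : K)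
    (hc : FractionalIdeal.spanSingleton (𝓞 K)⁰ c = dl K * (p * s' * k ^ 2))
    (α : 𝓞 K) (hα : α ∉ p) (x : K) (hx : x ∈ ((p : FractionalIdeal (𝓞 K)⁰ K) * k)⁻¹) (J : Ideal (𝓞 K))
    (hJ : (J : FractionalIdeal (𝓞 K)⁰ K) = FractionalIdeal.spanSingleton _ x * ((p : FractionalIdeal (𝓞 K)⁰ K) * k))
    (hJp : ¬ J ≤ p) [Fintype (𝓞 K ⧸ p)] :
    ∑ a : 𝓞 K ⧸ p, ee (Algebra.trace ℚ K (algebraMap (𝓞 K) K α * c * x ^ 2 * (algebraMap (𝓞 K) K (Quotient.out a)) ^ 2)) =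
      chi α p * ∑ a : 𝓞 K ⧸ p, ee (Algebra.trace ℚ K (c * x ^ 2 * (algebraMap (𝓞 K) K (Quotient.out a)) ^ 2)) := by
  classical
  letI := Ideal.Quotient.field p
  have hp0' : (p : FractionalIdeal (𝓞 K)⁰ K) ≠ 0 := by
    rwa [Ne, FractionalIdeal.coeIdeal_eq_zero]
  have hcm : c ∈ dl K * (p * s' * k ^ 2) := hc ▸ FractionalIdeal.mem_spanSingleton_self _ _
  have hpi : ∀ y ∈ p, ee (Algebra.trace ℚ K (c * x ^ 2 * algebraMap (𝓞 K) K y)) = 1 := by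
    intro y hy
    have h1 : c * (x * x) ∈ dl K * (p * s' * k ^ 2) * ((p * k)⁻¹ * (p * k)⁻¹) :=
      FractionalIdeal.mul_mem_mul hcm (FractionalIdeal.mul_mem_mul hx hx)
    have h2 : c * (x * x) * algebraMap (𝓞 K) K y ∈ dl K * s' :=
      mul_mem h1 (ideal_mem hy) (by field_simp)
    obtain ⟨z, hz⟩ := dl_tr (mul_le_dl _ _ h2)
    rw [sq, hz, ee_int]
  have hadd : ∀ y y' : 𝓞 K, ee (Algebra.trace ℚ K (c * x ^ 2 * algebraMap (𝓞 K) K (y + y'))) =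
      ee (Algebra.trace ℚ K (c * x ^ 2 * algebraMap (𝓞 K) K y)) *
      ee (Algebra.trace ℚ K (c * x ^ 2 * algebraMap (𝓞 K) K y')) := by
    intro y y'
    rw [← ee_add, ← map_add, ← mul_add, ← map_add]
  have hcong : ∀ y y' : 𝓞 K, Ideal.Quotient.mk p y = Ideal.Quotient.mk p y' →
      ee (Algebra.trace ℚ K (c * x ^ 2 * algebraMap (𝓞 K) K y)) =
      ee (Algebra.trace ℚ K (c * x ^ 2 * algebraMap (𝓞 K) K y')) := by
    intro y y' h
    rw [Ideal.Quotient.eq] at h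
    have := hadd y' (y - y')
    rw [hpi _ h, mul_one] at this
    rw [← this]; congr 3; ring_nf
  have hout : ∀ a : 𝓞 K ⧸ p, Ideal.Quotient.mk p (Quotient.out a) = a := fun a => Quotient.out_eq a
  let ψ : AddChar (𝓞 K ⧸ p) ℂ :=
    { toFun := fun a => ee (Algebra.trace ℚ K (c * x ^ 2 * algebraMap (𝓞 K) K (Quotient.out a)))
      map_zero_eq_one' := by
        rw [hcong _ 0 (by rw [hout, map_zero])]; simp [ee_zero]
      map_add_eq_mul' := fun a b => by
        rw [← hadd]
        apply hcong
        rw [map_add, hout, hout, hout] }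
  have hψ : ∀ y, ψ (Ideal.Quotient.mk p y) = ee (Algebra.trace ℚ K (c * x ^ 2 * algebraMap (𝓞 K) K y)) :=
    fun y => hcong _ _ (hout _)
  have hψ1 : ψ ≠ 1 := by
    intro h
    have h1 : ∀ y, ee (Algebra.trace ℚ K (c * x ^ 2 * algebraMap (𝓞 K) K y)) = 1 := by
      intro y; rw [← hψ, h]; rfl
    have h3 : c * x ^ 2 ∈ dl K * 1⁻¹ := by
      apply dl_of_tr (1 : FractionalIdeal (𝓞 K)⁰ K) one_ne_zero
      intro a ha
      obtain ⟨y, rfl⟩ := (FractionalIdeal.mem_one_iff _).1 ha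
      exact (ee_eq_one_iff _).1 (h1 y)
    rw [inv_one, mul_one, ← FractionalIdeal.spanSingleton_le_iff_mem, sq,
      ← FractionalIdeal.spanSingleton_mul_spanSingleton,
      ← FractionalIdeal.spanSingleton_mul_spanSingleton, hc] at h3
    set X := FractionalIdeal.spanSingleton (𝓞 K)⁰ x
    have hd := dl_ne (K := K)
    have h4 : (dl K)⁻¹ * (dl K * (p * s' * k ^ 2) * (X * X)) * p ≤ (dl K)⁻¹ * dl K * p := by
      gcongr
    have h5 : (dl K)⁻¹ * (dl K * (p * s' * k ^ 2) * (X * X)) * p = s' * (J * J) := by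
      rw [hJ]; field_simp
    rw [h5, inv_mul_cancel₀ hd, one_mul, ← FractionalIdeal.coeIdeal_mul, ← FractionalIdeal.coeIdeal_mul,
      FractionalIdeal.coeIdeal_le_coeIdeal] at h4
    have hpp : p.IsPrime := hp.isPrime
    rcases hpp.mul_le.1 h4 with h | h
    · exact hs' h
    · rcases hpp.mul_le.1 h with h | h <;> exact hJp h
  have hchar : ringChar (𝓞 K ⧸ p) ≠ 2 := by
    intro h
    have : ((2 : ℕ) : 𝓞 K ⧸ p) = 0 := by
      rw [← h]; exact ringChar.Nat.cast_ringChar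
    apply h2
    rw [← Ideal.Quotient.eq_zero_iff_mem, map_ofNat]
    exact_mod_cast this
  have hα' : Ideal.Quotient.mk p α ≠ 0 := by rwa [Ne, Ideal.Quotient.eq_zero_iff_mem]
  have key := ff_gauss hchar ψ hψ1 _ hα'
  rw [← chi_eq α p hα] at key
  have e1 : ∀ a : 𝓞 K ⧸ p, ψ (Ideal.Quotient.mk p α * a ^ 2) = ee (Algebra.trace ℚ K (algebraMap (𝓞 K) K α * c * x ^ 2 * (algebraMap (𝓞 K) K (Quotient.out a)) ^ 2)) := by
    intro a
    conv_lhs => rw [← hout a, ← map_pow, ← map_mul, hψ]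
    congr 2
    rw [map_mul, map_pow]; ring
  have e2 : ∀ a : 𝓞 K ⧸ p, ψ (a ^ 2) = ee (Algebra.trace ℚ K (c * x ^ 2 * (algebraMap (𝓞 K) K (Quotient.out a)) ^ 2)) := by
    intro a
    conv_lhs => rw [← hout a, ← map_pow, hψ]
    congr 2
  simp only [e1, e2] at key
  exact key

noncomputable instance fint2 : Fintype (𝓞 K ⧸ Ideal.span {(2 : 𝓞 K)}) :=
  have : Finite (𝓞 K ⧸ Ideal.span {(2 : 𝓞 K)}) :=
    Ring.HasFiniteQuotients.finiteQuotient (by simp)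
  Fintype.ofFinite _

/-- Dyadic Gauss sum. -/
noncomputable def G2 (c : K) : ℂ := ∑ w : 𝓞 K ⧸ Ideal.span {(2 : 𝓞 K)},
  ee (bform (c / 4) (algebraMap (𝓞 K) K (Quotient.out w)) (algebraMap (𝓞 K) K (Quotient.out w)))

theorem trans_two (k : Ideal (𝓞 K)) (hk0 : k ≠ ⊥) (hk : IsCoprime k (Ideal.span {(2 : 𝓞 K)})) :
    Trans (fun w : 𝓞 K ⧸ Ideal.span {(2 : 𝓞 K)} => algebraMap (𝓞 K) K (Quotient.out w))
      (ag ((k : FractionalIdeal (𝓞 K)⁰ K)⁻¹)) (ag (tw K * (k : FractionalIdeal (𝓞 K)⁰ K)⁻¹)) := by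
  have hk0' : (k : FractionalIdeal (𝓞 K)⁰ K) ≠ 0 := by
    rwa [Ne, FractionalIdeal.coeIdeal_eq_zero]
  have hone : (1 : K) ∈ (k : FractionalIdeal (𝓞 K)⁰ K)⁻¹ := by
    rw [FractionalIdeal.mem_inv_iff hk0']
    intro y hy
    rw [one_mul]
    exact FractionalIdeal.coeIdeal_le_one hy
  have hIntl : ∀ a : 𝓞 K, algebraMap (𝓞 K) K a ∈ (k : FractionalIdeal (𝓞 K)⁰ K)⁻¹ := by
    intro a; simpa using smul_mem' a hone
  obtain ⟨a, ha, b, hb, hab⟩ := Ideal.isCoprime_iff_exists.1 hk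
  obtain ⟨b, rfl⟩ := Ideal.mem_span_singleton'.1 hb
  have hab' := congrArg (algebraMap (𝓞 K) K) hab
  rw [map_add, map_mul, map_one, map_ofNat] at hab'
  refine ⟨fun w => hIntl _, ?_, ?_⟩
  · intro u hu
    rw [mem_ag] at hu
    have h1 : algebraMap (𝓞 K) K a * u ∈ (1 : FractionalIdeal (𝓞 K)⁰ K) :=
      mul_mem (ideal_mem ha) hu (mul_inv_cancel₀ hk0')
    obtain ⟨y, hy⟩ := (FractionalIdeal.mem_one_iff _).1 h1
    refine ⟨Ideal.Quotient.mk _ y, ?_⟩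
    have h3 : y - Quotient.out (Ideal.Quotient.mk (Ideal.span {(2 : 𝓞 K)}) y) ∈ Ideal.span {(2 : 𝓞 K)} := by
      rw [← Ideal.Quotient.eq]; exact (Quotient.out_eq _).symm
    obtain ⟨v, hv⟩ := Ideal.mem_span_singleton'.1 h3
    have hv' := congrArg (algebraMap (𝓞 K) K) hv
    rw [map_sub, map_mul, map_ofNat] at hv'
    rw [mem_ag, mem_tw_mul]
    refine ⟨algebraMap (𝓞 K) K b * u + algebraMap (𝓞 K) K v, ?_, ?_⟩
    · exact Submodule.add_mem _ (smul_mem' _ hu) (hIntl _)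
    · linear_combination u * hab' + hv' + hy
  · intro w w' h
    rw [mem_ag, mem_tw_mul] at h
    obtain ⟨v, hv, h⟩ := h
    have h1 : algebraMap (𝓞 K) K a * v ∈ (1 : FractionalIdeal (𝓞 K)⁰ K) :=
      mul_mem (ideal_mem ha) hv (mul_inv_cancel₀ hk0')
    obtain ⟨y, hy⟩ := (FractionalIdeal.mem_one_iff _).1 h1
    have h4 : Quotient.out w - Quotient.out w' ∈ Ideal.span {(2 : 𝓞 K)} := by
      rw [Ideal.mem_span_singleton']
      refine ⟨y + b * (Quotient.out w - Quotient.out w'), ?_⟩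
      apply FaithfulSMul.algebraMap_injective (𝓞 K) K
      rw [map_mul, map_add, map_mul, map_sub, map_ofNat, hy]
      linear_combination (algebraMap (𝓞 K) K a) * h + (algebraMap (𝓞 K) K (Quotient.out w) - algebraMap (𝓞 K) K (Quotient.out w')) * hab'
    rw [← Ideal.Quotient.eq] at h4
    rw [← Quotient.out_eq w, ← Quotient.out_eq w']
    exact h4

end recip2
end CRB

namespace CRB
set_option linter.unusedSectionVars false
set_option linter.style.haveILetI false
section recip3
universe u
variable {K : Type u} [Field K] [NumberField K]

theorem sum_split {ι κ : Type*} [Fintype ι] [Fintype κ] (f : ι → K) (g : κ → K) (c : K)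
    (h : ∀ i j, ∃ z : ℤ, 2 * bform (c / 4) (f i) (g j) = z) :
    ∑ q : ι × κ, ee (bform (c / 4) (f q.1 + g q.2) (f q.1 + g q.2)) =
      (∑ i, ee (bform (c / 4) (f i) (f i))) * ∑ j, ee (bform (c / 4) (g j) (g j)) := by
  rw [Fintype.sum_prod_type, Finset.sum_mul_sum]
  refine Finset.sum_congr rfl fun i _ => Finset.sum_congr rfl fun j _ => ?_
  obtain ⟨z, hz⟩ := h i j
  have : bform (c / 4) (f i + g j) (f i + g j) =
      bform (c / 4) (f i) (f i) + bform (c / 4) (g j) (g j) + z := by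
    rw [← hz]
    simp only [map_add, LinearMap.add_apply]
    rw [bform_symm _ (g j) (f i)]; ring
  rw [this, ee_add, ee_add, ee_int, mul_one]

theorem bform_four (c x y : K) : bform (c / 4) (2 * (y * x)) (2 * (y * x)) =
    Algebra.trace ℚ K (c * x ^ 2 * y ^ 2) := by
  rw [bform_apply]; congr 1; ring

theorem bform_two (c u w : K) : 2 * bform (c / 4) u (2 * w) = Algebra.trace ℚ K (c * (u * w)) := by
  rw [bform_apply, ← smul_eq_mul, ← map_smul]; congr 1
  rw [Algebra.smul_def, map_ofNat]; ring

theorem lattice_split (p t : Ideal (𝓞 K)) (hp0 : p ≠ ⊥) (ht0 : t ≠ ⊥)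
    (hpt : IsCoprime p (Ideal.span {(2 : 𝓞 K)} * t))
    (k : FractionalIdeal (𝓞 K)⁰ K) (hk0 : k ≠ 0) :
    (ag ((t : FractionalIdeal (𝓞 K)⁰ K) * k)⁻¹ ⊓ ag (tw K * ((p : FractionalIdeal (𝓞 K)⁰ K) * k)⁻¹) = ag (tw K * k⁻¹)) ∧
    (ag ((t : FractionalIdeal (𝓞 K)⁰ K) * k)⁻¹ ⊔ ag (tw K * ((p : FractionalIdeal (𝓞 K)⁰ K) * k)⁻¹) = ag (((p * t : Ideal (𝓞 K)) : FractionalIdeal (𝓞 K)⁰ K) * k)⁻¹) := by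
  have hp0' : (p : FractionalIdeal (𝓞 K)⁰ K) ≠ 0 := by
    rwa [Ne, FractionalIdeal.coeIdeal_eq_zero]
  have ht0' : (t : FractionalIdeal (𝓞 K)⁰ K) ≠ 0 := by
    rwa [Ne, FractionalIdeal.coeIdeal_eq_zero]
  have htw := tw_ne (K := K)
  obtain ⟨a, ha, b, hb, hab⟩ := Ideal.isCoprime_iff_exists.1 hpt
  have ha' := ideal_mem ha
  have hb' := ideal_mem hb
  rw [FractionalIdeal.coeIdeal_mul, ← tw_eq] at hb'
  have hab' := congrArg (algebraMap (𝓞 K) K) hab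
  rw [map_add, map_one] at hab'
  have hx : ∀ x : K, x = algebraMap (𝓞 K) K a * x + algebraMap (𝓞 K) K b * x := by
    intro x; rw [← add_mul, hab', one_mul]
  have htw1 : tw K ≤ 1 := by rw [tw_eq]; exact FractionalIdeal.coeIdeal_le_one
  constructor
  · apply le_antisymm
    · rintro x ⟨h1, h2⟩
      change x ∈ ((t : FractionalIdeal (𝓞 K)⁰ K) * k)⁻¹ at h1
      change x ∈ tw K * ((p : FractionalIdeal (𝓞 K)⁰ K) * k)⁻¹ at h2
      rw [hx x]
      refine AddSubgroup.add_mem _ ?_ ?_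
      · exact mul_mem ha' h2 (by field_simp)
      · exact mul_mem hb' h1 (by field_simp)
    · refine le_inf (ag_mono ?_) (ag_mono ?_)
      · have : tw K * k⁻¹ = ((t : FractionalIdeal (𝓞 K)⁰ K) * k)⁻¹ * t * tw K := by field_simp
        rw [this]
        calc ((t : FractionalIdeal (𝓞 K)⁰ K) * k)⁻¹ * t * tw K ≤ ((t : FractionalIdeal (𝓞 K)⁰ K) * k)⁻¹ * t * 1 := by gcongr
          _ ≤ ((t : FractionalIdeal (𝓞 K)⁰ K) * k)⁻¹ := by rw [mul_one]; exact mul_le_dl _ _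
      · have : tw K * k⁻¹ = tw K * ((p : FractionalIdeal (𝓞 K)⁰ K) * k)⁻¹ * p := by field_simp
        rw [this]; exact mul_le_dl _ _
  · apply le_antisymm
    · refine sup_le (ag_mono ?_) (ag_mono ?_)
      · have : ((t : FractionalIdeal (𝓞 K)⁰ K) * k)⁻¹ = (((p * t : Ideal (𝓞 K)) : FractionalIdeal (𝓞 K)⁰ K) * k)⁻¹ * p := by
          rw [FractionalIdeal.coeIdeal_mul]; field_simp
        rw [this]; exact mul_le_dl _ _
      · have : tw K * ((p : FractionalIdeal (𝓞 K)⁰ K) * k)⁻¹ = (((p * t : Ideal (𝓞 K)) : FractionalIdeal (𝓞 K)⁰ K) * k)⁻¹ * t * tw K := by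
          rw [FractionalIdeal.coeIdeal_mul]; field_simp
        rw [this]
        calc (((p * t : Ideal (𝓞 K)) : FractionalIdeal (𝓞 K)⁰ K) * k)⁻¹ * t * tw K ≤ (((p * t : Ideal (𝓞 K)) : FractionalIdeal (𝓞 K)⁰ K) * k)⁻¹ * t * 1 := by gcongr
          _ ≤ (((p * t : Ideal (𝓞 K)) : FractionalIdeal (𝓞 K)⁰ K) * k)⁻¹ := by rw [mul_one]; exact mul_le_dl _ _
    · intro x h1
      change x ∈ (((p * t : Ideal (𝓞 K)) : FractionalIdeal (𝓞 K)⁰ K) * k)⁻¹ at h1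
      rw [FractionalIdeal.coeIdeal_mul] at h1
      rw [hx x]
      refine AddSubgroup.add_mem_sup ?_ ?_
      · exact mul_mem ha' h1 (by field_simp)
      · exact mul_mem hb' h1 (by field_simp)

theorem split_sum (S : Finset (Ideal (𝓞 K))) (hS : ∀ p ∈ S, p.IsMaximal ∧ p ≠ ⊥ ∧ (2 : 𝓞 K) ∉ p)
    (k : Ideal (𝓞 K)) (hk0 : k ≠ ⊥) (hk : IsCoprime k (Ideal.span {(2 : 𝓞 K)})) (c : K)
    (hc : FractionalIdeal.spanSingleton (𝓞 K)⁰ c =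
      dl K * ((∏ p ∈ S, p : Ideal (𝓞 K)) * (k : FractionalIdeal (𝓞 K)⁰ K) ^ 2)) (α : (𝓞 K)ˣ) (T : Finset (Ideal (𝓞 K))) (hT : T ⊆ S) :
    ∃ (ι : Type u) (_ : Fintype ι) (f : ι → K) (g : ℂ),
      Trans f (ag ((∏ p ∈ T, p : Ideal (𝓞 K)) * (k : FractionalIdeal (𝓞 K)⁰ K))⁻¹)
        (ag (tw K * (k : FractionalIdeal (𝓞 K)⁰ K)⁻¹)) ∧
      ∑ i, ee (bform (c / 4) (f i) (f i)) = G2 c * g ∧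
      ∑ i, ee (bform (algebraMap (𝓞 K) K α * c / 4) (f i) (f i)) =
        G2 (algebraMap (𝓞 K) K α * c) * (((∏ p ∈ T, chi (α : 𝓞 K) p : ℤ) : ℂ) * g) := by
  classical
  have hk0' : (k : FractionalIdeal (𝓞 K)⁰ K) ≠ 0 := by
    rwa [Ne, FractionalIdeal.coeIdeal_eq_zero]
  induction T using Finset.induction_on with
  | empty =>
    refine ⟨𝓞 K ⧸ Ideal.span {(2 : 𝓞 K)}, fint2, fun w => algebraMap (𝓞 K) K (Quotient.out w), 1, ?_, ?_, ?_⟩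
    · have := trans_two k hk0 hk
      simpa using this
    · rw [mul_one]; rfl
    · simp; rfl
  | insert p T hpT ih =>
    obtain ⟨ι, _, f, g, hf, h1, h2⟩ := ih (fun x hx => hT (Finset.mem_insert_of_mem hx))
    obtain ⟨hpm, hp0, hp2⟩ := hS p (hT (Finset.mem_insert_self _ _))
    have hp0' : (p : FractionalIdeal (𝓞 K)⁰ K) ≠ 0 := by
      rwa [Ne, FractionalIdeal.coeIdeal_eq_zero]
    set t : Ideal (𝓞 K) := ∏ p ∈ T, p with ht
    have hnotle : ∀ T' : Finset (Ideal (𝓞 K)), T' ⊆ S → p ∉ T' → ¬ (∏ p ∈ T', p : Ideal (𝓞 K)) ≤ p := by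
      intro T' hT' hp' hle
      obtain ⟨q, hq, hqp⟩ := (Ideal.IsPrime.prod_le hpm.isPrime).1 hle
      have := (hS q (hT' hq)).1.eq_of_le hpm.ne_top hqp
      exact hp' (this ▸ hq)
    have ht0 : t ≠ ⊥ := by
      rw [ht, ← Ideal.zero_eq_bot, Finset.prod_ne_zero_iff]
      intro q hq
      exact (hS q (hT (Finset.mem_insert_of_mem hq))).2.1
    have ht0' : (t : FractionalIdeal (𝓞 K)⁰ K) ≠ 0 := by
      rwa [Ne, FractionalIdeal.coeIdeal_eq_zero]
    have hpt : IsCoprime p (Ideal.span {(2 : 𝓞 K)} * t) := by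
      rw [Ideal.isCoprime_iff_sup_eq]
      apply hpm.1.2
      rw [left_lt_sup]
      intro hle
      rcases hpm.isPrime.mul_le.1 hle with h | h
      · exact hp2 (h (Ideal.mem_span_singleton_self _))
      · exact hnotle T (fun x hx => hT (Finset.mem_insert_of_mem hx)) hpT h
    obtain ⟨x, J, hx0, hx, hJ, hJp, htr⟩ := trans_p p hp0 k hk0'
    obtain ⟨hl1, hl2⟩ := lattice_split p t hp0 ht0 hpt k hk0'
    have hfin : Finite (𝓞 K ⧸ p) := Ring.HasFiniteQuotients.finiteQuotient hp0
    letI : Fintype (𝓞 K ⧸ p) := Fintype.ofFinite _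
    set G : ℂ := ∑ a : 𝓞 K ⧸ p, ee (Algebra.trace ℚ K (c * x ^ 2 * (algebraMap (𝓞 K) K (Quotient.out a)) ^ 2)) with hG
    have horth := hf.orth htr hl1
    rw [hl2] at horth
    -- integrality
    obtain ⟨q, hq⟩ : ∃ q : Ideal (𝓞 K), (∏ p ∈ S, p : Ideal (𝓞 K)) = p * t * q := by
      refine ⟨∏ p ∈ S \ insert p T, p, ?_⟩
      rw [ht, ← Finset.prod_insert (f := fun p : Ideal (𝓞 K) => p) hpT, mul_comm, Finset.prod_sdiff hT]
    have hcm : c ∈ dl K * ((p * t * q : Ideal (𝓞 K)) * (k : FractionalIdeal (𝓞 K)⁰ K) ^ 2) := by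
      rw [← hq, ← hc]; exact FractionalIdeal.mem_spanSingleton_self _ _
    rw [FractionalIdeal.coeIdeal_mul, FractionalIdeal.coeIdeal_mul] at hcm
    have hIntl : ∀ c' ∈ dl K * ((p * t * q) * (k : FractionalIdeal (𝓞 K)⁰ K) ^ 2),
        ∀ i (a : 𝓞 K ⧸ p), ∃ z : ℤ, 2 * bform (c' / 4) (f i)
          (2 * (algebraMap (𝓞 K) K (Quotient.out a) * x)) = z := by
      intro c' hc' i a
      rw [bform_two]
      apply dl_tr
      apply mul_le_dl _ q
      have hfi : f i ∈ ((t : FractionalIdeal (𝓞 K)⁰ K) * k)⁻¹ := hf.mem i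
      exact mul_mem hc' (FractionalIdeal.mul_mem_mul hfi (smul_mem' (Quotient.out a) hx)) (by field_simp)
    refine ⟨ι × (𝓞 K ⧸ p), inferInstance, fun y => f y.1 + 2 * (algebraMap (𝓞 K) K (Quotient.out y.2) * x), g * G, ?_, ?_, ?_⟩
    · rw [Finset.prod_insert hpT]
      exact horth
    · rw [sum_split f _ c (hIntl c hcm), h1]
      simp only [bform_four]
      rw [← hG]; ring
    · rw [sum_split f _ _ (hIntl _ (smul_mem' _ hcm)), h2]
      simp only [bform_four]
      have hs'e : (∏ p ∈ S, p : Ideal (𝓞 K)) = p * ∏ p ∈ S.erase p, p := by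
        rw [Finset.mul_prod_erase S (fun p => p) (hT (Finset.mem_insert_self _ _))]
      rw [hs'e, FractionalIdeal.coeIdeal_mul] at hc
      rw [p_part p hp0 hp2 k hk0' _ (hnotle (S.erase p) (Finset.erase_subset _ _)
        (Finset.notMem_erase _ _)) c hc α (fun h => hpm.ne_top (Ideal.eq_top_of_isUnit_mem _ h α.isUnit)) x hx J hJ hJp,
        Finset.prod_insert hpT, ← hG]
      push_cast; ring

end recip3
end CRB

namespace CRB
set_option linter.unusedSectionVars false
set_option linter.style.haveILetI false
section recip4
universe u
variable {K : Type u} [Field K] [NumberField K]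

theorem exists_nat_mul (v : K) : ∃ N : ℕ, 0 < N ∧ ∃ a : 𝓞 K, algebraMap (𝓞 K) K a = N • v := by
  have hv : IsAlgebraic ℤ v := by
    have : IsAlgebraic ℚ v := Algebra.IsAlgebraic.isAlgebraic v
    exact (IsFractionRing.isAlgebraic_iff ℤ ℚ K).2 this
  obtain ⟨y, hy, hyi⟩ := hv.exists_integral_multiple
  refine ⟨y.natAbs, Int.natAbs_pos.2 hy, ?_⟩
  have h : IsIntegral ℤ (y.natAbs • v) := by
    rcases Int.natAbs_eq y with h | h
    · have : y.natAbs • v = y • v := by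
        conv_rhs => rw [h]
        rw [natCast_zsmul]
      rw [this]; exact hyi
    · have : y.natAbs • v = -(y • v) := by
        conv_rhs => rw [h]
        rw [neg_smul, natCast_zsmul, neg_neg]
      rw [this]; exact hyi.neg
  exact ⟨⟨_, h⟩, rfl⟩

theorem weil_lat (P k : Ideal (𝓞 K)) (hP0 : P ≠ ⊥) (hk0 : k ≠ ⊥) (c : K)
    (hc : FractionalIdeal.spanSingleton (𝓞 K)⁰ c =
      dl K * (P * (k : FractionalIdeal (𝓞 K)⁰ K) ^ 2))
    {n : ℕ} (e : Module.Basis (Fin n) ℚ K) (ho : ∀ i j, i ≠ j → bform (c / 4) (e i) (e j) = 0)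
    (hne : ∀ i, bform (c / 4) (e i) (e i) ≠ 0)
    {ι : Type*} [Fintype ι] (f : ι → K)
    (hf : Trans f (ag ((P : FractionalIdeal (𝓞 K)⁰ K) * k)⁻¹)
      (ag (tw K * (k : FractionalIdeal (𝓞 K)⁰ K)⁻¹))) :
    ∃ r : ℝ, 0 < r ∧ ∑ i, ee (bform (c / 4) (f i) (f i)) =
      r * ∏ i, kap (bform (c / 4) (e i) (e i)) := by
  have hP0' : (P : FractionalIdeal (𝓞 K)⁰ K) ≠ 0 := by
    rwa [Ne, FractionalIdeal.coeIdeal_eq_zero]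
  have hk0' : (k : FractionalIdeal (𝓞 K)⁰ K) ≠ 0 := by
    rwa [Ne, FractionalIdeal.coeIdeal_eq_zero]
  have htw1 : tw K ≤ 1 := by rw [tw_eq]; exact FractionalIdeal.coeIdeal_le_one
  have hd := dl_ne (K := K)
  have hcm : c ∈ dl K * (P * (k : FractionalIdeal (𝓞 K)⁰ K) ^ 2) :=
    hc ▸ FractionalIdeal.mem_spanSingleton_self _ _
  have hc0 : c ≠ 0 := by
    rintro rfl
    rw [FractionalIdeal.spanSingleton_zero] at hc
    exact mul_ne_zero hd (mul_ne_zero hP0' (pow_ne_zero 2 hk0')) hc.symm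
  refine weil_phase _ (bform_symm _) e ho hne _ _ (ag_mono ?_) ?_ ?_ ?_ f hf
  · have : tw K * (k : FractionalIdeal (𝓞 K)⁰ K)⁻¹ =
        ((P : FractionalIdeal (𝓞 K)⁰ K) * k)⁻¹ * P * tw K := by field_simp
    rw [this]
    calc ((P : FractionalIdeal (𝓞 K)⁰ K) * k)⁻¹ * P * tw K
        ≤ ((P : FractionalIdeal (𝓞 K)⁰ K) * k)⁻¹ * P * 1 := by gcongr
      _ ≤ ((P : FractionalIdeal (𝓞 K)⁰ K) * k)⁻¹ := by rw [mul_one]; exact mul_le_dl _ _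
  · intro u
    rw [mem_ag]
    constructor
    · intro hu v hv
      rw [mem_ag, mem_tw_mul] at hv
      obtain ⟨w, hw, rfl⟩ := hv
      rw [bform_two]
      apply dl_tr
      exact mul_mem hcm (FractionalIdeal.mul_mem_mul hu hw) (by field_simp)
    · intro h
      have h1 : c * u ∈ dl K * ((k : FractionalIdeal (𝓞 K)⁰ K)⁻¹)⁻¹ := by
        apply dl_of_tr _ (inv_ne_zero hk0')
        intro w hw
        obtain ⟨z, hz⟩ := h (2 * w) (by rw [mem_ag, two_mul_mem]; exact hw)
        rw [bform_two] at hz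
        exact ⟨z, by rw [← hz, mul_assoc]⟩
      have h2 : c⁻¹ ∈ (FractionalIdeal.spanSingleton (𝓞 K)⁰ c)⁻¹ := by
        rw [FractionalIdeal.spanSingleton_inv]
        exact FractionalIdeal.mem_spanSingleton_self _ _
      rw [hc] at h2
      have h3 : c⁻¹ * (c * u) ∈ ((P : FractionalIdeal (𝓞 K)⁰ K) * k)⁻¹ :=
        mul_mem h2 h1 (by field_simp)
      rwa [inv_mul_cancel_left₀ hc0] at h3
  · intro v hv
    rw [mem_ag, mem_tw_mul] at hv
    obtain ⟨w, hw, rfl⟩ := hv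
    have : bform (c / 4) (2 * w) (2 * w) = Algebra.trace ℚ K (c * (w * w)) := by
      rw [bform_apply]; congr 1; ring
    rw [this]
    apply dl_tr
    have : c * (w * w) ∈ dl K * P :=
      mul_mem hcm (FractionalIdeal.mul_mem_mul hw hw) (by field_simp)
    exact mul_le_dl _ _ this
  · intro v
    obtain ⟨N, hN, a, ha⟩ := exists_nat_mul v
    refine ⟨2 * N, by positivity, ?_⟩
    rw [mul_smul, ← ha, mem_ag, two_nsmul, ← two_mul, two_mul_mem,
      FractionalIdeal.mem_inv_iff hk0']
    intro y hy
    exact smul_mem' a (FractionalIdeal.coeIdeal_le_one hy)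

theorem span_unit (α : (𝓞 K)ˣ) :
    FractionalIdeal.spanSingleton (𝓞 K)⁰ (algebraMap (𝓞 K) K α) = 1 := by
  rw [← FractionalIdeal.coeIdeal_span_singleton, Ideal.span_singleton_eq_top.2 α.isUnit]
  simp

/-- Reciprocity. -/
theorem recip (S : Finset (Ideal (𝓞 K))) (hS : ∀ p ∈ S, p.IsMaximal ∧ p ≠ ⊥ ∧ (2 : 𝓞 K) ∉ p)
    (k : Ideal (𝓞 K)) (hk0 : k ≠ ⊥) (hk : IsCoprime k (Ideal.span {(2 : 𝓞 K)})) (c : K)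
    (hc : FractionalIdeal.spanSingleton (𝓞 K)⁰ c =
      dl K * ((∏ p ∈ S, p : Ideal (𝓞 K)) * (k : FractionalIdeal (𝓞 K)⁰ K) ^ 2))
    (α : (𝓞 K)ˣ) (hα : ∀ φ : K →+* ℝ, 0 < φ (algebraMap (𝓞 K) K α)) :
    G2 c ≠ 0 ∧ ∃ r : ℝ, 0 < r ∧
      G2 c = r * ((∏ p ∈ S, chi (α : 𝓞 K) p : ℤ) : ℂ) * G2 (algebraMap (𝓞 K) K α * c) := by
  have hP0 : (∏ p ∈ S, p : Ideal (𝓞 K)) ≠ ⊥ := by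
    rw [← Ideal.zero_eq_bot, Finset.prod_ne_zero_iff]
    intro q hq
    exact (hS q hq).2.1
  have hP0' : ((∏ p ∈ S, p : Ideal (𝓞 K)) : FractionalIdeal (𝓞 K)⁰ K) ≠ 0 := by
    rwa [Ne, FractionalIdeal.coeIdeal_eq_zero]
  have hk0' : (k : FractionalIdeal (𝓞 K)⁰ K) ≠ 0 := by
    rwa [Ne, FractionalIdeal.coeIdeal_eq_zero]
  have hc0 : c ≠ 0 := by
    rintro rfl
    rw [FractionalIdeal.spanSingleton_zero] at hc
    exact mul_ne_zero dl_ne (mul_ne_zero hP0' (pow_ne_zero 2 hk0')) hc.symm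
  have hα0 : algebraMap (𝓞 K) K α ≠ 0 := by simp
  obtain ⟨ι, _, f, g, hf, h1, h2⟩ := split_sum S hS k hk0 hk c hc α S subset_rfl
  obtain ⟨z, hz, e, e', ho, hne, ho', hne', hz1, hz2⟩ :=
    phase_eq (c / 4) (algebraMap (𝓞 K) K α) (div_ne_zero hc0 (by norm_num)) hα0 hα
  have hc' : FractionalIdeal.spanSingleton (𝓞 K)⁰ (algebraMap (𝓞 K) K α * c) =
      dl K * ((∏ p ∈ S, p : Ideal (𝓞 K)) * (k : FractionalIdeal (𝓞 K)⁰ K) ^ 2) := by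
    rw [← FractionalIdeal.spanSingleton_mul_spanSingleton, span_unit, one_mul, hc]
  rw [← mul_div_assoc] at ho' hne' hz2
  obtain ⟨r, hr, e1⟩ := weil_lat _ k hP0 hk0 c hc e ho hne f hf
  obtain ⟨r', hr', e2⟩ := weil_lat _ k hP0 hk0 _ hc' e' ho' hne' f hf
  rw [h1, hz1] at e1
  rw [h2, hz2] at e2
  have hr0 : (r : ℂ) ≠ 0 := by exact_mod_cast hr.ne'
  have hr0' : (r' : ℂ) ≠ 0 := by exact_mod_cast hr'.ne'
  have hne1 : G2 c * g ≠ 0 := by rw [e1]; exact mul_ne_zero hr0 hz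
  have hg : g ≠ 0 := right_ne_zero_of_mul hne1
  refine ⟨left_ne_zero_of_mul hne1, r / r', div_pos hr hr', ?_⟩
  apply mul_right_cancel₀ hg
  apply mul_left_cancel₀ hr0'
  push_cast
  push_cast at e2
  have e3 : (r' : ℂ) * (r / r' * (∏ i ∈ S, ((chi (α : 𝓞 K) i : ℤ) : ℂ)) *
      G2 (algebraMap (𝓞 K) K α * c) * g) = r * (∏ i ∈ S, ((chi (α : 𝓞 K) i : ℤ) : ℂ)) *
      G2 (algebraMap (𝓞 K) K α * c) * g := by field_simp
  rw [e3]
  linear_combination (r' : ℂ) * e1 - r * e2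

/-- `G2` only depends on `c` modulo `4 dl`. -/
theorem G2_congr {c c' d : K} (hd : d ∈ dl K) (h : c = c' + 4 * d) : G2 c = G2 c' := by
  unfold G2
  refine Finset.sum_congr rfl fun w _ => ?_
  set x := algebraMap (𝓞 K) K (Quotient.out w)
  have : bform (c / 4) x x = bform (c' / 4) x x + Algebra.trace ℚ K (x * (x * d)) := by
    rw [bform_apply, bform_apply, ← map_add, h]; congr 1; ring
  obtain ⟨z, hz⟩ := dl_tr (smul_mem' (Quotient.out w) (smul_mem' (Quotient.out w) hd))
  rw [this, hz, ee_add, ee_int, mul_one]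

theorem G2_sq {c : K} (hc : c ∈ dl K) (y : 𝓞 K)
    (hy : IsCoprime (Ideal.span {y}) (Ideal.span {(2 : 𝓞 K)})) :
    G2 (c * (algebraMap (𝓞 K) K y) ^ 2) = G2 c := by
  have htr := trans_two (K := K) ⊤ (by simp) (by rw [← Ideal.one_eq_top]; exact isCoprime_one_left)
  rw [FractionalIdeal.coeIdeal_top, inv_one, mul_one] at htr
  obtain ⟨a, ha, b, hb, hab⟩ := Ideal.isCoprime_iff_exists.1 hy
  obtain ⟨a, rfl⟩ := Ideal.mem_span_singleton'.1 ha
  obtain ⟨b, rfl⟩ := Ideal.mem_span_singleton'.1 hb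
  have hm : ∀ {v : K}, v ∈ tw K ↔ ∃ d : 𝓞 K, v = 2 * algebraMap (𝓞 K) K d := by
    intro v
    rw [← mul_one (tw K), mem_tw_mul]
    constructor
    · rintro ⟨w, hw, rfl⟩
      obtain ⟨d, rfl⟩ := (FractionalIdeal.mem_one_iff (𝓞 K)⁰).1 hw
      exact ⟨d, rfl⟩
    · rintro ⟨d, rfl⟩
      exact ⟨_, (FractionalIdeal.mem_one_iff (𝓞 K)⁰).2 ⟨d, rfl⟩, rfl⟩
  have hab' := congrArg (algebraMap (𝓞 K) K) hab
  rw [map_add, map_mul, map_mul, map_one, map_ofNat] at hab'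
  have htr2 : Trans (fun w : 𝓞 K ⧸ Ideal.span {(2 : 𝓞 K)} =>
      algebraMap (𝓞 K) K y * algebraMap (𝓞 K) K (Quotient.out w)) (ag (1 : FractionalIdeal (𝓞 K)⁰ K))
      (ag (tw K)) := by
    refine ⟨fun w => ?_, ?_, ?_⟩
    · exact (FractionalIdeal.mem_one_iff (𝓞 K)⁰).2 ⟨y * Quotient.out w, by rw [map_mul]⟩
    · intro v hv
      obtain ⟨d, rfl⟩ := (FractionalIdeal.mem_one_iff (𝓞 K)⁰).1 (mem_ag.1 hv)
      obtain ⟨i, hi⟩ := htr.surj (algebraMap (𝓞 K) K (a * d))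
        ((FractionalIdeal.mem_one_iff (𝓞 K)⁰).2 ⟨_, rfl⟩)
      refine ⟨i, ?_⟩
      obtain ⟨t, ht⟩ := hm.1 (mem_ag.1 hi)
      rw [mem_ag, hm]
      refine ⟨y * t + b * d, ?_⟩
      rw [map_add, map_mul, map_mul]
      rw [map_mul] at ht
      linear_combination algebraMap (𝓞 K) K y * ht - algebraMap (𝓞 K) K d * hab'
    · intro i j hij
      apply htr.inj
      obtain ⟨t, ht⟩ := hm.1 (mem_ag.1 hij)
      rw [mem_ag, hm]
      refine ⟨a * t + b * (Quotient.out i - Quotient.out j), ?_⟩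
      rw [map_add, map_mul, map_mul, map_sub]
      linear_combination algebraMap (𝓞 K) K a * ht - (algebraMap (𝓞 K) K (Quotient.out i) -
        algebraMap (𝓞 K) K (Quotient.out j)) * hab'
  have := htr2.sum_eq htr (fun v => ee (bform (c / 4) v v)) ?_
  · rw [G2, G2, ← this]
    refine Finset.sum_congr rfl fun w _ => ?_
    rw [bform_apply, bform_apply]; congr 2; ring
  · intro u hu v hv
    obtain ⟨x, rfl⟩ := (FractionalIdeal.mem_one_iff (𝓞 K)⁰).1 (mem_ag.1 hu)
    obtain ⟨d, rfl⟩ := hm.1 (mem_ag.1 hv)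
    have : bform (c / 4) (algebraMap (𝓞 K) K x + 2 * algebraMap (𝓞 K) K d)
        (algebraMap (𝓞 K) K x + 2 * algebraMap (𝓞 K) K d) =
        bform (c / 4) (algebraMap (𝓞 K) K x) (algebraMap (𝓞 K) K x) +
          Algebra.trace ℚ K (algebraMap (𝓞 K) K (d * x + d ^ 2) * c) := by
      rw [bform_apply, bform_apply, ← map_add]; congr 1
      rw [map_add, map_mul, map_pow]; ring
    obtain ⟨z, hz⟩ := dl_tr (smul_mem' (d * x + d ^ 2) hc)
    rw [this, hz, ee_add, ee_int, mul_one]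

end recip4
end CRB

namespace CRB
set_option linter.unusedSectionVars false
set_option linter.style.haveILetI false
section recip5
universe u
variable {K : Type u} [Field K] [NumberField K]

theorem two_not_unit : ¬ IsUnit (2 : 𝓞 K) := by
  intro h
  have h1 : IsUnit (algebraMap ℤ (𝓞 K) 2) := by simpa using h
  have h2 := h1.map (Algebra.norm ℤ)
  rw [Algebra.norm_algebraMap, Int.isUnit_iff] at h2
  have h3 : 0 < Module.finrank ℤ (𝓞 K) := by
    rw [RingOfIntegers.rank]; exact Module.finrank_pos
  have h4 : (2 : ℤ) ∣ 2 ^ Module.finrank ℤ (𝓞 K) := dvd_pow_self 2 h3.ne'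
  omega

/-- Ideals prime to 2. -/
def odd (I : Ideal (𝓞 K)) : Prop := IsCoprime I (Ideal.span {(2 : 𝓞 K)})

theorem odd.ne {I : Ideal (𝓞 K)} (h : odd I) : I ≠ ⊥ := by
  rintro rfl
  have := Ideal.isCoprime_iff_sup_eq.1 h
  rw [bot_sup_eq, Ideal.span_singleton_eq_top] at this
  exact two_not_unit this

theorem odd.two {p : Ideal (𝓞 K)} (h : odd p) (hp : p ≠ ⊤) : (2 : 𝓞 K) ∉ p := by
  intro h2
  apply hp
  rw [← Ideal.isCoprime_iff_sup_eq.1 h]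
  exact (sup_eq_left.2 ((Ideal.span_singleton_le_iff_mem p).2 h2)).symm

theorem odd_of {p : Ideal (𝓞 K)} (hp : p.IsMaximal) (h : (2 : 𝓞 K) ∉ p) : odd p := by
  unfold odd
  rw [Ideal.isCoprime_iff_sup_eq]
  apply hp.1.2
  rw [left_lt_sup]
  intro hle
  exact h (hle (Ideal.mem_span_singleton_self _))

theorem odd_mul {I J : Ideal (𝓞 K)} : odd (I * J) ↔ odd I ∧ odd J := IsCoprime.mul_left_iff

theorem odd_span {x : 𝓞 K} : odd (Ideal.span {x}) ↔ IsCoprime x 2 :=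
  Ideal.isCoprime_span_singleton_iff _ _

theorem odd_one : odd (1 : Ideal (𝓞 K)) := isCoprime_one_left

open UniqueFactorizationMonoid in
/-- The quadratic character of `α` extended to ideals. -/
noncomputable def X (α : 𝓞 K) (I : Ideal (𝓞 K)) : ℤ := ((normalizedFactors I).map (chi α)).prod

theorem chi_sq (α : 𝓞 K) (p : Ideal (𝓞 K)) : chi α p = 1 ∨ chi α p = -1 := by
  unfold chi; split_ifs <;> simp

theorem X_mul (α : 𝓞 K) {I J : Ideal (𝓞 K)} (hI : I ≠ ⊥) (hJ : J ≠ ⊥) :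
    X α (I * J) = X α I * X α J := by
  unfold X
  rw [UniqueFactorizationMonoid.normalizedFactors_mul hI hJ, Multiset.map_add, Multiset.prod_add]

theorem X_one (α : 𝓞 K) : X α 1 = 1 := by
  rw [X, UniqueFactorizationMonoid.normalizedFactors_one]; rfl

theorem X_pm (α : 𝓞 K) (I : Ideal (𝓞 K)) : X α I = 1 ∨ X α I = -1 := by
  unfold X
  induction UniqueFactorizationMonoid.normalizedFactors I using Multiset.induction_on with
  | empty => simp
  | cons p s ih =>
    rw [Multiset.map_cons, Multiset.prod_cons]
    rcases chi_sq α p with h | h <;> rcases ih with h' | h' <;> simp [h, h']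

theorem X_self (α : 𝓞 K) (I : Ideal (𝓞 K)) : X α I * X α I = 1 := by
  rcases X_pm α I with h | h <;> simp [h]

theorem X_prime (α : 𝓞 K) {p : Ideal (𝓞 K)} (hp : Prime p) : X α p = chi α p := by
  unfold X
  rw [UniqueFactorizationMonoid.normalizedFactors_irreducible hp.irreducible]
  simp

theorem chi_mul (α β : (𝓞 K)ˣ) {p : Ideal (𝓞 K)} (hp : Prime p) :
    chi ((α : 𝓞 K) * (β : 𝓞 K)) p = chi (α : 𝓞 K) p * chi (β : 𝓞 K) p := by
  classical
  have hpp := Ideal.isPrime_of_prime hp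
  haveI hpm : p.IsMaximal := hpp.isMaximal hp.ne_zero
  have hfin : Finite (𝓞 K ⧸ p) := Ring.HasFiniteQuotients.finiteQuotient hp.ne_zero
  letI : Fintype (𝓞 K ⧸ p) := Fintype.ofFinite _
  have hu : ∀ γ : (𝓞 K)ˣ, (γ : 𝓞 K) ∉ p := fun γ h =>
    hpm.ne_top (Ideal.eq_top_of_isUnit_mem _ h γ.isUnit)
  rw [chi_eq _ p (hu α), chi_eq _ p (hu β), ← Units.val_mul, chi_eq _ p (hu (α * β)),
    Units.val_mul, map_mul, map_mul]

theorem X_mul_left (α β : (𝓞 K)ˣ) (I : Ideal (𝓞 K)) :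
    X ((α : 𝓞 K) * (β : 𝓞 K)) I = X (α : 𝓞 K) I * X (β : 𝓞 K) I := by
  unfold X
  rw [← Multiset.prod_map_mul]
  congr 1
  refine Multiset.map_congr rfl fun p hp => ?_
  exact chi_mul α β (UniqueFactorizationMonoid.prime_of_normalized_factor p hp)

theorem X_left_one (I : Ideal (𝓞 K)) : X (1 : 𝓞 K) I = 1 := by
  unfold X
  have : ∀ p : Ideal (𝓞 K), chi (1 : 𝓞 K) p = 1 := by
    intro p; unfold chi; rw [if_pos]; exact ⟨1, by simp⟩
  simp [this]

theorem exists_decomp (α : 𝓞 K) (J : Ideal (𝓞 K)) (hJ : odd J) :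
    ∃ (S : Finset (Ideal (𝓞 K))) (k : Ideal (𝓞 K)),
      (∀ p ∈ S, p.IsMaximal ∧ p ≠ ⊥ ∧ (2 : 𝓞 K) ∉ p) ∧ odd k ∧ J = (∏ p ∈ S, p) * k ^ 2 ∧
      X α J = ∏ p ∈ S, chi α p := by
  classical
  induction J using UniqueFactorizationMonoid.induction_on_prime with
  | h₁ => exact absurd rfl hJ.ne
  | h₂ x hx =>
    have : x = 1 := by rwa [Ideal.isUnit_iff, ← Ideal.one_eq_top] at hx
    subst this
    exact ⟨∅, 1, by simp, odd_one, by rw [Finset.prod_empty, one_pow, one_mul], by rw [X_one, Finset.prod_empty]⟩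
  | h₃ a p ha hp ih =>
    obtain ⟨hop, hoa⟩ := odd_mul.1 hJ
    obtain ⟨S, k, hS, hk, e1, e2⟩ := ih hoa
    have hpp := Ideal.isPrime_of_prime hp
    have hpm : p.IsMaximal := hpp.isMaximal hp.ne_zero
    have hX : X α (p * a) = chi α p * X α a := by rw [X_mul α hp.ne_zero ha, X_prime α hp]
    by_cases hpS : p ∈ S
    · refine ⟨S.erase p, p * k, fun q hq => hS q (Finset.mem_of_mem_erase hq), odd_mul.2 ⟨hop, hk⟩, ?_, ?_⟩
      · rw [e1, ← Finset.mul_prod_erase S (fun p => p) hpS]; ring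
      · rw [hX, e2, ← Finset.mul_prod_erase S _ hpS, ← mul_assoc]
        rcases chi_sq α p with h | h <;> simp [h]
    · refine ⟨insert p S, k, ?_, hk, ?_, ?_⟩
      · intro q hq
        rcases Finset.mem_insert.1 hq with rfl | hq
        · exact ⟨hpm, hp.ne_zero, hop.two hpm.ne_top⟩
        · exact hS q hq
      · rw [Finset.prod_insert hpS, e1]; ring
      · rw [Finset.prod_insert hpS, hX, e2]

theorem odd_rep (b : FractionalIdeal (𝓞 K)⁰ K) (hb : b ≠ 0) :
    ∃ (x : K) (J : Ideal (𝓞 K)), x ≠ 0 ∧ odd J ∧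
      (J : FractionalIdeal (𝓞 K)⁰ K) = FractionalIdeal.spanSingleton _ x * b := by
  have htw1 : tw K ≤ 1 := by rw [tw_eq]; exact FractionalIdeal.coeIdeal_le_one
  obtain ⟨x, hx⟩ := IsDedekindDomain.exists_add_spanSingleton_mul_eq htw1 tw_ne hb
  have hle : FractionalIdeal.spanSingleton (𝓞 K)⁰ x * b ≤ 1 := by
    rw [← hx]; exact le_add_of_nonneg_left zero_le
  obtain ⟨J, hJ⟩ := FractionalIdeal.le_one_iff_exists_coeIdeal.1 hle
  have hodd : odd J := by
    unfold odd
    rw [Ideal.isCoprime_iff_add, add_comm]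
    rw [← hJ, tw_eq, ← FractionalIdeal.coeIdeal_sup, ← FractionalIdeal.coeIdeal_top] at hx
    rw [Ideal.one_eq_top, Submodule.add_eq_sup]
    exact FractionalIdeal.coeIdeal_injective hx
  refine ⟨x, J, ?_, hodd, hJ⟩
  rintro rfl
  rw [FractionalIdeal.spanSingleton_zero, zero_mul, FractionalIdeal.coeIdeal_eq_zero] at hJ
  exact hodd.ne hJ

theorem exists_c0 : ∃ (c : K) (f : Ideal (𝓞 K)), c ≠ 0 ∧ odd f ∧
    FractionalIdeal.spanSingleton (𝓞 K)⁰ c = dl K * f := by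
  obtain ⟨x, J, hx, hJ, h⟩ := odd_rep (dl K)⁻¹ (inv_ne_zero dl_ne)
  refine ⟨x, J, hx, hJ, ?_⟩
  have := dl_ne (K := K)
  rw [h]; field_simp

theorem recip_X (c : K) (f : Ideal (𝓞 K)) (hf : odd f)
    (hc : FractionalIdeal.spanSingleton (𝓞 K)⁰ c = dl K * f) (α : (𝓞 K)ˣ)
    (hα : ∀ φ : K →+* ℝ, 0 < φ (algebraMap (𝓞 K) K α)) (x : 𝓞 K) (hx : IsCoprime x 2) :
    G2 (algebraMap (𝓞 K) K x * c) ≠ 0 ∧ ∃ r : ℝ, 0 < r ∧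
      G2 (algebraMap (𝓞 K) K x * c) = r * ((X (α : 𝓞 K) (Ideal.span {x}) * X (α : 𝓞 K) f : ℤ) : ℂ) *
        G2 (algebraMap (𝓞 K) K α * (algebraMap (𝓞 K) K x * c)) := by
  have hxo := odd_span.2 hx
  obtain ⟨S, k, hS, hk, e1, e2⟩ := exists_decomp (α : 𝓞 K) _ (odd_mul.2 ⟨hxo, hf⟩)
  rw [← X_mul _ hxo.ne hf.ne, e2]
  refine recip S hS k hk.ne hk _ ?_ α hα
  rw [← FractionalIdeal.spanSingleton_mul_spanSingleton, hc, ← FractionalIdeal.coeIdeal_span_singleton,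
    mul_left_comm, ← FractionalIdeal.coeIdeal_mul, e1, FractionalIdeal.coeIdeal_mul,
    FractionalIdeal.coeIdeal_pow]

theorem pos_pm {a : ℤ} (h : a = 1 ∨ a = -1) {r r' : ℝ} (hr : 0 < r) (hr' : 0 < r')
    (e : (r : ℂ) * a = r') : a = 1 := by
  rcases h with h | h
  · exact h
  · exfalso
    have : r * (a : ℝ) = r' := by exact_mod_cast e
    rw [h] at this
    push_cast at this
    linarith

theorem mem_dl_of {c : K} {f : Ideal (𝓞 K)}
    (hc : FractionalIdeal.spanSingleton (𝓞 K)⁰ c = dl K * f) : c ∈ dl K :=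
  mul_le_dl _ f (hc ▸ FractionalIdeal.mem_spanSingleton_self _ _)

/-- First supplement: elements congruent to squares mod 4. -/
theorem X_elem_sq (α : (𝓞 K)ˣ) (hα : ∀ φ : K →+* ℝ, 0 < φ (algebraMap (𝓞 K) K α))
    (x y m : 𝓞 K) (hx : IsCoprime x 2) (h : x = y ^ 2 + 4 * m) :
    X (α : 𝓞 K) (Ideal.span {x}) = 1 := by
  obtain ⟨c, f, hc0, hf, hc⟩ := exists_c0 (K := K)
  have hcd := mem_dl_of hc
  have hy : IsCoprime y 2 := by
    obtain ⟨a, b, hab⟩ := hx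
    exact ⟨a * y, b + 2 * a * m, by rw [← hab, h]; ring⟩
  have key : ∀ d ∈ dl K, G2 (algebraMap (𝓞 K) K x * d) = G2 d := by
    intro d hd
    rw [← G2_sq hd y (odd_span.2 hy)]
    apply G2_congr (smul_mem' m hd)
    rw [h]; simp only [map_add, map_mul, map_pow, map_ofNat]; ring
  obtain ⟨hne, r, hr, e1⟩ := recip_X c f hf hc α hα x hx
  obtain ⟨hne', r', hr', e2⟩ := recip_X c f hf hc α hα 1 isCoprime_one_left
  rw [mul_left_comm, key c hcd, key _ (smul_mem' _ hcd)] at e1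
  rw [Ideal.span_singleton_one, ← Ideal.one_eq_top, X_one, map_one, one_mul, one_mul] at e2
  rw [map_one, one_mul] at hne'
  apply pos_pm (X_pm _ _) hr hr'
  have h3 : ((X (α : 𝓞 K) f : ℤ) : ℂ) * G2 (algebraMap (𝓞 K) K α * c) ≠ 0 := by
    intro h; apply hne'; rw [e2, mul_assoc, h, mul_zero]
  apply mul_right_cancel₀ h3
  have := e1.symm.trans e2
  push_cast at this
  linear_combination this

/-- Second supplement: units congruent to squares mod 4. -/
theorem X_unit_sq (α : (𝓞 K)ˣ) (hα : ∀ φ : K →+* ℝ, 0 < φ (algebraMap (𝓞 K) K α))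
    (y m : 𝓞 K) (h : (α : 𝓞 K) = y ^ 2 + 4 * m) (x : 𝓞 K) (hx : IsCoprime x 2) :
    X (α : 𝓞 K) (Ideal.span {x}) = 1 := by
  obtain ⟨c, f, hc0, hf, hc⟩ := exists_c0 (K := K)
  have hcd := mem_dl_of hc
  have hy : IsCoprime y 2 := by
    refine ⟨((α⁻¹ : (𝓞 K)ˣ) : 𝓞 K) * y, ((α⁻¹ : (𝓞 K)ˣ) : 𝓞 K) * (2 * m), ?_⟩
    have h1 := α.inv_mul
    rw [h] at h1
    linear_combination h1
  have key : ∀ d ∈ dl K, G2 (algebraMap (𝓞 K) K α * d) = G2 d := by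
    intro d hd
    rw [← G2_sq hd y (odd_span.2 hy)]
    apply G2_congr (smul_mem' m hd)
    rw [h]; simp only [map_add, map_mul, map_pow, map_ofNat]; ring
  have main : ∀ x : 𝓞 K, IsCoprime x 2 → X (α : 𝓞 K) (Ideal.span {x}) * X (α : 𝓞 K) f = 1 := by
    intro x hx
    obtain ⟨hne, r, hr, e1⟩ := recip_X c f hf hc α hα x hx
    rw [key _ (smul_mem' _ hcd)] at e1
    refine pos_pm ?_ hr one_pos ?_
    · rcases X_pm (α : 𝓞 K) (Ideal.span {x}) with h | h <;>
      rcases X_pm (α : 𝓞 K) f with h' | h' <;> simp [h, h']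
    · apply mul_right_cancel₀ hne
      rw [← e1]; simp
  have h1 := main 1 isCoprime_one_left
  rw [Ideal.span_singleton_one, ← Ideal.one_eq_top, X_one, one_mul] at h1
  have h2 := main x hx
  rwa [h1, mul_one] at h2

end recip5
end CRB

namespace CRB
set_option linter.unusedSectionVars false
set_option linter.style.haveILetI false
section zeta1
open Filter Topology ENNReal
variable {K : Type*} [Field K] [NumberField K]

/-- Weights of ideals in the Dedekind zeta function. -/
noncomputable def wt (s : ℝ) (I : Ideal (𝓞 K)) : ℝ≥0∞ :=
  open Classical in if I = ⊥ then 0 else ENNReal.ofReal ((Ideal.absNorm I : ℝ) ^ (-s))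

theorem wt_mul (s : ℝ) (I J : Ideal (𝓞 K)) : wt s (I * J) = wt s I * wt s J := by
  unfold wt
  by_cases hI : I = ⊥
  · simp [hI]
  by_cases hJ : J = ⊥
  · simp [hJ]
  have hIJ : I * J ≠ ⊥ := mul_ne_zero hI hJ
  rw [if_neg hI, if_neg hJ, if_neg hIJ, map_mul, Nat.cast_mul,
    Real.mul_rpow (Nat.cast_nonneg _) (Nat.cast_nonneg _),
    ENNReal.ofReal_mul (Real.rpow_nonneg (Nat.cast_nonneg _) _)]

theorem wt_prime {s : ℝ} (hs : 1 ≤ s) {p : Ideal (𝓞 K)} (hp : p ≠ ⊤) : wt s p ≤ 2⁻¹ := by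
  unfold wt
  split_ifs with h
  · exact zero_le
  have h2 : 2 ≤ Ideal.absNorm p := by
    have h0 : Ideal.absNorm p ≠ 0 := by rwa [Ne, Ideal.absNorm_eq_zero_iff]
    have h1 : Ideal.absNorm p ≠ 1 := by rwa [Ne, Ideal.absNorm_eq_one_iff]
    omega
  have h3 : (2 : ℝ) ≤ Ideal.absNorm p := by exact_mod_cast h2
  have h4 : (Ideal.absNorm p : ℝ) ^ (-s) ≤ 2⁻¹ := by
    rw [Real.rpow_neg (Nat.cast_nonneg _)]
    apply inv_anti₀ (by norm_num)
    calc (2 : ℝ) ≤ Ideal.absNorm p := h3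
      _ = (Ideal.absNorm p : ℝ) ^ (1 : ℝ) := (Real.rpow_one _).symm
      _ ≤ _ := Real.rpow_le_rpow_of_exponent_le (by linarith) hs
  calc ENNReal.ofReal ((Ideal.absNorm p : ℝ) ^ (-s)) ≤ ENNReal.ofReal 2⁻¹ := ENNReal.ofReal_le_ofReal h4
    _ = 2⁻¹ := by rw [ENNReal.ofReal_inv_of_pos (by norm_num)]; simp

theorem wt_tsum (s : ℝ) : ∑' I : Ideal (𝓞 K), wt s I =
    ∑' n : ℕ, ENNReal.ofReal (if n = 0 then 0 else
      (Nat.card {I : Ideal (𝓞 K) // Ideal.absNorm I = n} : ℝ) * (n : ℝ) ^ (-s)) := by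
  rw [← (Equiv.sigmaFiberEquiv (Ideal.absNorm (S := 𝓞 K))).tsum_eq, ENNReal.tsum_sigma']
  refine tsum_congr fun n => ?_
  have hfin : Finite {I : Ideal (𝓞 K) // Ideal.absNorm I = n} := Ideal.finite_setOfPred_absNorm_eq n
  letI := Fintype.ofFinite {I : Ideal (𝓞 K) // Ideal.absNorm I = n}
  split_ifs with hn
  · rw [ENNReal.ofReal_zero, ENNReal.tsum_eq_zero]
    rintro ⟨I, hI⟩
    rw [hn, Ideal.absNorm_eq_zero_iff] at hI
    simp [wt, Equiv.sigmaFiberEquiv, hI]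
  · rw [ENNReal.ofReal_mul (Nat.cast_nonneg _), ENNReal.ofReal_natCast]
    have : ∀ I : {I : Ideal (𝓞 K) // Ideal.absNorm I = n},
        wt s (Equiv.sigmaFiberEquiv (Ideal.absNorm (S := 𝓞 K)) ⟨n, I⟩) = ENNReal.ofReal ((n : ℝ) ^ (-s)) := by
      rintro ⟨I, hI⟩
      have h0 : I ≠ ⊥ := by
        rw [Ne, ← Ideal.absNorm_eq_zero_iff, hI]; exact hn
      simp [wt, Equiv.sigmaFiberEquiv, h0, hI]
    rw [tsum_congr this, tsum_fintype, Finset.sum_const, Finset.card_univ, nsmul_eq_mul,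
      Nat.card_eq_fintype_card]

theorem zeta_bounds (K : Type*) [Field K] [NumberField K] : ∃ ρ : ℝ, 0 < ρ ∧ ∀ᶠ s : ℝ in 𝓝[>] 1,
    ENNReal.ofReal (ρ / 2 / (s - 1)) ≤ ∑' I : Ideal (𝓞 K), wt s I ∧
    ∑' I : Ideal (𝓞 K), wt s I ≤ ENNReal.ofReal (2 * ρ / (s - 1)) := by
  set ρ := dedekindZeta_residue K with hρ
  have hpos : 0 < ρ := dedekindZeta_residue_pos K
  refine ⟨ρ, hpos, ?_⟩
  set b : ℝ → ℕ → ℝ := fun s n => if n = 0 then 0 else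
      (Nat.card {I : Ideal (𝓞 K) // Ideal.absNorm I = n} : ℝ) * (n : ℝ) ^ (-s) with hb
  have hb0 : ∀ s n, 0 ≤ b s n := by
    intro s n; simp only [hb]; split_ifs
    · exact le_rfl
    · positivity
  have hz : ∀ s : ℝ, dedekindZeta K s = ((∑' n, b s n : ℝ) : ℂ) := by
    intro s
    rw [dedekindZeta, LSeries, Complex.ofReal_tsum]
    refine tsum_congr fun n => ?_
    rw [LSeries.term_def]
    simp only [hb]
    split_ifs with h
    · simp
    · rw [Real.rpow_neg (Nat.cast_nonneg _)]
      push_cast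
      rw [Complex.ofReal_cpow (Nat.cast_nonneg _), div_eq_mul_inv]
      simp
  have ht : Tendsto (fun s : ℝ => (s - 1) * ∑' n, b s n) (𝓝[>] 1) (𝓝 ρ) := by
    have := tendsto_sub_one_mul_dedekindZeta_nhdsGT K
    rw [← Filter.tendsto_ofReal_iff]
    refine this.congr fun s => ?_
    rw [hz]; push_cast; rfl
  filter_upwards [ht.eventually (lt_mem_nhds (half_lt_self hpos)),
    ht.eventually (gt_mem_nhds (show ρ < 2 * ρ by linarith)), self_mem_nhdsWithin] with s h1 h2 hs
  have hs' : 0 < s - 1 := sub_pos.2 hs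
  have hsum : Summable (b s) := by
    by_contra hn
    rw [tsum_eq_zero_of_not_summable hn, mul_zero] at h1
    linarith
  have e : ∑' I : Ideal (𝓞 K), wt s I = ENNReal.ofReal (∑' n, b s n) := by
    rw [wt_tsum, ENNReal.ofReal_tsum_of_nonneg (hb0 s) hsum]
  rw [e]
  constructor
  · apply ENNReal.ofReal_le_ofReal
    rw [div_le_iff₀ hs']; linarith
  · apply ENNReal.ofReal_le_ofReal
    rw [le_div_iff₀ hs']; linarith

open Classical in
/-- The sum over ideals coprime to a set of primes. -/
noncomputable def Zc (s : ℝ) (E : Finset (Ideal (𝓞 K))) : ℝ≥0∞ :=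
  ∑' I : Ideal (𝓞 K), if ∀ p ∈ E, ¬ p ∣ I then wt s I else 0

theorem Zc_le (s : ℝ) (E : Finset (Ideal (𝓞 K))) : Zc s E ≤ ∑' I : Ideal (𝓞 K), wt s I := by
  unfold Zc
  apply ENNReal.tsum_le_tsum
  intro I
  split_ifs
  · exact le_rfl
  · exact zero_le

theorem Zc_insert {s : ℝ} (hs : 1 ≤ s) (hfin : ∑' I : Ideal (𝓞 K), wt s I ≠ ∞)
    (E : Finset (Ideal (𝓞 K))) (p : Ideal (𝓞 K)) (hp : Prime p) [DecidableEq (Ideal (𝓞 K))] :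
    Zc s E ≤ 2 * Zc s (insert p E) := by
  classical
  have hle : Zc s E ≤ Zc s (insert p E) + 2⁻¹ * Zc s E := by
    have h1 : Zc s E = Zc s (insert p E) +
        ∑' I : Ideal (𝓞 K), if p ∣ I then (if ∀ p ∈ E, ¬ p ∣ I then wt s I else 0) else 0 := by
      unfold Zc
      rw [← ENNReal.tsum_add]
      refine tsum_congr fun I => ?_
      by_cases hI : p ∣ I <;> simp [hI]
    have hinj : Function.Injective (fun J : Ideal (𝓞 K) => p * J) := mul_right_injective₀ hp.ne_zero
    have h2 : (∑' I : Ideal (𝓞 K), if p ∣ I then (if ∀ p ∈ E, ¬ p ∣ I then wt s I else 0) else 0) ≤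
        2⁻¹ * Zc s E := by
      rw [← hinj.tsum_eq (f := fun I : Ideal (𝓞 K) =>
        if p ∣ I then (if ∀ p ∈ E, ¬ p ∣ I then wt s I else 0) else 0)]
      · unfold Zc
        rw [← ENNReal.tsum_mul_left]
        apply ENNReal.tsum_le_tsum
        intro J
        simp only [dvd_mul_right, if_true]
        by_cases h : ∀ q ∈ E, ¬ q ∣ p * J
        · have h' : ∀ q ∈ E, ¬ q ∣ J := fun q hq hd => h q hq (hd.mul_left p)
          rw [if_pos h, if_pos h', wt_mul]
          gcongr
          exact wt_prime hs (fun h => hp.not_isUnit (by rw [Ideal.isUnit_iff]; exact h))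
        · rw [if_neg h]; exact zero_le
      · intro I hI
        by_contra hn
        apply hI
        simp only
        rw [if_neg]
        rintro ⟨J, rfl⟩
        exact hn ⟨J, rfl⟩
    calc Zc s E = _ := h1
      _ ≤ _ := by gcongr
  have hf : Zc s E ≠ ∞ := ne_top_of_le_ne_top hfin (Zc_le s E)
  have hhalf : 2⁻¹ * Zc s E + 2⁻¹ * Zc s E = Zc s E := by
    rw [← add_mul, ENNReal.inv_two_add_inv_two, one_mul]
  have h3 : 2⁻¹ * Zc s E ≤ Zc s (insert p E) := by
    have hf' : 2⁻¹ * Zc s E ≠ ∞ := ENNReal.mul_ne_top (by simp) hf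
    rw [← ENNReal.add_le_add_iff_right hf', hhalf]
    exact hle
  calc Zc s E = 2⁻¹ * Zc s E + 2⁻¹ * Zc s E := hhalf.symm
    _ ≤ Zc s (insert p E) + Zc s (insert p E) := by gcongr
    _ = _ := (two_mul _).symm

theorem Z_le_Zc {s : ℝ} (hs : 1 ≤ s) (hfin : ∑' I : Ideal (𝓞 K), wt s I ≠ ∞)
    (E : Finset (Ideal (𝓞 K))) (hE : ∀ p ∈ E, Prime p) :
    ∑' I : Ideal (𝓞 K), wt s I ≤ 2 ^ E.card * Zc s E := by
  classical
  induction E using Finset.induction_on with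
  | empty => simp [Zc]
  | insert p E hp ih =>
    rw [Finset.card_insert_of_notMem hp, pow_succ, mul_assoc]
    refine (ih fun q hq => hE q (Finset.mem_insert_of_mem hq)).trans ?_
    gcongr
    exact Zc_insert hs hfin E p (hE p (Finset.mem_insert_self _ _))

end zeta1
end CRB

namespace CRB
set_option linter.unusedSectionVars false
set_option linter.style.haveILetI false
section quad
variable {K : Type*} [Field K] [NumberField K]
variable {L : Type*} [Field L] [NumberField L] [Algebra K L]

theorem quad_split [IsGalois K L] (h2 : Module.finrank K L = 2) (θ : 𝓞 L) (α : 𝓞 K)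
    (hθ : θ ^ 2 = algebraMap (𝓞 K) (𝓞 L) α) (σ : L ≃ₐ[K] L) (hσ : σ (θ : L) = -(θ : L))
    (p : Ideal (𝓞 K)) (hp : p.IsPrime) (hp0 : p ≠ ⊥) (hp2 : (2 : 𝓞 K) ∉ p) (hpα : α ∉ p)
    (t : 𝓞 K) (ht : α - t ^ 2 ∈ p) :
    ∃ P1 P2 : Ideal (𝓞 L), P1 ≠ P2 ∧ Prime P1 ∧ Prime P2 ∧
      P1.comap (algebraMap (𝓞 K) (𝓞 L)) = p ∧ P2.comap (algebraMap (𝓞 K) (𝓞 L)) = p ∧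
      Ideal.absNorm P1 = Ideal.absNorm p ∧ Ideal.absNorm P2 = Ideal.absNorm p := by
  have hpm : p.IsMaximal := hp.isMaximal hp0
  obtain ⟨Q, hQm, hQ⟩ := Ideal.exists_maximal_ideal_liesOver_of_isIntegral (S := 𝓞 L) p
  have hQp : Q.IsPrime := hQm.isPrime
  let τ : 𝓞 L →ₐ[𝓞 K] 𝓞 L := (RingOfIntegers.mapAlgHom (σ : L →ₐ[K] L))
  have hτθ : τ θ = -θ := by
    apply RingOfIntegers.ext
    change σ (θ : L) = _
    rw [hσ]; simp
  have hQ' : (Q.comap τ).LiesOver p := by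
    constructor
    rw [hQ.over]
    ext x
    simp [Ideal.under]
  have hQ'p : (Q.comap τ).IsPrime := Ideal.comap_isPrime _ _
  have h2Q : ∀ x : 𝓞 K, algebraMap (𝓞 K) (𝓞 L) x ∈ Q ↔ x ∈ p := by
    intro x; rw [hQ.over]; rfl
  have htp : t ∉ p := fun h => hpα (by
    have := p.add_mem ht (p.mul_mem_left t h)
    have e : α - t ^ 2 + t * t = α := by ring
    rwa [e] at this)
  have hne : Q ≠ Q.comap τ := by
    intro hE
    have h1 : (θ - algebraMap (𝓞 K) (𝓞 L) t) * (θ + algebraMap (𝓞 K) (𝓞 L) t) ∈ Q := by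
      have := (h2Q _).2 ht
      rw [map_sub, map_pow, ← hθ] at this
      convert this using 1; ring
    have h2t : algebraMap (𝓞 K) (𝓞 L) (2 * t) ∈ Q := by
      rcases hQp.mem_or_mem h1 with h | h
      · have h' := h
        rw [hE, Ideal.mem_comap, map_sub, AlgHom.commutes, hτθ] at h'
        have := Q.neg_mem (Q.add_mem h h')
        convert this using 1
        rw [map_mul, map_ofNat]; ring
      · have h' := h
        rw [hE, Ideal.mem_comap, map_add, AlgHom.commutes, hτθ] at h'
        have := (Q.add_mem h h')
        convert this using 1
        rw [map_mul, map_ofNat]; ring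
    rcases hp.mem_or_mem ((h2Q _).1 h2t) with h | h
    · exact hp2 h
    · exact htp h
  have hcount := Ideal.ncard_primesOver_mul_ramificationIdxIn_mul_inertiaDegIn p (𝓞 L) Gal(L/K)
  rw [IsGalois.card_aut_eq_finrank, h2] at hcount
  have hfin : (Ideal.primesOver p (𝓞 L)).Finite := IsDedekindDomain.primesOver_finite p (𝓞 L)
  have hnc : 1 < (Ideal.primesOver p (𝓞 L)).ncard := by
    rw [Set.one_lt_ncard_iff hfin]
    exact ⟨Q, Q.comap τ, ⟨hQp, hQ⟩, ⟨hQ'p, hQ'⟩, hne⟩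
  have hf : Ideal.inertiaDegIn p (𝓞 L) = 1 := by
    have h3 : (Ideal.primesOver p (𝓞 L)).ncard = 2 :=
      le_antisymm (Nat.le_of_dvd (by norm_num) ⟨_, hcount.symm⟩) hnc
    rw [h3] at hcount
    have : Ideal.ramificationIdxIn p (𝓞 L) * Ideal.inertiaDegIn p (𝓞 L) = 1 := by omega
    exact Nat.eq_one_of_mul_eq_one_left this
  have hnorm : ∀ P : Ideal (𝓞 L), P.IsPrime → P.LiesOver p → Ideal.absNorm P = Ideal.absNorm p := by
    intro P hP hPp
    rw [Ideal.absNorm_eq_pow_inertiaDeg'_of_liesOver P p hp hp0]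
    rw [Ideal.inertiaDegIn_eq_inertiaDeg p P Gal(L/K)] at hf
    have hPm : P.IsMaximal := Ideal.IsMaximal.of_liesOver_isMaximal P p
    rw [Ideal.inertiaDeg'_eq_inertiaDeg, hf, pow_one]
  have hprime : ∀ P : Ideal (𝓞 L), P.IsPrime → P.LiesOver p → Prime P := by
    intro P hP hPp
    exact Ideal.prime_of_isPrime (Ideal.ne_bot_of_liesOver_of_ne_bot hp0 P) hP
  exact ⟨Q, Q.comap τ, hne, hprime _ hQp hQ, hprime _ hQ'p hQ', hQ.over.symm, hQ'.over.symm,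
    hnorm _ hQp hQ, hnorm _ hQ'p hQ'⟩


theorem wt_eq_of_norm {s : ℝ} {I : Ideal (𝓞 K)} {J : Ideal (𝓞 L)} (h : Ideal.absNorm J = Ideal.absNorm I) :
    wt s J = wt s I := by
  unfold wt
  have : I = ⊥ ↔ J = ⊥ := by rw [← Ideal.absNorm_eq_zero_iff, ← Ideal.absNorm_eq_zero_iff, h]
  simp only [this, h]

theorem wt_one (s : ℝ) : wt s (1 : Ideal (𝓞 K)) = 1 := by
  simp [wt]

theorem wt_multiset (s : ℝ) (m : Multiset (Ideal (𝓞 K))) : wt s m.prod = (m.map (wt s)).prod := by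
  induction m using Multiset.induction_on with
  | empty => rw [Multiset.prod_zero, wt_one]; simp
  | cons a m ih => simp [wt_mul, ih]

open UniqueFactorizationMonoid in
theorem pair_bound (S : Ideal (𝓞 K) → Prop) (P1 P2 : Ideal (𝓞 K) → Ideal (𝓞 L))
    (h : ∀ p, S p → P1 p ≠ P2 p ∧ Prime (P1 p) ∧ Prime (P2 p) ∧
      (P1 p).comap (algebraMap (𝓞 K) (𝓞 L)) = p ∧ (P2 p).comap (algebraMap (𝓞 K) (𝓞 L)) = p ∧
      Ideal.absNorm (P1 p) = Ideal.absNorm p ∧ Ideal.absNorm (P2 p) = Ideal.absNorm p) (s : ℝ) :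
    (∑' A : {A : Ideal (𝓞 K) // A ≠ ⊥ ∧ ∀ p ∈ normalizedFactors A, S p}, wt s A.1) *
    (∑' A : {A : Ideal (𝓞 K) // A ≠ ⊥ ∧ ∀ p ∈ normalizedFactors A, S p}, wt s A.1) ≤
      ∑' I : Ideal (𝓞 L), wt s I := by
  classical
  set T := {A : Ideal (𝓞 K) // A ≠ ⊥ ∧ ∀ p ∈ normalizedFactors A, S p} with hT
  let Φ : T × T → Ideal (𝓞 L) := fun x =>
    ((normalizedFactors x.1.1).map P1).prod * ((normalizedFactors x.2.1).map P2).prod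
  have hnf : ∀ x : T × T, normalizedFactors (Φ x) =
      (normalizedFactors x.1.1).map P1 + (normalizedFactors x.2.1).map P2 := by
    intro x
    simp only [Φ]
    rw [← Multiset.prod_add]
    apply normalizedFactors_prod_of_prime
    intro Q hQ
    rcases Multiset.mem_add.1 hQ with hQ | hQ
    · obtain ⟨p, hp, rfl⟩ := Multiset.mem_map.1 hQ
      exact (h p (x.1.2.2 p hp)).2.1
    · obtain ⟨p, hp, rfl⟩ := Multiset.mem_map.1 hQ
      exact (h p (x.2.2.2 p hp)).2.2.1
  let c : Ideal (𝓞 L) → Ideal (𝓞 K) := fun Q => Q.comap (algebraMap (𝓞 K) (𝓞 L))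
  have hr1 : ∀ x : T × T, normalizedFactors x.1.1 =
      ((normalizedFactors (Φ x)).filter (fun Q => Q = P1 (c Q))).map c := by
    intro x
    rw [hnf, Multiset.filter_add, Multiset.filter_eq_self.2, Multiset.filter_eq_nil.2, add_zero,
      Multiset.map_map]
    · conv_lhs => rw [← Multiset.map_id (normalizedFactors x.1.1)]
      refine Multiset.map_congr rfl fun p hp => ?_
      exact (h p (x.1.2.2 p hp)).2.2.2.1.symm
    · intro Q hQ
      obtain ⟨p, hp, rfl⟩ := Multiset.mem_map.1 hQ
      have := h p (x.2.2.2 p hp)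
      simp only [c, this.2.2.2.2.1]
      exact this.1.symm
    · intro Q hQ
      obtain ⟨p, hp, rfl⟩ := Multiset.mem_map.1 hQ
      have := h p (x.1.2.2 p hp)
      simp only [c, this.2.2.2.1]
  have hr2 : ∀ x : T × T, normalizedFactors x.2.1 =
      ((normalizedFactors (Φ x)).filter (fun Q => ¬ Q = P1 (c Q))).map c := by
    intro x
    rw [hnf, Multiset.filter_add, Multiset.filter_eq_nil.2, Multiset.filter_eq_self.2, zero_add,
      Multiset.map_map]
    · conv_lhs => rw [← Multiset.map_id (normalizedFactors x.2.1)]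
      refine Multiset.map_congr rfl fun p hp => ?_
      exact (h p (x.2.2.2 p hp)).2.2.2.2.1.symm
    · intro Q hQ
      obtain ⟨p, hp, rfl⟩ := Multiset.mem_map.1 hQ
      have := h p (x.2.2.2 p hp)
      simp only [c, this.2.2.2.2.1]
      exact this.1.symm
    · intro Q hQ
      obtain ⟨p, hp, rfl⟩ := Multiset.mem_map.1 hQ
      have := h p (x.1.2.2 p hp)
      simp only [c, this.2.2.2.1, not_true_eq_false, not_false_eq_true]
  have hprod : ∀ A : T, (normalizedFactors A.1).prod = A.1 := fun A =>
    associated_iff_eq.1 (prod_normalizedFactors A.2.1)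
  have hinj : Function.Injective Φ := by
    intro x y hxy
    have h1 : x.1.1 = y.1.1 := by
      rw [← hprod x.1, ← hprod y.1, hr1 x, hr1 y, hxy]
    have h2 : x.2.1 = y.2.1 := by
      rw [← hprod x.2, ← hprod y.2, hr2 x, hr2 y, hxy]
    exact Prod.ext (Subtype.ext h1) (Subtype.ext h2)
  have hw : ∀ x : T × T, wt s (Φ x) = wt s x.1.1 * wt s x.2.1 := by
    intro x
    simp only [Φ]
    rw [wt_mul, wt_multiset, wt_multiset, Multiset.map_map, Multiset.map_map]
    conv_rhs => rw [← hprod x.1, ← hprod x.2, wt_multiset, wt_multiset]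
    congr 2
    · refine Multiset.map_congr rfl fun p hp => ?_
      exact wt_eq_of_norm (h p (x.1.2.2 p hp)).2.2.2.2.2.1
    · refine Multiset.map_congr rfl fun p hp => ?_
      exact wt_eq_of_norm (h p (x.2.2.2 p hp)).2.2.2.2.2.2
  calc _ = ∑' x : T × T, wt s x.1.1 * wt s x.2.1 := by
        rw [ENNReal.tsum_prod', ← ENNReal.tsum_mul_right]
        refine tsum_congr fun a => ?_
        exact ENNReal.tsum_mul_left.symm
    _ = ∑' x : T × T, wt s (Φ x) := tsum_congr fun x => (hw x).symm
    _ ≤ _ := ENNReal.tsum_comp_le_tsum_of_injective hinj _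

end quad
end CRB

namespace CRB
set_option linter.unusedSectionVars false
set_option linter.style.haveILetI false
section nondeg
open Filter Topology ENNReal
variable {K : Type*} [Field K] [NumberField K]

open UniqueFactorizationMonoid in
theorem nondeg_aux (L : Type*) [Field L] [NumberField L] [Algebra K L] [IsGalois K L]
    (h2 : Module.finrank K L = 2) (θ : 𝓞 L) (α : (𝓞 K)ˣ)
    (hθ : θ ^ 2 = algebraMap (𝓞 K) (𝓞 L) α) (σ : L ≃ₐ[K] L) (hσ : σ (θ : L) = -(θ : L))
    (hall : ∀ p : Ideal (𝓞 K), p.IsPrime → p ≠ ⊥ → (2 : 𝓞 K) ∉ p → ∃ t : 𝓞 K, (α : 𝓞 K) - t ^ 2 ∈ p) :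
    False := by
  classical
  have hch : ∀ p : Ideal (𝓞 K), ∃ P : Ideal (𝓞 L) × Ideal (𝓞 L), (p.IsPrime ∧ p ≠ ⊥ ∧ (2 : 𝓞 K) ∉ p) →
      P.1 ≠ P.2 ∧ Prime P.1 ∧ Prime P.2 ∧
      P.1.comap (algebraMap (𝓞 K) (𝓞 L)) = p ∧ P.2.comap (algebraMap (𝓞 K) (𝓞 L)) = p ∧
      Ideal.absNorm P.1 = Ideal.absNorm p ∧ Ideal.absNorm P.2 = Ideal.absNorm p := by
    intro p
    by_cases hp : p.IsPrime ∧ p ≠ ⊥ ∧ (2 : 𝓞 K) ∉ p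
    · obtain ⟨t, ht⟩ := hall p hp.1 hp.2.1 hp.2.2
      obtain ⟨P1, P2, h⟩ := quad_split h2 θ α hθ σ hσ p hp.1 hp.2.1 hp.2.2
        (fun h => hp.1.ne_top (Ideal.eq_top_of_isUnit_mem _ h α.isUnit)) t ht
      exact ⟨(P1, P2), fun _ => h⟩
    · exact ⟨(⊥, ⊥), fun h => absurd h hp⟩
  choose P hP using hch
  let S : Ideal (𝓞 K) → Prop := fun p => p.IsPrime ∧ p ≠ ⊥ ∧ (2 : 𝓞 K) ∉ p
  have hpair := pair_bound S (fun p => (P p).1) (fun p => (P p).2) hP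
  have h20 : (Ideal.span {(2 : 𝓞 K)}) ≠ 0 := by
    rw [Ne, Ideal.zero_eq_bot, Ideal.span_singleton_eq_bot]; norm_num
  let E : Finset (Ideal (𝓞 K)) := (normalizedFactors (Ideal.span {(2 : 𝓞 K)})).toFinset
  have hE : ∀ p ∈ E, Prime p := fun p hp => prime_of_normalized_factor p (Multiset.mem_toFinset.1 hp)
  have hZc : ∀ s : ℝ, Zc s E ≤
      ∑' A : {A : Ideal (𝓞 K) // A ≠ ⊥ ∧ ∀ p ∈ normalizedFactors A, S p}, wt s A.1 := by
    intro s
    have := tsum_subtype  {A : Ideal (𝓞 K) | A ≠ ⊥ ∧ ∀ p ∈ normalizedFactors A, S p} (wt s)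
    refine le_trans ?_ this.ge
    unfold Zc
    apply ENNReal.tsum_le_tsum
    intro A
    by_cases hA0 : A = ⊥
    · simp [hA0, wt]
    split_ifs with hA
    · rw [Set.indicator_of_mem]
      refine ⟨hA0, fun p hp => ?_⟩
      have hpp := prime_of_normalized_factor p hp
      refine ⟨Ideal.isPrime_of_prime hpp, hpp.ne_zero, fun h2p => ?_⟩
      refine hA p ?_ (dvd_of_mem_normalizedFactors hp)
      rw [Multiset.mem_toFinset]
      rw [mem_normalizedFactors_iff' h20]
      refine ⟨hpp.irreducible, normalize_eq p, ?_⟩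
      rw [Ideal.dvd_span_singleton]
      exact h2p
    · exact zero_le
  obtain ⟨ρK, hρK, hK⟩ := zeta_bounds K
  obtain ⟨ρL, hρL, hL⟩ := zeta_bounds L
  set c : ℝ := ρK ^ 2 / 4 / (4 ^ E.card * (2 * ρL)) with hc
  have hcpos : 0 < c := by positivity
  have hsmall : ∀ᶠ s : ℝ in 𝓝[>] 1, s < 1 + c :=
    mem_nhdsWithin_of_mem_nhds (gt_mem_nhds (by linarith))
  obtain ⟨s, ⟨h1, h1'⟩, ⟨h3, h3'⟩, h4, h5⟩ := (hK.and (hL.and (hsmall.and self_mem_nhdsWithin))).exists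
  have hs : 0 < s - 1 := sub_pos.2 h5
  have hfin : ∑' I : Ideal (𝓞 K), wt s I ≠ ∞ := ne_top_of_le_ne_top ENNReal.ofReal_ne_top h1'
  have hle := (Z_le_Zc (le_of_lt h5) hfin E hE)
  have hmain : ENNReal.ofReal (ρK / 2 / (s - 1)) * ENNReal.ofReal (ρK / 2 / (s - 1)) ≤
      4 ^ E.card * ENNReal.ofReal (2 * ρL / (s - 1)) := by
    calc _ ≤ (2 ^ E.card * Zc s E) * (2 ^ E.card * Zc s E) := by
          gcongr <;> exact h1.trans hle
      _ = 4 ^ E.card * (Zc s E * Zc s E) := by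
          rw [show (4 : ℝ≥0∞) = 2 * 2 by norm_num, mul_pow]; ring
      _ ≤ _ := by
          gcongr
          exact (mul_le_mul' (hZc s) (hZc s)).trans ((hpair s).trans h3')
  rw [← ENNReal.ofReal_mul (by positivity), show (4 : ℝ≥0∞) ^ E.card = ENNReal.ofReal (4 ^ E.card) by
    rw [ENNReal.ofReal_pow (by norm_num)]; norm_num, ← ENNReal.ofReal_mul (by positivity),
    ENNReal.ofReal_le_ofReal_iff (by positivity)] at hmain
  have h6 : s - 1 < c := by linarith
  rw [hc, lt_div_iff₀ (by positivity)] at h6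
  have h7 := mul_le_mul_of_nonneg_right hmain (sq_nonneg (s - 1))
  have e1 : ρK / 2 / (s - 1) * (ρK / 2 / (s - 1)) * (s - 1) ^ 2 = ρK ^ 2 / 4 := by
    field_simp; ring
  have e2 : 4 ^ E.card * (2 * ρL / (s - 1)) * (s - 1) ^ 2 = (s - 1) * (4 ^ E.card * (2 * ρL)) := by
    field_simp
  rw [e1, e2] at h7
  linarith

open Polynomial in
/-- A unit that is a square modulo every odd prime is a square. -/
theorem nondeg (α : (𝓞 K)ˣ)
    (hall : ∀ p : Ideal (𝓞 K), p.IsPrime → p ≠ ⊥ → (2 : 𝓞 K) ∉ p → ∃ t : 𝓞 K, (α : 𝓞 K) - t ^ 2 ∈ p) :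
    ∃ β : (𝓞 K)ˣ, α = β ^ 2 := by
  by_contra hns
  set a : K := algebraMap (𝓞 K) K α with ha
  have hnsq : ∀ b : K, b ^ 2 ≠ a := by
    intro b hb
    obtain ⟨y, hy⟩ := IsIntegrallyClosed.exists_algebraMap_eq_of_isIntegral_pow (R := 𝓞 K) (x := b) (n := 2)
      (by norm_num) (by rw [hb]; exact isIntegral_algebraMap)
    have hy2 : y ^ 2 = (α : 𝓞 K) := by
      apply RingOfIntegers.coe_injective
      rw [map_pow, hy, hb]
    have hu : IsUnit y := by
      rw [← isUnit_pow_iff (n := 2) (by norm_num), hy2]; exact α.isUnit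
    apply hns
    refine ⟨hu.unit, Units.ext ?_⟩
    rw [Units.val_pow_eq_pow_val, IsUnit.unit_spec, hy2]
  have hirr : Irreducible (Polynomial.X ^ 2 - C a : K[X]) := X_pow_sub_C_irreducible_of_prime Nat.prime_two hnsq
  haveI : Fact (Irreducible (Polynomial.X ^ 2 - C a : K[X])) := ⟨hirr⟩
  let L := AdjoinRoot (Polynomial.X ^ 2 - C a : K[X])
  let pb : PowerBasis K L := AdjoinRoot.powerBasis hirr.ne_zero
  haveI : Module.Finite K L := pb.finite
  haveI : NumberField L := NumberField.of_module_finite K L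
  have h2 : Module.finrank K L = 2 := by
    rw [pb.finrank, AdjoinRoot.powerBasis_dim, natDegree_X_pow_sub_C]
  haveI : Algebra.IsQuadraticExtension K L := ⟨h2⟩
  haveI : IsGalois K L := inferInstance
  let r : L := AdjoinRoot.root _
  have hr : r ^ 2 = algebraMap K L a := by
    have := AdjoinRoot.eval₂_root (Polynomial.X ^ 2 - C a : K[X])
    simp only [eval₂_sub, eval₂_pow, eval₂_X, eval₂_C] at this
    exact sub_eq_zero.1 this
  have hr' : r ^ 2 = algebraMap (𝓞 L) L (algebraMap (𝓞 K) (𝓞 L) α) := by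
    rw [hr]
    exact (IsScalarTower.algebraMap_apply (𝓞 K) K L _).symm.trans
      (IsScalarTower.algebraMap_apply (𝓞 K) (𝓞 L) L _)
  obtain ⟨θ, hθ⟩ := IsIntegrallyClosed.exists_algebraMap_eq_of_isIntegral_pow (R := 𝓞 L) (x := r) (n := 2)
      (by norm_num) (by rw [hr']; exact isIntegral_algebraMap)
  have hθ2 : θ ^ 2 = algebraMap (𝓞 K) (𝓞 L) α := by
    apply RingOfIntegers.coe_injective
    rw [map_pow, hθ, hr']
  have hσ : ∃ σ : L ≃ₐ[K] L, σ r ≠ r := by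
    by_contra! hcon
    have := (IsGalois.mem_bot_iff_fixed (F := K) r).2 hcon
    obtain ⟨y, hy⟩ := IntermediateField.mem_bot.1 this
    apply hnsq y
    apply (algebraMap K L).injective
    rw [map_pow, hy, hr]
  obtain ⟨σ, hσ⟩ := hσ
  have hσ' : σ r = - r := by
    have : (σ r) ^ 2 = r ^ 2 := by rw [← map_pow, hr, AlgEquiv.commutes]
    rcases sq_eq_sq_iff_eq_or_eq_neg.1 this with h | h
    · exact absurd h hσ
    · exact h
  exact nondeg_aux L h2 θ α hθ2 σ (by have h := hσ'; rw [← hθ] at h; exact h) hall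

theorem nondeg_chi (α : (𝓞 K)ˣ) (hall : ∀ p : Ideal (𝓞 K), p.IsMaximal → odd p → chi (α : 𝓞 K) p = 1) :
    ∃ β : (𝓞 K)ˣ, α = β ^ 2 := by
  apply nondeg
  intro p hp hp0 h2
  have hm : p.IsMaximal := hp.isMaximal hp0
  have := hall p hm (odd_of hm h2)
  unfold chi at this
  split_ifs at this with h
  exact h

end nondeg
end CRB

namespace CRB
set_option linter.unusedSectionVars false
set_option linter.style.haveILetI false
section counting

theorem hom_finite (A : Type*) [CommGroup A] [Finite A] : Finite (A →* ℤˣ) :=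
  Finite.of_injective (fun f => (f : A → ℤˣ)) DFunLike.coe_injective

theorem card_hom_le (A : Type*) [CommGroup A] [Finite A] :
    Nat.card (A →* ℤˣ) ≤ Nat.card {c : A // c ^ 2 = 1} := by
  obtain ⟨e⟩ := CommGroup.monoidHom_mulEquiv_of_hasEnoughRootsOfUnity A ℂ
  let j : ℤˣ →* ℂˣ := Units.map (Int.castRingHom ℂ : ℤ →* ℂ)
  have hj : Function.Injective j := Units.map_injective (show Function.Injective (Int.castRingHom ℂ) from Int.cast_injective)
  let f : (A →* ℤˣ) → {c : A // c ^ 2 = 1} := fun χ => ⟨e (j.comp χ), by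
    rw [← map_pow, ← map_one e]
    congr 1
    ext a
    have : (χ a) ^ 2 = 1 := Int.units_sq _
    rw [MonoidHom.pow_apply, MonoidHom.comp_apply, ← map_pow, this]
    simp⟩
  apply Nat.card_le_card_of_injective f
  intro χ ψ h
  have h1 : j.comp χ = j.comp ψ := e.injective (Subtype.ext_iff.1 h)
  ext1 a
  exact hj (DFunLike.congr_fun h1 a)

theorem card_quot_sq (A : Type*) [CommGroup A] [Finite A] :
    Nat.card (A ⧸ (powMonoidHom 2 : A →* A).range) = Nat.card {c : A // c ^ 2 = 1} := by
  have h1 := Subgroup.index_ker (powMonoidHom 2 : A →* A)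
  have h2 := Subgroup.card_mul_index (powMonoidHom 2 : A →* A).ker
  have h3 := Subgroup.card_mul_index (powMonoidHom 2 : A →* A).range
  have h4 : Nat.card (powMonoidHom 2 : A →* A).ker = Nat.card {c : A // c ^ 2 = 1} := rfl
  have h5 : 0 < Nat.card (powMonoidHom 2 : A →* A).range := Nat.card_pos
  rw [h1, mul_comm] at h2
  rw [← h4]
  change (powMonoidHom 2 : A →* A).range.index = _
  exact Nat.eq_of_mul_eq_mul_left h5 (h3.trans h2.symm)

/-- Orthogonality count. -/
theorem orth_count (P U : Type*) [CommGroup P] [CommGroup U] [Finite U] (π : P →* U) (l : P →* (U →* ℤˣ))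
    (h : ∀ a b, l a (π b) = 1) :
    ((QuotientGroup.mk' (powMonoidHom 2 : U →* U).range).comp π).ker.index * l.ker.index ≤
      Nat.card {c : U // c ^ 2 = 1} := by
  set V := U ⧸ (powMonoidHom 2 : U →* U).range
  set π' : P →* V := (QuotientGroup.mk' (powMonoidHom 2 : U →* U).range).comp π with hπ'
  rw [← card_quot_sq U, ← Subgroup.card_mul_index π'.range, Subgroup.index_ker]
  apply Nat.mul_le_mul_left
  rw [Subgroup.index_ker]
  set H : Subgroup U := π'.range.comap (QuotientGroup.mk' (powMonoidHom 2 : U →* U).range) with hH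
  have hHi : H.index = π'.range.index := Subgroup.index_comap_of_surjective _ (QuotientGroup.mk'_surjective _)
  rw [← hHi]
  have hker : ∀ a, H ≤ (l a).ker := by
    intro a u hu
    rw [hH, Subgroup.mem_comap] at hu
    obtain ⟨b, hb⟩ := hu
    rw [hπ', MonoidHom.comp_apply, QuotientGroup.mk'_apply, QuotientGroup.mk'_apply, QuotientGroup.eq] at hb
    obtain ⟨c, hc⟩ := hb
    have hu' : u = π b * c ^ 2 := by
      rw [← eq_inv_mul_iff_mul_eq.1 (show c ^ 2 = (π b)⁻¹ * u from hc)]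
    rw [MonoidHom.mem_ker, hu', map_mul, h, map_pow, Int.units_sq, one_mul]
  haveI := hom_finite (U ⧸ H)
  let f : l.range → (U ⧸ H →* ℤˣ) := fun x => QuotientGroup.lift H x.1 (by
    obtain ⟨a, ha⟩ := x.2
    rw [← ha]; exact fun u hu => hker a hu)
  have hf : Function.Injective f := by
    intro x y hxy
    apply Subtype.ext
    ext1 u
    exact DFunLike.congr_fun hxy (QuotientGroup.mk u)
  calc Nat.card l.range ≤ Nat.card (U ⧸ H →* ℤˣ) := Nat.card_le_card_of_injective f hf
    _ ≤ _ := card_hom_le _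
    _ ≤ Nat.card (U ⧸ H) := Nat.card_le_card_of_injective _ Subtype.val_injective

end counting
end CRB

namespace CRB
set_option linter.unusedSectionVars false
set_option linter.style.haveILetI false
section counting2
variable {K : Type*} [Field K] [NumberField K]

/-- The ideal generated by 4. -/
noncomputable abbrev four (K : Type*) [Field K] [NumberField K] : Ideal (𝓞 K) := Ideal.span {(4 : 𝓞 K)}

theorem four_finite : Finite (𝓞 K ⧸ four K) := by
  apply Ideal.finiteQuotientOfFreeOfNeBot
  rw [Ne, Ideal.span_singleton_eq_bot]; norm_num

theorem coprime_of_unit {x : 𝓞 K} (h : IsUnit (Ideal.Quotient.mk (four K) x)) : IsCoprime x 2 := by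
  obtain ⟨v, hv⟩ := h.exists_right_inv
  obtain ⟨y, rfl⟩ := Ideal.Quotient.mk_surjective v
  rw [← map_mul, ← map_one (Ideal.Quotient.mk (four K)), Ideal.Quotient.eq, Ideal.mem_span_singleton] at hv
  obtain ⟨m, hm⟩ := hv
  exact ⟨y, -2 * m, by linear_combination hm⟩

theorem X_congr (α : (𝓞 K)ˣ) (hα : ∀ φ : K →+* ℝ, 0 < φ (algebraMap (𝓞 K) K α)) {x y : 𝓞 K}
    (hx : IsCoprime x 2) (hy : IsCoprime y 2) (h : Ideal.Quotient.mk (four K) x = Ideal.Quotient.mk (four K) y) :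
    X (α : 𝓞 K) (Ideal.span {x}) = X (α : 𝓞 K) (Ideal.span {y}) := by
  rw [Ideal.Quotient.eq, Ideal.mem_span_singleton] at h
  obtain ⟨m, hm⟩ := h
  have h1 := X_elem_sq α hα (x * y) y (m * y) (hx.mul_left hy) (by linear_combination y * hm)
  rw [← Ideal.span_singleton_mul_span_singleton, X_mul _ (odd_span.2 hx).ne (odd_span.2 hy).ne] at h1
  have h2 := X_self (α : 𝓞 K) (Ideal.span {y})
  calc _ = X (α : 𝓞 K) (Ideal.span {x}) * (X (α : 𝓞 K) (Ideal.span {y}) * X (α : 𝓞 K) (Ideal.span {y})) := by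
        rw [h2, mul_one]
    _ = _ := by rw [← mul_assoc, h1, one_mul]

/-- The unit version of `X`. -/
noncomputable def Xu (α : 𝓞 K) (I : Ideal (𝓞 K)) : ℤˣ := ⟨X α I, X α I, X_self α I, X_self α I⟩

theorem Xu_eq_one {α : 𝓞 K} {I : Ideal (𝓞 K)} : Xu α I = 1 ↔ X α I = 1 := by
  rw [Units.ext_iff]; rfl

theorem Xu_eq_iff {α β : 𝓞 K} {I J : Ideal (𝓞 K)} : Xu α I = Xu β J ↔ X α I = X β J := by
  rw [Units.ext_iff]; rfl

theorem Xu_mul (α : 𝓞 K) {I J : Ideal (𝓞 K)} (hI : I ≠ ⊥) (hJ : J ≠ ⊥) :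
    Xu α (I * J) = Xu α I * Xu α J := Units.ext (X_mul α hI hJ)

theorem Xu_mul_left (α β : (𝓞 K)ˣ) (I : Ideal (𝓞 K)) :
    Xu ((α * β : (𝓞 K)ˣ) : 𝓞 K) I = Xu (α : 𝓞 K) I * Xu (β : 𝓞 K) I := Units.ext (X_mul_left α β I)

/-- A representative of a unit modulo 4. -/
noncomputable def rep4 (u : (𝓞 K ⧸ four K)ˣ) : 𝓞 K := (Ideal.Quotient.mk_surjective (u : 𝓞 K ⧸ four K)).choose

theorem rep4_spec (u : (𝓞 K ⧸ four K)ˣ) : Ideal.Quotient.mk (four K) (rep4 u) = u :=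
  (Ideal.Quotient.mk_surjective (u : 𝓞 K ⧸ four K)).choose_spec

theorem rep4_coprime (u : (𝓞 K ⧸ four K)ˣ) : IsCoprime (rep4 u) 2 :=
  coprime_of_unit (by rw [rep4_spec]; exact u.isUnit)

/-- The pairing with units modulo 4. -/
noncomputable def lam (P : Subgroup (𝓞 K)ˣ)
    (hP : ∀ α ∈ P, ∀ φ : K →+* ℝ, 0 < φ (algebraMap (𝓞 K) K α)) : P →* ((𝓞 K ⧸ four K)ˣ →* ℤˣ) where
  toFun α :=
    { toFun := fun u => Xu ((α : (𝓞 K)ˣ) : 𝓞 K) (Ideal.span {rep4 u})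
      map_one' := by
        rw [Xu_eq_one, X_congr α.1 (hP _ α.2) (rep4_coprime (K := K) 1) (isCoprime_one_left (R := 𝓞 K))
          (by rw [rep4_spec, Units.val_one, map_one])]
        rw [Ideal.span_singleton_one, ← Ideal.one_eq_top]
        exact X_one ((α : (𝓞 K)ˣ) : 𝓞 K)
      map_mul' := by
        intro u v
        rw [← Xu_mul _ (odd_span.2 (rep4_coprime u)).ne (odd_span.2 (rep4_coprime v)).ne,
          Ideal.span_singleton_mul_span_singleton, Xu_eq_iff]
        exact X_congr α.1 (hP _ α.2) (rep4_coprime _) ((rep4_coprime _).mul_left (rep4_coprime _))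
          (by rw [map_mul, rep4_spec, rep4_spec, rep4_spec, Units.val_mul]) }
  map_one' := by
    ext u
    exact X_left_one _
  map_mul' := by
    intro α β
    ext1 u
    exact Xu_mul_left _ _ _

theorem lam_ker {P : Subgroup (𝓞 K)ˣ}
    {hP : ∀ α ∈ P, ∀ φ : K →+* ℝ, 0 < φ (algebraMap (𝓞 K) K α)} (α : P) :
    α ∈ (lam P hP).ker ↔ ∀ x : 𝓞 K, IsCoprime x 2 → X ((α : (𝓞 K)ˣ) : 𝓞 K) (Ideal.span {x}) = 1 := by
  rw [MonoidHom.mem_ker]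
  constructor
  · intro h x hx
    have h4 : IsCoprime x 4 := by
      have := hx.mul_right hx
      norm_num at this
      exact this
    obtain ⟨a, b, hab⟩ := h4
    have hu : Ideal.Quotient.mk (four K) x * Ideal.Quotient.mk (four K) a = 1 := by
      rw [← map_mul, ← map_one (Ideal.Quotient.mk (four K)), Ideal.Quotient.eq, Ideal.mem_span_singleton]
      exact ⟨-b, by linear_combination hab⟩
    let u : (𝓞 K ⧸ four K)ˣ := Units.mkOfMulEqOne _ _ hu
    have h1 := DFunLike.congr_fun h u
    have h2 : X ((α : (𝓞 K)ˣ) : 𝓞 K) (Ideal.span {rep4 u}) = 1 := Xu_eq_one.1 h1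
    rw [← h2]
    exact X_congr α.1 (hP _ α.2) hx (rep4_coprime u) (by rw [rep4_spec]; rfl)
  · intro h
    ext1 u
    exact Xu_eq_one.2 (h _ (rep4_coprime u))

theorem card_two_tors : Nat.card {u : (𝓞 K ⧸ four K)ˣ // u ^ 2 = 1} ≤ 2 ^ Module.finrank ℚ K := by
  have h2 : Nat.card (𝓞 K ⧸ Ideal.span {(2 : 𝓞 K)}) = 2 ^ Module.finrank ℚ K := by
    rw [← Submodule.cardQuot_apply, ← Ideal.absNorm_apply, Ideal.absNorm_span_singleton]
    have := Algebra.norm_algebraMap_of_basis (RingOfIntegers.basis K) 2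
    rw [map_ofNat] at this
    rw [this, Int.natAbs_pow, ← Module.finrank_eq_card_basis (RingOfIntegers.basis K),
      RingOfIntegers.rank]
    rfl
  haveI : Finite (𝓞 K ⧸ Ideal.span {(2 : 𝓞 K)}) := by
    apply Ideal.finiteQuotientOfFreeOfNeBot
    rw [Ne, Ideal.span_singleton_eq_bot]; norm_num
  have hz : ∀ u : {u : (𝓞 K ⧸ four K)ˣ // u ^ 2 = 1}, ∃ z : 𝓞 K, rep4 u.1 = 1 + 2 * z := by
    rintro ⟨u, hu⟩
    have h1 : Ideal.Quotient.mk (four K) (rep4 u ^ 2) = Ideal.Quotient.mk (four K) 1 := by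
      rw [map_pow, rep4_spec, ← Units.val_pow_eq_pow_val, hu, map_one, Units.val_one]
    rw [Ideal.Quotient.eq, Ideal.mem_span_singleton] at h1
    obtain ⟨m, hm⟩ := h1
    set x := rep4 u
    let w : K := (algebraMap (𝓞 K) K x - 1) / 2
    have hm' : (algebraMap (𝓞 K) K x) ^ 2 - 1 = 4 * algebraMap (𝓞 K) K m := by
      have := congrArg (algebraMap (𝓞 K) K) hm
      rw [map_sub, map_pow, map_one, map_mul, map_ofNat] at this
      exact this
    have hIntl : IsIntegral (𝓞 K) w := by
      refine ⟨Polynomial.X ^ 2 + (Polynomial.X - Polynomial.C m), ?_, ?_⟩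
      · apply Polynomial.monic_X_pow_add
        exact lt_of_le_of_lt (Polynomial.degree_X_sub_C_le m) (by norm_num)
      · simp only [Polynomial.eval₂_add, Polynomial.eval₂_sub, Polynomial.eval₂_pow, Polynomial.eval₂_X,
          Polynomial.eval₂_C, w]
        linear_combination hm' / 4
    obtain ⟨z, hz⟩ := IsIntegrallyClosed.isIntegral_iff.1 hIntl
    refine ⟨z, ?_⟩
    apply RingOfIntegers.coe_injective
    rw [map_add, map_mul, map_one, map_ofNat, hz]
    simp only [w]
    ring
  choose z hz using hz
  rw [← h2]
  apply Nat.card_le_card_of_injective (fun u => Ideal.Quotient.mk (Ideal.span {(2 : 𝓞 K)}) (z u))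
  intro u v huv
  simp only at huv
  rw [Ideal.Quotient.eq, Ideal.mem_span_singleton] at huv
  obtain ⟨m, hm⟩ := huv
  apply Subtype.ext
  apply Units.ext
  rw [← rep4_spec, ← rep4_spec, Ideal.Quotient.eq, Ideal.mem_span_singleton, hz, hz]
  exact ⟨m, by linear_combination 2 * hm⟩

/-! The class group character. -/

theorem exists_odd_rep (c : ClassGroup (𝓞 K)) :
    ∃ J : (Ideal (𝓞 K))⁰, odd (J : Ideal (𝓞 K)) ∧ ClassGroup.mk0 J = c := by
  obtain ⟨I, rfl⟩ := ClassGroup.mk0_surjective c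
  have hI : (I : Ideal (𝓞 K)) ≠ 0 := nonZeroDivisors.ne_zero I.2
  obtain ⟨x, J, hx, hJ, h⟩ := odd_rep ((I : Ideal (𝓞 K)) : FractionalIdeal (𝓞 K)⁰ K)
    (by rwa [Ne, FractionalIdeal.coeIdeal_eq_zero])
  refine ⟨⟨J, mem_nonZeroDivisors_of_ne_zero hJ.ne⟩, hJ, ?_⟩
  rw [ClassGroup.mk0_eq_mk0_iff]
  obtain ⟨a, b, hb, hab⟩ := IsFractionRing.div_surjective (A := 𝓞 K) x
  have hb0 : b ≠ 0 := nonZeroDivisors.ne_zero hb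
  have hbK : algebraMap (𝓞 K) K b ≠ 0 := by simpa using hb0
  have ha0 : a ≠ 0 := by
    rintro rfl
    apply hx; rw [← hab]; simp
  refine ⟨b, a, hb0, ha0, ?_⟩
  apply FractionalIdeal.coeIdeal_injective (K := K)
  simp only
  rw [FractionalIdeal.coeIdeal_mul, FractionalIdeal.coeIdeal_mul, h, FractionalIdeal.coeIdeal_span_singleton,
    FractionalIdeal.coeIdeal_span_singleton, ← mul_assoc, FractionalIdeal.spanSingleton_mul_spanSingleton,
    ← hab, mul_div_cancel₀ _ hbK]

theorem X_class {α : 𝓞 K} (hα : ∀ x : 𝓞 K, IsCoprime x 2 → X α (Ideal.span {x}) = 1)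
    {I J : (Ideal (𝓞 K))⁰} (hI : odd (I : Ideal (𝓞 K))) (hJ : odd (J : Ideal (𝓞 K)))
    (h : ClassGroup.mk0 I = ClassGroup.mk0 J) : X α I = X α J := by
  obtain ⟨M, hM, hMc⟩ := exists_odd_rep (ClassGroup.mk0 I)⁻¹
  have key : ∀ N : (Ideal (𝓞 K))⁰, odd (N : Ideal (𝓞 K)) → ClassGroup.mk0 N = ClassGroup.mk0 I →
      X α N * X α M = 1 := by
    intro N hN hNI
    have h1 : ClassGroup.mk0 (N * M) = 1 := by rw [map_mul, hNI, hMc, mul_inv_cancel]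
    have h2 := (ClassGroup.mk0_eq_one_iff (N * M).2).1 h1
    obtain ⟨x, hx⟩ := h2.principal
    have hx' : (N : Ideal (𝓞 K)) * (M : Ideal (𝓞 K)) = Ideal.span {x} := hx
    rw [← X_mul α hN.ne hM.ne, hx']
    apply hα
    rw [← odd_span, ← hx', odd_mul]
    exact ⟨hN, hM⟩
  have k1 := key I hI rfl
  have k2 := key J hJ h.symm
  have h2 := X_self α (M : Ideal (𝓞 K))
  calc X α I = X α I * (X α M * X α M) := by rw [h2, mul_one]
    _ = X α J * (X α M * X α M) := by rw [← mul_assoc, ← mul_assoc, k1, k2]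
    _ = _ := by rw [h2, mul_one]

/-- An odd representative of an ideal class. -/
noncomputable def repC (c : ClassGroup (𝓞 K)) : (Ideal (𝓞 K))⁰ := (exists_odd_rep c).choose

theorem repC_odd (c : ClassGroup (𝓞 K)) : odd (repC c : Ideal (𝓞 K)) := (exists_odd_rep c).choose_spec.1

theorem repC_spec (c : ClassGroup (𝓞 K)) : ClassGroup.mk0 (repC c) = c := (exists_odd_rep c).choose_spec.2

/-- The pairing with the class group. -/
noncomputable def kapC (D : Subgroup (𝓞 K)ˣ)
    (hD : ∀ α ∈ D, ∀ x : 𝓞 K, IsCoprime x 2 → X (α : 𝓞 K) (Ideal.span {x}) = 1) :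
    D →* (ClassGroup (𝓞 K) →* ℤˣ) where
  toFun α :=
    { toFun := fun c => Xu ((α : (𝓞 K)ˣ) : 𝓞 K) (repC c)
      map_one' := by
        rw [Xu_eq_one, X_class (hD _ α.2) (J := 1) (repC_odd 1) odd_one (by rw [repC_spec, map_one])]
        exact X_one _
      map_mul' := by
        intro c d
        rw [← Xu_mul _ (repC_odd c).ne (repC_odd d).ne, Xu_eq_iff]
        exact X_class (hD _ α.2) (J := repC c * repC d) (repC_odd _) (odd_mul.2 ⟨repC_odd _, repC_odd _⟩)
          (by rw [map_mul, repC_spec, repC_spec, repC_spec]) }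
  map_one' := by
    ext c
    exact X_left_one _
  map_mul' := by
    intro α β
    ext1 c
    exact Xu_mul_left _ _ _

theorem kapC_ker {D : Subgroup (𝓞 K)ˣ}
    {hD : ∀ α ∈ D, ∀ x : 𝓞 K, IsCoprime x 2 → X (α : 𝓞 K) (Ideal.span {x}) = 1} (α : D)
    (h : α ∈ (kapC D hD).ker) : ∃ β : (𝓞 K)ˣ, (α : (𝓞 K)ˣ) = β ^ 2 := by
  apply nondeg_chi
  intro p hp hpo
  have hp0 : p ≠ ⊥ := hpo.ne
  have hpp : Prime p := Ideal.prime_of_isPrime hp0 hp.isPrime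
  rw [← X_prime _ hpp]
  let p' : (Ideal (𝓞 K))⁰ := ⟨p, mem_nonZeroDivisors_of_ne_zero hp0⟩
  have h1 := DFunLike.congr_fun (MonoidHom.mem_ker.1 h) (ClassGroup.mk0 p')
  have h2 : X ((α : (𝓞 K)ˣ) : 𝓞 K) (repC (ClassGroup.mk0 p')) = 1 := Xu_eq_one.1 h1
  rw [← h2]
  exact X_class (I := p') (hD _ α.2) hpo (repC_odd _) (by rw [repC_spec])

end counting2
end CRB

namespace CRB
set_option linter.unusedSectionVars false
set_option linter.style.haveILetI false
section counting3
variable {K : Type*} [Field K] [NumberField K]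

theorem main_count (P : Subgroup (𝓞 K)ˣ)
    (hP : ∀ α ∈ P, ∀ φ : K →+* ℝ, 0 < φ (algebraMap (𝓞 K) K α)) :
    (((powMonoidHom 2 : (𝓞 K)ˣ →* (𝓞 K)ˣ).range).subgroupOf P).index ^ 2 ≤
      2 ^ Module.finrank ℚ K * Nat.card {c : ClassGroup (𝓞 K) // c ^ 2 = 1} ^ 2 := by
  haveI : Finite (𝓞 K ⧸ four K) := four_finite
  set S := ((powMonoidHom 2 : (𝓞 K)ˣ →* (𝓞 K)ˣ).range).subgroupOf P with hS
  set U := (𝓞 K ⧸ four K)ˣ with hU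
  let π0 : (𝓞 K)ˣ →* U := Units.map (Ideal.Quotient.mk (four K) : 𝓞 K →* 𝓞 K ⧸ four K)
  let π : P →* U := π0.comp P.subtype
  have hπ0 : ∀ a : (𝓞 K)ˣ, ((π0 a : U) : 𝓞 K ⧸ four K) = Ideal.Quotient.mk (four K) (a : 𝓞 K) := fun a => rfl
  set D0 := (lam P hP).ker with hD0
  set T := ((QuotientGroup.mk' (powMonoidHom 2 : U →* U).range).comp π).ker with hT
  have horth : T.index * D0.index ≤ 2 ^ Module.finrank ℚ K := by
    refine (orth_count P U π (lam P hP) ?_).trans card_two_tors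
    intro a b
    have hb : IsCoprime (((b : (𝓞 K)ˣ)) : 𝓞 K) 2 :=
      ⟨((b : (𝓞 K)ˣ)⁻¹ : (𝓞 K)ˣ), 0, by rw [zero_mul, add_zero, Units.inv_mul]⟩
    have h1 := X_congr a.1 (hP _ a.2) (rep4_coprime (π b)) hb (by rw [rep4_spec]; rfl)
    have h2 : Ideal.span {(((b : (𝓞 K)ˣ)) : 𝓞 K)} = 1 := by
      rw [Ideal.one_eq_top, Ideal.span_singleton_eq_top]; exact b.1.isUnit
    rw [h2, X_one] at h1
    exact Xu_eq_one.2 h1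
  have hST : S ≤ T := by
    intro α hα
    rw [hS, Subgroup.mem_subgroupOf] at hα
    obtain ⟨β, hβ⟩ := hα
    rw [hT, MonoidHom.mem_ker, MonoidHom.comp_apply, QuotientGroup.mk'_apply, QuotientGroup.eq_one_iff]
    refine ⟨π0 β, ?_⟩
    change (π0 β) ^ 2 = π0 α
    rw [← map_pow]
    exact congrArg π0 hβ
  have hTD : T ≤ D0 := by
    intro α hα
    rw [hT, MonoidHom.mem_ker, MonoidHom.comp_apply, QuotientGroup.mk'_apply, QuotientGroup.eq_one_iff] at hα
    obtain ⟨v, hv⟩ := hα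
    have hv' : v ^ 2 = π0 α := hv
    rw [hD0, lam_ker]
    intro x hx
    have h1 : Ideal.Quotient.mk (four K) ((α : (𝓞 K)ˣ) : 𝓞 K) = Ideal.Quotient.mk (four K) (rep4 v ^ 2) := by
      rw [map_pow, rep4_spec, ← hπ0, ← hv', Units.val_pow_eq_pow_val]
    rw [Ideal.Quotient.eq, Ideal.mem_span_singleton] at h1
    obtain ⟨m, hm⟩ := h1
    exact X_unit_sq α.1 (hP _ α.2) (rep4 v) m (by linear_combination hm) x hx
  haveI := hom_finite (ClassGroup (𝓞 K))
  have hD : ∀ α ∈ D0.map P.subtype, ∀ x : 𝓞 K, IsCoprime x 2 → X (α : 𝓞 K) (Ideal.span {x}) = 1 := by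
    rintro _ ⟨α, hα, rfl⟩ x hx
    exact (lam_ker α).1 hα x hx
  let κ : D0 →* (ClassGroup (𝓞 K) →* ℤˣ) := (kapC (D0.map P.subtype) hD).comp (P.subtype.subgroupMap D0)
  have hκ : κ.ker ≤ S.subgroupOf D0 := by
    intro α hα
    rw [MonoidHom.mem_ker] at hα
    obtain ⟨β, hβ⟩ := kapC_ker (hD := hD) (P.subtype.subgroupMap D0 α) hα
    rw [Subgroup.mem_subgroupOf, hS, Subgroup.mem_subgroupOf]
    exact ⟨β, hβ.symm⟩
  have hκi : κ.ker.index ≤ Nat.card {c : ClassGroup (𝓞 K) // c ^ 2 = 1} := by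
    rw [Subgroup.index_ker]
    exact (Nat.card_le_card_of_injective _ Subtype.val_injective).trans (card_hom_le _)
  have hκ0 : κ.ker.index ≠ 0 := by
    rw [Subgroup.index_ker]; exact Nat.card_pos.ne'
  have hdvd : S.relIndex D0 ∣ κ.ker.index := Subgroup.index_dvd_of_le hκ
  have hSD0 : S.relIndex D0 ≠ 0 := fun h => hκ0 (by rw [h] at hdvd; exact Nat.eq_zero_of_zero_dvd hdvd)
  have hSD : S.relIndex D0 ≤ Nat.card {c : ClassGroup (𝓞 K) // c ^ 2 = 1} :=
    (Nat.le_of_dvd (Nat.pos_of_ne_zero hκ0) hdvd).trans hκi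
  have hSTi : S.relIndex T ≤ Nat.card {c : ClassGroup (𝓞 K) // c ^ 2 = 1} :=
    (Subgroup.relIndex_le_of_le_right hTD hSD0).trans hSD
  calc S.index ^ 2 = (S.relIndex T * T.index) * (S.relIndex D0 * D0.index) := by
        rw [Subgroup.relIndex_mul_index hST, Subgroup.relIndex_mul_index (hST.trans hTD), sq]
    _ = (T.index * D0.index) * (S.relIndex T * S.relIndex D0) := by ring
    _ ≤ _ := by rw [sq]; gcongr

end counting3
end CRB

namespace CRB
set_option linter.unusedSectionVars false
set_option linter.style.haveILetI false
section final
variable {K : Type*} [Field K] [NumberField K]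

theorem card_real : Nat.card (K →+* ℝ) = InfinitePlace.nrRealPlaces K := by
  classical
  rw [← InfinitePlace.card_real_embeddings, ← Nat.card_eq_fintype_card]
  refine Nat.card_congr ⟨fun φ => ⟨Complex.ofRealHom.comp φ, ?_⟩, fun φ => φ.2.embedding, ?_, ?_⟩
  · rw [ComplexEmbedding.isReal_iff]
    ext x
    simp [ComplexEmbedding.conjugate_coe_eq]
  · intro φ
    ext x
    apply Complex.ofReal_injective
    rw [ComplexEmbedding.IsReal.coe_embedding_apply]
    rfl
  · rintro ⟨φ, hφ⟩
    apply Subtype.ext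
    ext x
    exact ComplexEmbedding.IsReal.coe_embedding_apply hφ x

theorem units_sq_index (φ : K →+* ℝ)
    (hfin : ((powMonoidHom 2 : (𝓞 K)ˣ →* (𝓞 K)ˣ).range).index ≠ 0) :
    2 ^ (Units.rank K + 1) ≤ ((powMonoidHom 2 : (𝓞 K)ˣ →* (𝓞 K)ˣ).range).index := by
  classical
  set S := (powMonoidHom 2 : (𝓞 K)ˣ →* (𝓞 K)ˣ).range with hS
  haveI : S.FiniteIndex := ⟨hfin⟩
  haveI : Finite ((𝓞 K)ˣ ⧸ S) := Subgroup.finite_quotient_of_finiteIndex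
  have hex : ∀ x : (𝓞 K)ˣ, ∃ f : Fin (Units.rank K) → ℤ, ∃ ζ ∈ Units.torsion K,
      x = ζ * ∏ i, (Units.fundSystem K i) ^ (f i) := by
    intro x
    obtain ⟨⟨ζ, f⟩, h, -⟩ := Units.exist_unique_eq_mul_prod K x
    exact ⟨f, ζ, ζ.2, h⟩
  choose e z hz hez using hex
  have huniq : ∀ (x ζ : (𝓞 K)ˣ) (f : Fin (Units.rank K) → ℤ), ζ ∈ Units.torsion K →
      x = ζ * ∏ i, (Units.fundSystem K i) ^ (f i) → e x = f := by
    intro x ζ f hζ h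
    obtain ⟨p, -, hp⟩ := Units.exist_unique_eq_mul_prod K x
    have h1 := hp (⟨z x, hz x⟩, e x) (hez x)
    have h2 := hp (⟨ζ, hζ⟩, f) h
    exact congrArg Prod.snd (h1.trans h2.symm)
  have he : ∀ x y, e (x * y) = e x + e y := by
    intro x y
    refine huniq _ (z x * z y) _ (Subgroup.mul_mem _ (hz x) (hz y)) ?_
    simp only [Pi.add_apply, zpow_add, Finset.prod_mul_distrib]
    rw [mul_mul_mul_comm, ← hez x, ← hez y]
  let F : (𝓞 K)ˣ → (Fin (Units.rank K) → ZMod 2) × Prop := fun x =>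
    (fun i => (e x i : ZMod 2), 0 < φ (algebraMap (𝓞 K) K x))
  have hF : ∀ x y : (𝓞 K)ˣ, F (x * y ^ 2) = F x := by
    intro x y
    have hy : 0 < (φ (algebraMap (𝓞 K) K y)) ^ 2 := by
      have : φ (algebraMap (𝓞 K) K y) ≠ 0 := by
        rw [Ne, map_eq_zero, RingOfIntegers.coe_eq_zero_iff]
        exact y.ne_zero
      positivity
    refine Prod.ext ?_ ?_
    · ext i
      simp only [F, pow_two, he, Pi.add_apply]
      push_cast
      have : ((e y i : ZMod 2)) + (e y i : ZMod 2) = 0 := CharTwo.add_self_eq_zero _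
      rw [this, add_zero]
    · simp only [F, Units.val_mul, Units.val_pow_eq_pow_val, map_mul, map_pow]
      rw [mul_pos_iff_of_pos_right hy]
  let G : (𝓞 K)ˣ ⧸ S → (Fin (Units.rank K) → ZMod 2) × Prop := Quotient.lift F (by
    intro a b hab
    replace hab := QuotientGroup.leftRel_apply.1 hab
    obtain ⟨c, hc⟩ := hab
    have : b = a * c ^ 2 := by rw [eq_comm, ← eq_inv_mul_iff_mul_eq]; exact hc
    rw [this, hF])
  have hG : Function.Surjective G := by
    rintro ⟨v, b⟩
    have hsurj : ∃ x : (𝓞 K)ˣ, e x = fun i => ((v i).val : ℤ) := by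
      exact ⟨_, huniq _ 1 _ (one_mem _) (one_mul _).symm⟩
    obtain ⟨x, hx⟩ := hsurj
    have hneg : e (-x) = e x := by
      refine huniq _ (-1 * z x) _ (Subgroup.mul_mem _ ?_ (hz x)) ?_
      · refine (CommGroup.mem_torsion _).2 ?_
        exact isOfFinOrder_iff_pow_eq_one.2 ⟨2, by norm_num, by simp⟩
      · rw [mul_assoc, ← hez x, neg_one_mul]
    have hv : ∀ y, e y = e x → (fun i => (e y i : ZMod 2)) = v := by
      intro y hy
      ext i
      rw [hy, hx]; simp
    have hx0 : φ (algebraMap (𝓞 K) K x) ≠ 0 := by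
      rw [Ne, map_eq_zero, RingOfIntegers.coe_eq_zero_iff]
      exact x.ne_zero
    have hex : ∃ y, e y = e x ∧ ((0 < φ (algebraMap (𝓞 K) K y)) = b) := by
      by_cases h : (0 < φ (algebraMap (𝓞 K) K x)) = b
      · exact ⟨x, rfl, h⟩
      · refine ⟨-x, hneg, ?_⟩
        rw [Units.val_neg, map_neg, map_neg, neg_pos]
        rw [eq_iff_iff] at h ⊢
        have h3 : φ (algebraMap (𝓞 K) K x) < 0 ↔ ¬ 0 < φ (algebraMap (𝓞 K) K x) :=
          ⟨fun h => not_lt.2 h.le, fun h => lt_of_le_of_ne (not_lt.1 h) hx0⟩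
        tauto
    obtain ⟨y, hy, hb⟩ := hex
    exact ⟨QuotientGroup.mk y, Prod.ext (hv y hy) hb⟩
  have := Nat.card_le_card_of_surjective G hG
  rw [Nat.card_prod, Nat.card_fun, Nat.card_zmod, Nat.card_fin] at this
  have hprop : Nat.card Prop = 2 := by rw [Nat.card_eq_fintype_card]; rfl
  rw [hprop, ← pow_succ] at this
  exact this

theorem sgn_index : (totPosUnits K).index = Nat.card (unitSignatureGroup K) := by
  have key : ∀ x y : (𝓞 K)ˣ, sgnVec K (algebraMap (𝓞 K) K x) = sgnVec K (algebraMap (𝓞 K) K y) ↔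
      x⁻¹ * y ∈ totPosUnits K := by
    intro x y
    have hne : ∀ (z : (𝓞 K)ˣ) (φ : K →+* ℝ), φ (algebraMap (𝓞 K) K z) ≠ 0 := by
      intro z φ
      rw [Ne, map_eq_zero, RingOfIntegers.coe_eq_zero_iff]
      exact z.ne_zero
    change _ ↔ ∀ φ : K →+* ℝ, 0 < φ (algebraMap (𝓞 K) K ((x⁻¹ * y : (𝓞 K)ˣ) : 𝓞 K))
    rw [funext_iff]
    refine forall_congr' fun φ => ?_
    have hxy : φ (algebraMap (𝓞 K) K y) =
        φ (algebraMap (𝓞 K) K x) * φ (algebraMap (𝓞 K) K ((x⁻¹ * y : (𝓞 K)ˣ) : 𝓞 K)) := by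
      rw [← map_mul, ← map_mul, ← Units.val_mul, mul_inv_cancel_left]
    have h1 := hne x φ
    have h2 := hne (x⁻¹ * y) φ
    unfold sgnVec
    rw [hxy]
    generalize φ (algebraMap (𝓞 K) K x) = a at h1
    generalize φ (algebraMap (𝓞 K) K ((x⁻¹ * y : (𝓞 K)ˣ) : 𝓞 K)) = b at h2
    rcases lt_or_gt_of_ne h1 with ha | ha <;> rcases lt_or_gt_of_ne h2 with hb | hb
    · have := mul_pos_of_neg_of_neg ha hb
      simp [this, not_lt.2 ha.le, not_lt.2 hb.le]
    · have := mul_neg_of_neg_of_pos ha hb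
      simp [not_lt.2 this.le, not_lt.2 ha.le, hb]
    · have := mul_neg_of_pos_of_neg ha hb
      simp [not_lt.2 this.le, ha, not_lt.2 hb.le]
    · have := mul_pos ha hb
      simp [this, ha, hb]
  let f : (𝓞 K)ˣ ⧸ totPosUnits K → unitSignatureGroup K := Quotient.lift
    (fun x => ⟨sgnVec K (algebraMap (𝓞 K) K x), x, rfl⟩) (by
      intro a b hab
      replace hab := QuotientGroup.leftRel_apply.1 hab
      exact Subtype.ext ((key a b).2 hab))
  apply Nat.card_eq_of_bijective f
  constructor
  · intro a b
    induction a using QuotientGroup.induction_on with | _ a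
    induction b using QuotientGroup.induction_on with | _ b
    intro h
    exact QuotientGroup.eq.2 ((key a b).1 (Subtype.ext_iff.1 h))
  · rintro ⟨_, x, rfl⟩
    exact ⟨QuotientGroup.mk x, rfl⟩

theorem sq_le_totPos : (powMonoidHom 2 : (𝓞 K)ˣ →* (𝓞 K)ˣ).range ≤ totPosUnits K := by
  rintro _ ⟨β, rfl⟩ φ
  have : φ (algebraMap (𝓞 K) K β) ≠ 0 := by
    rw [Ne, map_eq_zero, RingOfIntegers.coe_eq_zero_iff]
    exact β.ne_zero
  rw [powMonoidHom_apply, Units.val_pow_eq_pow_val, map_pow, map_pow]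
  positivity

end final
end CRB

/-- Let `K` be a number field of degree `n` with `r₁ > 0` real places.  Then the 2-rank `ρ`
of the class group of `K` satisfies `ρ ≥ ⌈r₁/2⌉ − sgnrk(E_K)`, equivalently
`ρ ≥ dim_{𝔽₂}(E_K⁺/E_K²) − ⌊n/2⌋`, where `E_K⁺` is the group of totally positive units. -/
theorem classgroup_rank_lower_bound (r₁ ρ s d₂ : ℕ)
    (hr₁ : Nat.card (K →+* ℝ) = r₁)
    (hr₁pos : 0 < r₁)
    (hρ : Nat.card {c : ClassGroup (𝓞 K) // c ^ 2 = 1} = 2 ^ ρ)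
    (hs : Nat.card (unitSignatureGroup K) = 2 ^ s)
    (hd₂ : Nat.card (totPosUnits K ⧸
      ((powMonoidHom 2 : (𝓞 K)ˣ →* (𝓞 K)ˣ).range).subgroupOf (totPosUnits K)) = 2 ^ d₂) :
    (r₁ + 1) / 2 - s ≤ ρ ∧ d₂ - Module.finrank ℚ K / 2 ≤ ρ := by
  have hd : (((powMonoidHom 2 : (𝓞 K)ˣ →* (𝓞 K)ˣ).range).subgroupOf (totPosUnits K)).index = 2 ^ d₂ := hd₂
  have hmain := CRB.main_count (totPosUnits K) (fun α hα => hα)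
  rw [hd, hρ, ← pow_mul, ← pow_mul, ← pow_add] at hmain
  have h1 : d₂ * 2 ≤ Module.finrank ℚ K + ρ * 2 := (Nat.pow_le_pow_iff_right (by norm_num)).1 hmain
  have hidx : ((powMonoidHom 2 : (𝓞 K)ˣ →* (𝓞 K)ˣ).range).index = 2 ^ (d₂ + s) := by
    rw [← Subgroup.relIndex_mul_index CRB.sq_le_totPos, CRB.sgn_index, hs, pow_add, ← hd]
    rfl
  have hne : Nonempty (K →+* ℝ) := by
    by_contra h
    rw [not_nonempty_iff] at h
    rw [Nat.card_of_isEmpty] at hr₁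
    omega
  obtain ⟨φ⟩ := hne
  have h2 := CRB.units_sq_index φ (by rw [hidx]; positivity)
  rw [hidx] at h2
  have h3 : NumberField.Units.rank K + 1 ≤ d₂ + s := (Nat.pow_le_pow_iff_right (by norm_num)).1 h2
  have h4 : Fintype.card (InfinitePlace K) = _ := InfinitePlace.card_eq_nrRealPlaces_add_nrComplexPlaces K
  have h5 := InfinitePlace.card_add_two_mul_card_eq_rank K
  have h6 : InfinitePlace.nrRealPlaces K = r₁ := by rw [← hr₁, CRB.card_real]
  have h7 : NumberField.Units.rank K = Fintype.card (InfinitePlace K) - 1 := rfl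
  omega
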